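/- arXiv:2602.23326 — 3 statements merged into one kernel-verified Lean document; each statement's English description precedes it below -/
import Mathlib

section
/- Let, for each n ≥ 1, A_n ~ GOE(n), and let H_n(σ) = (1/2)⟨σ, A_n σ⟩ for σ ∈ {−1,1}^n. Then for every β > 0, the limit lim_{n→∞} (1/n) E[ log Σ_{σ ∈ {−1,1}^n} exp(β H_n(σ)) ] exists and is finite; consequently the limit lim_{n→∞} (1/n) E[ max_{σ ∈ {−1,1}^n} H_n(σ) ] also exists and is finite. -/
open MeasureTheory ProbabilityTheory Filter
open scoped NNReal ENNReal

noncomputable section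

/-- A random symmetric matrix `A : Ω → (Fin n → Fin n → ℝ)` has the `GOE(n)` distribution:
entries are measurable, the matrix is symmetric, the upper-triangular entries (including the
diagonal) are independent, diagonal entries are `N(0, 2/n)` and off-diagonal entries are
`N(0, 1/n)`. -/
def IsGOE {Ω : Type*} [MeasurableSpace Ω] (μ : Measure Ω) (n : ℕ)
    (A : Ω → Fin n → Fin n → ℝ) : Prop :=
  (∀ i j, Measurable fun ω => A ω i j) ∧
  (∀ ω, ∀ i j, A ω i j = A ω j i) ∧
  iIndepFun
    (fun (p : {p : Fin n × Fin n // p.1 ≤ p.2}) => fun ω => A ω p.1.1 p.1.2) μ ∧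
  (∀ i : Fin n, μ.map (fun ω => A ω i i) = gaussianReal 0 (2 / (n : ℝ≥0))) ∧
  (∀ i j : Fin n, i < j → μ.map (fun ω => A ω i j) = gaussianReal 0 (1 / (n : ℝ≥0)))

/-- The point of the hypercube `{-1,1}^n` indexed by a Boolean vector. -/
def signVec {n : ℕ} (b : Fin n → Bool) : Fin n → ℝ := fun i => if b i then 1 else -1

/-!
The Hamiltonian is a centered Gaussian vector indexed by the hypercube, with covariance
`⟨σ, τ⟩² / (2n)`, so both quantities depend on this matrix only. The Hessian of `log ∑ exp` is the
covariance matrix of the point indicators under the Gibbs measure, whose off-diagonal entries are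
nonpositive. Hence the expected free energy decreases when off-diagonal covariances increase and the
variances stay fixed.

Split `m + n` spins into blocks of sizes `m` and `n`. By convexity of the square, the covariance of
the full system is entrywise at most the sum of the covariances of two independent systems on the
blocks, with equality on the diagonal. As the free energy of independent systems is additive, the
expected free energy is superadditive in `n`. It grows at most linearly by Jensen's inequality, so
Fekete's lemma gives the limit. The expected maximum is the limit as `β → ∞` of the free energy
divided by `β`, hence it is superadditive and at most linear too.
-/

section GaussianLaws

variable {ι κ Ω : Type*} [Fintype ι] [DecidableEq ι] [Fintype κ] [DecidableEq κ]
  [MeasurableSpace Ω]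

/-- The centered Gaussian measure with covariance matrix `S`. As for `multivariateGaussian`, this
is a Dirac mass when `S` is not positive semidefinite. -/
abbrev centeredGaussian (S : Matrix ι ι ℝ) : Measure (EuclideanSpace ℝ ι) :=
  multivariateGaussian 0 S

lemma integrable_norm_pow_of_isGaussian {E : Type*} [NormedAddCommGroup E] [NormedSpace ℝ E]
    [CompleteSpace E] [SecondCountableTopology E] [MeasurableSpace E] [BorelSpace E]
    (μ : Measure E) [IsGaussian μ] (k : ℕ) : Integrable (fun x => ‖x‖ ^ k) μ :=
  (IsGaussian.memLp_id μ k (ENNReal.natCast_ne_top k)).integrable_norm_pow'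

lemma hasLaw_multivariateGaussian_of_covariance {P : Measure Ω} {X : Ω → ι → ℝ}
    {m : EuclideanSpace ℝ ι} {S : Matrix ι ι ℝ} (hX : HasGaussianLaw X P)
    (hm : ∀ i, ∫ ω, X ω i ∂P = m i) (hS : S.PosSemidef)
    (hcov : ∀ i j, cov[fun ω => X ω i, fun ω => X ω j; P] = S i j) :
    HasLaw (fun ω => WithLp.toLp 2 (X ω)) (multivariateGaussian m S) P := by
  have hgauss : HasGaussianLaw (fun ω => WithLp.toLp 2 (X ω)) P :=
    HasGaussianLaw.toLp_pi (X := fun i ω => X ω i) 2 hX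
  have := hgauss.isGaussian_map
  refine ⟨hgauss.aemeasurable, IsGaussian.ext ?_ ?_⟩
  · ext i
    rw [integral_map hgauss.aemeasurable (by fun_prop)]
    simpa [eval_integral_piLp fun i => (hgauss.integrable.eval_piLp i)] using hm i
  · rw [← ContinuousLinearMap.toBilinForm_inj]
    refine LinearMap.BilinForm.ext_basis (EuclideanSpace.basisFun ι ℝ).toBasis fun i j ↦ ?_
    rw [ContinuousLinearMap.toBilinForm_apply, ContinuousLinearMap.toBilinForm_apply,
      covarianceBilin_apply_eq_cov IsGaussian.memLp_two_id,
      covarianceBilin_multivariateGaussian hS,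
      covariance_map (by fun_prop) (by fun_prop) hgauss.aemeasurable]
    simpa [Function.comp_def, PiLp.inner_apply] using hcov i j

variable {S T : Matrix ι ι ℝ}

lemma integrable_eval_centeredGaussian (S : Matrix ι ι ℝ) (i : ι) :
    Integrable (fun x => x i) (centeredGaussian S) :=
  (EuclideanSpace.proj (𝕜 := ℝ) i).integrable_comp IsGaussian.integrable_id

lemma integral_eval_centeredGaussian (S : Matrix ι ι ℝ) (i : ι) :
    ∫ x, x i ∂(centeredGaussian S) = 0 := by
  simpa using (EuclideanSpace.proj (𝕜 := ℝ) i).integral_comp_id_comm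
    (IsGaussian.integrable_id (μ := centeredGaussian S))

lemma integrable_eval_mul_eval_centeredGaussian (S : Matrix ι ι ℝ) (i j : ι) :
    Integrable (fun x => x i * x j) (centeredGaussian S) :=
  have hL2 (i : ι) : MemLp (fun x => x i) 2 (centeredGaussian S) :=
    IsGaussian.memLp_dual _ (EuclideanSpace.proj (𝕜 := ℝ) i) 2 (by simp)
  (hL2 i).integrable_mul (hL2 j)

lemma integral_eval_mul_eval_centeredGaussian (hS : S.PosSemidef) (i j : ι) :
    ∫ x, x i * x j ∂(centeredGaussian S) = S i j := by
  simpa only [covariance, integral_eval_centeredGaussian, sub_zero]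
    using covariance_eval_multivariateGaussian (μ := 0) hS i j

lemma centeredGaussian_conv (hS : S.PosSemidef) (hT : T.PosSemidef) :
    (centeredGaussian S).conv (centeredGaussian T) = centeredGaussian (S + T) := by
  refine Measure.ext_of_charFun (funext fun t => ?_)
  rw [charFun_conv, charFun_multivariateGaussian hS, charFun_multivariateGaussian hT,
    charFun_multivariateGaussian (hS.add hT), ← Complex.exp_add]
  simp only [Matrix.add_mulVec, dotProduct_add, Complex.ofReal_add]
  congr 1
  simp only [inner_zero_right, Complex.ofReal_zero, zero_mul, zero_sub]
  ring

lemma centeredGaussian_map_smul (hS : S.PosSemidef) (r : ℝ) :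
    (centeredGaussian S).map (fun x => r • x) = centeredGaussian (r ^ 2 • S) := by
  refine (hasLaw_multivariateGaussian_of_covariance
    (X := fun (x : EuclideanSpace ℝ ι) i => r * x i) ?_ ?_
    (hS.smul (sq_nonneg r)) ?_).map_eq
  · exact IsGaussian.hasGaussianLaw_id (μ := centeredGaussian S) |>.map
      (ContinuousLinearMap.pi fun i : ι => r • EuclideanSpace.proj (𝕜 := ℝ) i)
  · intro i
    simp [integral_const_mul, integral_eval_centeredGaussian]
  · intro i j
    rw [covariance_const_mul_left, covariance_const_mul_right,
      covariance_eval_multivariateGaussian hS, Matrix.smul_apply, smul_eq_mul]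
    ring

lemma centeredGaussian_map_reindex (hS : S.PosSemidef) (f : κ → ι) :
    (centeredGaussian S).map (fun x => WithLp.toLp 2 (fun k => x (f k))) =
      centeredGaussian (S.submatrix f f) := by
  refine (hasLaw_multivariateGaussian_of_covariance
    (X := fun (x : EuclideanSpace ℝ ι) k => x (f k)) ?_ ?_
    (hS.submatrix f) ?_).map_eq
  · exact IsGaussian.hasGaussianLaw_id.map
      (ContinuousLinearMap.pi fun k => EuclideanSpace.proj (𝕜 := ℝ) (f k))
  · exact fun k => integral_eval_centeredGaussian S (f k)
  · exact fun k l => covariance_eval_multivariateGaussian hS (f k) (f l)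

end GaussianLaws

lemma le_of_forall_sub_mul_cube_le {φ : ℝ → ℝ} {M : ℝ}
    (h : ∀ t r, 0 ≤ t → 0 ≤ r → t + r ^ 2 ≤ 1 → φ t - M * r ^ 3 ≤ φ (t + r ^ 2)) :
    φ 0 ≤ φ 1 := by
  have subdivision (N : ℕ) (r : ℝ) (hr : 0 ≤ r) (hN : N * r ^ 2 ≤ 1) :
      φ 0 - N * (M * r ^ 3) ≤ φ (N * r ^ 2) := by
    induction N with
    | zero => simp
    | succ k ih =>
      push_cast at hN ⊢
      rw [add_one_mul] at hN
      have hstep := h (k * r ^ 2) r (by positivity) hr hN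
      have hprev := ih (by nlinarith)
      rw [← add_one_mul] at hstep
      linarith
  have bound (N : ℕ) : φ 0 - M * √(1 / ((N : ℝ) + 1)) ≤ φ 1 := by
    set r := √(1 / ((N : ℝ) + 1))
    have hr : ((N + 1 : ℕ) : ℝ) * r ^ 2 = 1 := by
      rw [Real.sq_sqrt (by positivity)]
      push_cast
      field_simp
    have hsub := subdivision (N + 1) r (Real.sqrt_nonneg _) hr.le
    rwa [hr, show ((N + 1 : ℕ) : ℝ) * (M * r ^ 3) = M * r * (((N + 1 : ℕ) : ℝ) * r ^ 2) by ring,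
      hr, mul_one] at hsub
  have hlim : Tendsto (fun N : ℕ => φ 0 - M * √(1 / ((N : ℝ) + 1))) atTop (nhds (φ 0)) := by
    simpa using
      (tendsto_one_div_add_atTop_nhds_zero_nat (𝕜 := ℝ)).sqrt.const_mul M |>.const_sub (φ 0)
  exact le_of_tendsto' hlim bound

section GaussianComparison

variable {ι : Type*} [Fintype ι]

/-- The polynomial `c + ⟨a, y⟩ + ½ ⟨y, B y⟩` of degree at most two in `y`. -/
def quadraticPolynomial (c : ℝ) (a : ι → ℝ) (B : Matrix ι ι ℝ) (y : EuclideanSpace ℝ ι) : ℝ :=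
  c + ∑ i, a i * y i + (∑ i, ∑ j, B i j * (y i * y j)) / 2

/-- `f` has a second-order Taylor expansion with gradient `g`, Hessian `H` and cubic remainder, with
the same constant `C` at every base point. It is phrased without derivatives: the expansion is all
that the replacement argument below requires of `f`. -/
def HasUniformTaylorTwo (f : EuclideanSpace ℝ ι → ℝ) (g : EuclideanSpace ℝ ι → ι → ℝ)
    (H : EuclideanSpace ℝ ι → Matrix ι ι ℝ) (C : ℝ) : Prop :=
  ∀ x y, |f (x + y) - quadraticPolynomial (f x) (g x) (H x) y| ≤ C * ‖y‖ ^ 3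

variable [DecidableEq ι] {S T W : Matrix ι ι ℝ}

lemma integral_norm_pow_centeredGaussian_smul (hS : S.PosSemidef) {r : ℝ} (hr : 0 ≤ r) (k : ℕ) :
    ∫ y, ‖y‖ ^ k ∂(centeredGaussian (r ^ 2 • S)) = r ^ k * ∫ y, ‖y‖ ^ k ∂(centeredGaussian S) := by
  rw [← centeredGaussian_map_smul hS, integral_map (by fun_prop) (by fun_prop)]
  simp only [norm_smul, mul_pow, integral_const_mul, Real.norm_of_nonneg hr]

lemma integrable_quadraticPolynomial (S : Matrix ι ι ℝ) (c : ℝ) (a : ι → ℝ) (B : Matrix ι ι ℝ) :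
    Integrable (quadraticPolynomial c a B) (centeredGaussian S) :=
  ((integrable_const c).add (integrable_finsetSum _ fun i _ =>
    (integrable_eval_centeredGaussian S i).const_mul _)).add
    ((integrable_finsetSum _ fun i _ => integrable_finsetSum _ fun j _ =>
      (integrable_eval_mul_eval_centeredGaussian S i j).const_mul _).div_const 2)

lemma integral_quadraticPolynomial (hS : S.PosSemidef) (c : ℝ) (a : ι → ℝ) (B : Matrix ι ι ℝ) :
    ∫ y, quadraticPolynomial c a B y ∂(centeredGaussian S) = c + (∑ i, ∑ j, B i j * S i j) / 2 := by
  have hlin (i : ι) := (integrable_eval_centeredGaussian S i).const_mul (a i)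
  have hquad (i j : ι) := (integrable_eval_mul_eval_centeredGaussian S i j).const_mul (B i j)
  have hrow (i : ι) := integrable_finsetSum Finset.univ fun j _ => hquad i j
  have hlinear := integrable_finsetSum Finset.univ fun i _ => hlin i
  unfold quadraticPolynomial
  rw [integral_add ((integrable_const c).fun_add hlinear)
      ((integrable_finsetSum _ fun i _ => hrow i).div_const 2),
    integral_add (integrable_const c) hlinear, integral_div,
    integral_finsetSum _ fun i _ => hlin i, integral_finsetSum _ fun i _ => hrow i]
  simp only [integral_finsetSum _ fun j _ => hquad _ j, integral_const_mul,
    integral_eval_centeredGaussian, integral_eval_mul_eval_centeredGaussian hS]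
  simp

namespace HasUniformTaylorTwo

variable {f : EuclideanSpace ℝ ι → ℝ} {g : EuclideanSpace ℝ ι → ι → ℝ}
  {H : EuclideanSpace ℝ ι → Matrix ι ι ℝ} {C : ℝ}

lemma integrable_comp_add (h : HasUniformTaylorTwo f g H C) (hf : Measurable f)
    (S : Matrix ι ι ℝ) (x : EuclideanSpace ℝ ι) :
    Integrable (fun y => f (x + y)) (centeredGaussian S) := by
  have hpoly := integrable_quadraticPolynomial S (f x) (g x) (H x)
  have hremainder : Integrable (fun y => f (x + y) - quadraticPolynomial (f x) (g x) (H x) y)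
      (centeredGaussian S) :=
    ((integrable_norm_pow_of_isGaussian _ 3).const_mul C).mono'
      ((hf.comp (measurable_const_add x)).aestronglyMeasurable.sub hpoly.1)
      (Eventually.of_forall fun y => h x y)
  exact (hremainder.add hpoly).congr (Eventually.of_forall fun y => sub_add_cancel _ _)

lemma integrable (h : HasUniformTaylorTwo f g H C) (hf : Measurable f) (S : Matrix ι ι ℝ) :
    Integrable f (centeredGaussian S) := by
  simpa only [zero_add] using h.integrable_comp_add hf S 0

lemma abs_integral_comp_add_sub_le (h : HasUniformTaylorTwo f g H C) (hf : Measurable f)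
    (hS : S.PosSemidef) (x : EuclideanSpace ℝ ι) :
    |∫ y, f (x + y) ∂(centeredGaussian S) - (f x + (∑ i, ∑ j, H x i j * S i j) / 2)|
      ≤ C * ∫ y, ‖y‖ ^ 3 ∂(centeredGaussian S) := by
  rw [← integral_quadraticPolynomial hS (f x) (g x) (H x), ← integral_sub
    (h.integrable_comp_add hf S x) (integrable_quadraticPolynomial S _ _ _), ← integral_const_mul]
  exact norm_integral_le_of_norm_le (f := fun y => f (x + y) - _)
    ((integrable_norm_pow_of_isGaussian _ 3).const_mul C) (Eventually.of_forall fun y => h x y)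

lemma integral_centeredGaussian_add (h : HasUniformTaylorTwo f g H C) (hf : Measurable f)
    (hS : S.PosSemidef) (hT : T.PosSemidef) :
    ∫ x, f x ∂(centeredGaussian (S + T)) =
      ∫ x, ∫ y, f (x + y) ∂(centeredGaussian T) ∂(centeredGaussian S) := by
  rw [← centeredGaussian_conv hS hT]
  exact integral_conv (by rw [centeredGaussian_conv hS hT]; exact h.integrable hf _)

lemma integrable_integral_comp_add (h : HasUniformTaylorTwo f g H C) (hf : Measurable f)
    (hS : S.PosSemidef) (hT : T.PosSemidef) :
    Integrable (fun x => ∫ y, f (x + y) ∂(centeredGaussian T)) (centeredGaussian S) := by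
  have hconv := h.integrable hf (S + T)
  rw [← centeredGaussian_conv hS hT, Measure.conv,
    integrable_map_measure hf.aestronglyMeasurable (by fun_prop)] at hconv
  exact hconv.integral_prod_left

lemma integral_comp_add_smul_le (h : HasUniformTaylorTwo f g H C) (hf : Measurable f)
    (hS : S.PosSemidef) (hT : T.PosSemidef) {x : EuclideanSpace ℝ ι}
    (hST : ∑ i, ∑ j, H x i j * T i j ≤ ∑ i, ∑ j, H x i j * S i j) {r : ℝ} (hr : 0 ≤ r) :
    ∫ y, f (x + y) ∂(centeredGaussian (r ^ 2 • T)) -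
        C * (∫ y, ‖y‖ ^ 3 ∂(centeredGaussian S) + ∫ y, ‖y‖ ^ 3 ∂(centeredGaussian T)) * r ^ 3
      ≤ ∫ y, f (x + y) ∂(centeredGaussian (r ^ 2 • S)) := by
  have hessian_smul (U : Matrix ι ι ℝ) :
      ∑ i, ∑ j, H x i j * (r ^ 2 • U) i j = r ^ 2 * ∑ i, ∑ j, H x i j * U i j := by
    simp only [Matrix.smul_apply, smul_eq_mul, Finset.mul_sum, mul_left_comm]
  have hexpS := h.abs_integral_comp_add_sub_le hf (hS.smul (sq_nonneg r)) x
  have hexpT := h.abs_integral_comp_add_sub_le hf (hT.smul (sq_nonneg r)) x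
  rw [hessian_smul, integral_norm_pow_centeredGaussian_smul ‹_› hr, abs_le] at hexpS hexpT
  linarith [hexpS.1, hexpT.2, mul_le_mul_of_nonneg_left hST (sq_nonneg r)]

lemma integral_centeredGaussian_add_smul_le (h : HasUniformTaylorTwo f g H C) (hf : Measurable f)
    (hS : S.PosSemidef) (hT : T.PosSemidef) (hW : W.PosSemidef)
    (hST : ∀ x, ∑ i, ∑ j, H x i j * T i j ≤ ∑ i, ∑ j, H x i j * S i j) {r : ℝ} (hr : 0 ≤ r) :
    ∫ x, f x ∂(centeredGaussian (W + r ^ 2 • T)) -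
        C * (∫ y, ‖y‖ ^ 3 ∂(centeredGaussian S) + ∫ y, ‖y‖ ^ 3 ∂(centeredGaussian T)) * r ^ 3
      ≤ ∫ x, f x ∂(centeredGaussian (W + r ^ 2 • S)) := by
  have hrS := hS.smul (sq_nonneg r)
  have hrT := hT.smul (sq_nonneg r)
  have hintT := h.integrable_integral_comp_add hf hW hrT
  rw [h.integral_centeredGaussian_add hf hW hrS, h.integral_centeredGaussian_add hf hW hrT]
  have hmono := integral_mono (hintT.sub (integrable_const _))
    (h.integrable_integral_comp_add hf hW hrS)
    fun x => h.integral_comp_add_smul_le hf hS hT (hST x) hr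
  simpa [integral_sub hintT (integrable_const _)] using hmono

/-- Lindeberg replacement: move the covariance from `T` to `S` in `1 / r²` steps of size `r²`. The
second-order terms of the expansion compare in the right direction, so each step loses at most
`O(r³)` and the whole path at most `O(r)`. -/
theorem integral_centeredGaussian_mono (h : HasUniformTaylorTwo f g H C) (hf : Measurable f)
    (hS : S.PosSemidef) (hT : T.PosSemidef)
    (hST : ∀ x, ∑ i, ∑ j, H x i j * T i j ≤ ∑ i, ∑ j, H x i j * S i j) :
    ∫ x, f x ∂(centeredGaussian T) ≤ ∫ x, f x ∂(centeredGaussian S) := by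
  let φ (t : ℝ) : ℝ := ∫ x, f x ∂(centeredGaussian (t • S + (1 - t) • T))
  suffices φ 0 ≤ φ 1 by simpa [φ] using this
  refine le_of_forall_sub_mul_cube_le (φ := φ) (M := C * (∫ y, ‖y‖ ^ 3 ∂(centeredGaussian S) +
    ∫ y, ‖y‖ ^ 3 ∂(centeredGaussian T))) fun t r ht hr htr => ?_
  have hW : (t • S + (1 - t - r ^ 2) • T).PosSemidef :=
    (hS.smul ht).add (hT.smul (by linarith))
  have hstep := h.integral_centeredGaussian_add_smul_le hf hS hT hW hST hr
  rwa [show t • S + (1 - t - r ^ 2) • T + r ^ 2 • T = t • S + (1 - t) • T by module,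
    show t • S + (1 - t - r ^ 2) • T + r ^ 2 • S = (t + r ^ 2) • S + (1 - (t + r ^ 2)) • T
      by module] at hstep

end HasUniformTaylorTwo

end GaussianComparison

lemma abs_sub_taylor_two_le {u u₁ u₂ u₃ : ℝ → ℝ} {C : ℝ} (hu : ∀ t, HasDerivAt u (u₁ t) t)
    (hu₁ : ∀ t, HasDerivAt u₁ (u₂ t) t) (hu₂ : ∀ t, HasDerivAt u₂ (u₃ t) t)
    (hC : ∀ t, |u₃ t| ≤ C) : |u 1 - (u 0 + u₁ 0 + u₂ 0 / 2)| ≤ C / 6 := by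
  have integrate {v v' B B' : ℝ → ℝ} (hv : ∀ t, HasDerivAt v (v' t) t) (hv0 : v 0 = 0)
      (hB : ∀ t, HasDerivAt B (B' t) t) (hB0 : B 0 = 0)
      (hbound : ∀ t ∈ Set.Icc (0 : ℝ) 1, |v' t| ≤ B' t) : ∀ t ∈ Set.Icc (0 : ℝ) 1, |v t| ≤ B t :=
    fun _ ht => image_norm_le_of_norm_deriv_right_le_deriv_boundary
      (fun t _ => (hv t).continuousAt.continuousWithinAt) (fun t _ => (hv t).hasDerivWithinAt)
      (by simp [hv0, hB0]) hB (fun t ht => hbound t (Set.Ico_subset_Icc_self ht)) ht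
  have hu₂_bound := integrate (v := fun t => u₂ t - u₂ 0) (B := fun t => C * t)
    (fun t => (hu₂ t).sub_const _) (by simp)
    (fun t => by simpa using (hasDerivAt_id t).const_mul C) (by simp) fun t _ => hC t
  have hu₁_bound := integrate (v := fun t => u₁ t - (u₁ 0 + u₂ 0 * t))
    (B := fun t => C * t ^ 2 / 2)
    (fun t => (hu₁ t).fun_sub
      (by simpa using ((hasDerivAt_id t).const_mul (u₂ 0)).const_add (u₁ 0))) (by simp)
    (fun t => (((hasDerivAt_pow 2 t).const_mul C).div_const 2).congr_deriv (by push_cast; ring))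
    (by simp) hu₂_bound
  have hu_bound := integrate (v := fun t => u t - (u 0 + u₁ 0 * t + u₂ 0 * t ^ 2 / 2))
    (B := fun t => C * t ^ 3 / 6)
    (fun t => (hu t).fun_sub <|
      ((((hasDerivAt_id t).const_mul (u₁ 0)).const_add (u 0)).fun_add
        (((hasDerivAt_pow 2 t).const_mul (u₂ 0)).div_const 2)).congr_deriv
        (show _ = u₁ 0 + u₂ 0 * t by push_cast; ring)) (by simp)
    (fun t => (((hasDerivAt_pow 3 t).const_mul C).div_const 6).congr_deriv (by push_cast; ring))
    (by simp) hu₁_bound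
  simpa using hu_bound 1 (by simp)

section LogSumExp

variable {ι : Type*} [Fintype ι]

/-- The free energy `log ∑ᵢ exp xᵢ` of the energy levels `x`. -/
def logSumExp (x : ι → ℝ) : ℝ := Real.log (∑ i, Real.exp (x i))

/-- The mass of `i` under the Gibbs measure, which weights `i` proportionally to `exp xᵢ`. -/
def gibbsWeight (x : ι → ℝ) (i : ι) : ℝ := Real.exp (x i) / ∑ j, Real.exp (x j)

/-- The expectation of `f` under the Gibbs measure of the energy levels `x`. -/
def gibbsAverage (x f : ι → ℝ) : ℝ := ∑ i, gibbsWeight x i * f i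

/-- The Hessian of `logSumExp`, which is the covariance matrix under the Gibbs measure of the
indicator functions of the points. -/
def gibbsCovariance [DecidableEq ι] (x : ι → ℝ) : Matrix ι ι ℝ :=
  Matrix.diagonal (gibbsWeight x) - Matrix.vecMulVec (gibbsWeight x) (gibbsWeight x)

lemma gibbsWeight_nonneg (x : ι → ℝ) (i : ι) : 0 ≤ gibbsWeight x i := by
  unfold gibbsWeight
  positivity

lemma sum_gibbsCovariance_mul [DecidableEq ι] (x : ι → ℝ) (M : Matrix ι ι ℝ) :
    ∑ i, ∑ j, gibbsCovariance x i j * M i j =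
      ∑ i, gibbsWeight x i * M i i - ∑ i, ∑ j, gibbsWeight x i * gibbsWeight x j * M i j := by
  simp [gibbsCovariance, Matrix.diagonal_apply, Matrix.vecMulVec_apply, sub_mul,
    Finset.sum_sub_distrib]

lemma measurable_logSumExp_ofLp : Measurable fun x : EuclideanSpace ℝ ι => logSumExp x.ofLp := by
  unfold logSumExp
  fun_prop

lemma hasDerivAt_sum_exp_line (x h : ι → ℝ) (t : ℝ) :
    HasDerivAt (fun t : ℝ => ∑ i, Real.exp (x i + t * h i))
      (∑ i, Real.exp (x i + t * h i) * h i) t :=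
  HasDerivAt.fun_sum fun i _ => ((hasDerivAt_mul_const (h i)).const_add (x i)).exp

lemma sum_exp_pos [Nonempty ι] (x : ι → ℝ) : 0 < ∑ i, Real.exp (x i) :=
  Finset.sum_pos (fun i _ => Real.exp_pos (x i)) Finset.univ_nonempty

lemma sum_gibbsWeight [Nonempty ι] (x : ι → ℝ) : ∑ i, gibbsWeight x i = 1 := by
  simp only [gibbsWeight, ← Finset.sum_div, div_self (sum_exp_pos x).ne']

lemma abs_gibbsAverage_le [Nonempty ι] (x : ι → ℝ) {f : ι → ℝ} {K : ℝ} (hf : ∀ i, |f i| ≤ K) :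
    |gibbsAverage x f| ≤ K := calc
  |gibbsAverage x f| ≤ ∑ i, |gibbsWeight x i * f i| := Finset.abs_sum_le_sum_abs _ _
  _ ≤ ∑ i, gibbsWeight x i * K := by
    gcongr with i
    rw [abs_mul, abs_of_nonneg (gibbsWeight_nonneg x i)]
    exact mul_le_mul_of_nonneg_left (hf i) (gibbsWeight_nonneg x i)
  _ = K := by rw [← Finset.sum_mul, sum_gibbsWeight, one_mul]

variable [Nonempty ι]

lemma hasDerivAt_logSumExp_line (x h : ι → ℝ) (t : ℝ) :
    HasDerivAt (fun t : ℝ => logSumExp (x + t • h)) (gibbsAverage (x + t • h) h) t := by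
  refine ((hasDerivAt_sum_exp_line x h t).log (sum_exp_pos _).ne').congr_deriv ?_
  simp only [gibbsAverage, gibbsWeight, Finset.sum_div, div_mul_eq_mul_div, Pi.add_apply,
    Pi.smul_apply, smul_eq_mul]

lemma hasDerivAt_gibbsWeight_line (x h : ι → ℝ) (i : ι) (t : ℝ) :
    HasDerivAt (fun t : ℝ => gibbsWeight (x + t • h) i)
      (gibbsWeight (x + t • h) i * (h i - gibbsAverage (x + t • h) h)) t := by
  have hnum := ((hasDerivAt_mul_const (h i)).const_add (x i)).exp (x := t)
  have hZ := (sum_exp_pos fun j => x j + t * h j).ne'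
  refine (hnum.fun_div (hasDerivAt_sum_exp_line x h t) hZ).congr_deriv ?_
  simp only [gibbsAverage, gibbsWeight, div_mul_eq_mul_div, ← Finset.sum_div, Pi.add_apply,
    Pi.smul_apply, smul_eq_mul]
  field_simp

lemma hasDerivAt_gibbsAverage_line (x h f : ι → ℝ) (t : ℝ) :
    HasDerivAt (fun t : ℝ => gibbsAverage (x + t • h) f)
      (gibbsAverage (x + t • h) (f * h) -
        gibbsAverage (x + t • h) f * gibbsAverage (x + t • h) h) t := by
  refine (HasDerivAt.fun_sum fun i _ =>
    (hasDerivAt_gibbsWeight_line x h i t).mul_const (f i)).congr_deriv ?_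
  generalize gibbsAverage (x + t • h) h = a
  rw [gibbsAverage, gibbsAverage, Finset.sum_mul, ← Finset.sum_sub_distrib]
  exact Finset.sum_congr rfl fun i _ => by rw [Pi.mul_apply]; ring

lemma abs_logSumExp_add_sub_le (x h : ι → ℝ) {K : ℝ} (hh : ∀ i, |h i| ≤ K) :
    |logSumExp (x + h) - (logSumExp x + gibbsAverage x h +
      (gibbsAverage x (h * h) - gibbsAverage x h * gibbsAverage x h) / 2)| ≤ K ^ 3 := by
  let m (k : ℕ) (t : ℝ) : ℝ := gibbsAverage (x + t • h) (h ^ k)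
  have hm (k : ℕ) (t : ℝ) : HasDerivAt (m k) (m (k + 1) t - m k t * m 1 t) t := by
    simpa only [m, pow_succ, pow_zero, one_mul] using hasDerivAt_gibbsAverage_line x h (h ^ k) t
  have hm_le (k : ℕ) (t : ℝ) : |m k t| ≤ K ^ k :=
    abs_gibbsAverage_le _ fun i => by
      rw [Pi.pow_apply, abs_pow]
      exact pow_le_pow_left₀ (abs_nonneg _) (hh i) k
  have hm1_le (t : ℝ) : |m 1 t| ≤ K := (hm_le 1 t).trans_eq (pow_one K)
  have hthird (t : ℝ) : |m 3 t - m 2 t * m 1 t -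
      ((m 2 t - m 1 t * m 1 t) * m 1 t + m 1 t * (m 2 t - m 1 t * m 1 t))| ≤ 6 * K ^ 3 := by
    have h12 : |m 2 t * m 1 t| ≤ K ^ 3 := by
      rw [abs_mul, pow_succ]
      exact mul_le_mul (hm_le 2 t) (hm1_le t) (abs_nonneg _) ((abs_nonneg _).trans (hm_le 2 t))
    have h111 : |m 1 t ^ 3| ≤ K ^ 3 := by
      rw [abs_pow]
      exact pow_le_pow_left₀ (abs_nonneg _) (hm1_le t) 3
    have h3 := hm_le 3 t
    rw [abs_le] at h12 h111 h3 ⊢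
    constructor <;> linarith
  have htaylor := abs_sub_taylor_two_le (hasDerivAt_logSumExp_line x h)
    (fun t => by simpa only [m, pow_one] using hm 1 t)
    (fun t => (hm 2 t).fun_sub ((hm 1 t).fun_mul (hm 1 t))) hthird
  simpa [m, sq] using htaylor

lemma hasUniformTaylorTwo_logSumExp [DecidableEq ι] :
    HasUniformTaylorTwo (fun x : EuclideanSpace ℝ ι => logSumExp x.ofLp)
      (fun x => gibbsWeight x.ofLp) (fun x => gibbsCovariance x.ofLp) 1 := by
  intro x y
  have hquad : ∑ i, ∑ j, gibbsCovariance x.ofLp i j * (y i * y j) =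
      gibbsAverage x.ofLp (y.ofLp * y.ofLp) -
        gibbsAverage x.ofLp y.ofLp * gibbsAverage x.ofLp y.ofLp := by
    rw [sum_gibbsCovariance_mul x.ofLp (fun i j => y i * y j)]
    simp only [gibbsAverage, Finset.sum_mul_sum, Pi.mul_apply, mul_mul_mul_comm]
  rw [quadraticPolynomial, hquad, one_mul]
  exact abs_logSumExp_add_sub_le x.ofLp y.ofLp (PiLp.norm_apply_le y)

lemma le_logSumExp (x : ι → ℝ) (i : ι) : x i ≤ logSumExp x := by
  rw [logSumExp, Real.le_log_iff_exp_le (sum_exp_pos x)]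
  exact Finset.single_le_sum (fun j _ => (Real.exp_pos (x j)).le) (Finset.mem_univ i)

lemma ciSup_le_logSumExp (x : ι → ℝ) : ⨆ i, x i ≤ logSumExp x :=
  ciSup_le (le_logSumExp x)

lemma logSumExp_le_log_card_add_ciSup (x : ι → ℝ) :
    logSumExp x ≤ Real.log (Fintype.card ι) + ⨆ i, x i := by
  have hcard : (0 : ℝ) < Fintype.card ι := Nat.cast_pos.2 Fintype.card_pos
  have hle (i : ι) : x i ≤ ⨆ j, x j := le_ciSup (Set.finite_range x).bddAbove i
  rw [logSumExp, Real.log_le_iff_le_exp (sum_exp_pos x), Real.exp_add, Real.exp_log hcard]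
  simpa using Finset.sum_le_sum fun i (_ : i ∈ Finset.univ) => Real.exp_le_exp.2 (hle i)

lemma logSumExp_le_div_add (x : ι → ℝ) {a : ℝ} (ha : 0 < a) :
    logSumExp x ≤ (∑ i, Real.exp (x i)) / a + (Real.log a - 1) := by
  have htangent := Real.log_le_sub_one_of_pos (div_pos (sum_exp_pos x) ha)
  rw [Real.log_div (sum_exp_pos x).ne' ha.ne'] at htangent
  unfold logSumExp
  linarith

lemma logSumExp_prod {κ ν : Type*} [Fintype κ] [Fintype ν] [Nonempty κ] (e : ν ≃ ι × κ)
    (x : ι → ℝ) (y : κ → ℝ) :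
    logSumExp (fun k => x (e k).1 + y (e k).2) = logSumExp x + logSumExp y := by
  rw [logSumExp, logSumExp, logSumExp, ← Real.log_mul (sum_exp_pos x).ne' (sum_exp_pos y).ne',
    Finset.sum_mul_sum, ← Fintype.sum_prod_type', ← e.sum_comp]
  simp only [Real.exp_add]

end LogSumExp

section GaussianFreeEnergy

variable {ι κ ν : Type*} [Fintype ι] [DecidableEq ι] [Fintype κ] [DecidableEq κ] [Fintype ν]
  [DecidableEq ν] {S : Matrix ι ι ℝ} {T : Matrix κ κ ℝ}

/-- The expected free energy `E log ∑ᵢ exp Xᵢ` of a centered Gaussian vector `X` with covariance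
matrix `S`. -/
def gaussianFreeEnergy (S : Matrix ι ι ℝ) : ℝ :=
  ∫ x, logSumExp x.ofLp ∂(centeredGaussian S)

/-- The expected maximum `E maxᵢ Xᵢ` of a centered Gaussian vector `X` with covariance matrix
`S`. -/
def gaussianMax (S : Matrix ι ι ℝ) : ℝ :=
  ∫ x, ⨆ i, x i ∂(centeredGaussian S)

lemma map_prod_centeredGaussian (hS : S.PosSemidef) (hT : T.PosSemidef) (f : ν → ι) (g : ν → κ) :
    ((centeredGaussian S).prod (centeredGaussian T)).map
        (fun p => WithLp.toLp 2 fun k => p.1 (f k) + p.2 (g k)) =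
      centeredGaussian (S.submatrix f f + T.submatrix g g) := by
  rw [← centeredGaussian_conv (hS.submatrix f) (hT.submatrix g), Measure.conv,
    ← centeredGaussian_map_reindex hS, ← centeredGaussian_map_reindex hT,
    Measure.map_prod_map _ _ (by fun_prop) (by fun_prop),
    Measure.map_map (by fun_prop) (by fun_prop)]
  rfl

lemma integrable_exp_eval_centeredGaussian (hS : S.PosSemidef) (i : ι) :
    Integrable (fun x => Real.exp (x i)) (centeredGaussian S) := by
  have heval := measurePreserving_eval_multivariateGaussian (μ := 0) hS (i := i)
  simpa [Function.comp_def] using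
    heval.integrable_comp_of_integrable (integrable_exp_mul_gaussianReal 1)

lemma integral_exp_eval_centeredGaussian (hS : S.PosSemidef) (i : ι) :
    ∫ x, Real.exp (x i) ∂(centeredGaussian S) = Real.exp (S i i / 2) := by
  simpa [mgf, Real.coe_toNNReal _ (hS.diag_nonneg (i := i))] using
    mgf_gaussianReal (measurePreserving_eval_multivariateGaussian (μ := 0) hS (i := i)).map_eq 1

lemma integral_logSumExp_smul_centeredGaussian (hS : S.PosSemidef) (β : ℝ) :
    ∫ x, logSumExp (β • x.ofLp) ∂(centeredGaussian S) = gaussianFreeEnergy (β ^ 2 • S) := by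
  rw [gaussianFreeEnergy, ← centeredGaussian_map_smul hS,
    integral_map (by fun_prop) measurable_logSumExp_ofLp.aestronglyMeasurable]
  rfl

lemma gaussianMax_sq_smul (hS : S.PosSemidef) {β : ℝ} (hβ : 0 ≤ β) :
    gaussianMax (β ^ 2 • S) = β * gaussianMax S := by
  rw [gaussianMax, ← centeredGaussian_map_smul hS, integral_map (by fun_prop)
    (Measurable.iSup fun i => by fun_prop).aestronglyMeasurable, gaussianMax, ← integral_const_mul]
  simp only [Real.mul_iSup_of_nonneg hβ, PiLp.smul_apply, smul_eq_mul]

variable [Nonempty ι]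

lemma integrable_logSumExp_centeredGaussian (S : Matrix ι ι ℝ) :
    Integrable (fun x => logSumExp x.ofLp) (centeredGaussian S) :=
  hasUniformTaylorTwo_logSumExp.integrable measurable_logSumExp_ofLp S

theorem gaussianFreeEnergy_anti_of_diag_eq {T : Matrix ι ι ℝ} (hS : S.PosSemidef)
    (hT : T.PosSemidef) (hdiag : ∀ i, S i i = T i i) (hle : ∀ i j, S i j ≤ T i j) :
    gaussianFreeEnergy T ≤ gaussianFreeEnergy S := by
  refine hasUniformTaylorTwo_logSumExp.integral_centeredGaussian_mono measurable_logSumExp_ofLp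
    hS hT fun x => ?_
  simp only [sum_gibbsCovariance_mul, hdiag]
  gcongr with i _ j _
  · exact mul_nonneg (gibbsWeight_nonneg _ i) (gibbsWeight_nonneg _ j)
  · exact hle i j

theorem gaussianFreeEnergy_prod [Nonempty κ] (e : ν ≃ ι × κ) (hS : S.PosSemidef)
    (hT : T.PosSemidef) :
    gaussianFreeEnergy (S.submatrix (fun k => (e k).1) (fun k => (e k).1) +
        T.submatrix (fun k => (e k).2) (fun k => (e k).2)) =
      gaussianFreeEnergy S + gaussianFreeEnergy T := by
  rw [gaussianFreeEnergy, ← map_prod_centeredGaussian hS hT, integral_map (by fun_prop)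
    measurable_logSumExp_ofLp.aestronglyMeasurable]
  simp only [logSumExp_prod e]
  rw [integral_add ((integrable_logSumExp_centeredGaussian S).comp_fst _)
    ((integrable_logSumExp_centeredGaussian T).comp_snd _),
    integral_fun_fst fun x : EuclideanSpace ℝ ι => logSumExp x.ofLp,
    integral_fun_snd fun y : EuclideanSpace ℝ κ => logSumExp y.ofLp]
  simp [gaussianFreeEnergy]

theorem gaussianFreeEnergy_le_logSumExp_diag (hS : S.PosSemidef) :
    gaussianFreeEnergy S ≤ logSumExp fun i => S i i / 2 := by
  have hint := integrable_finsetSum Finset.univ fun i _ => integrable_exp_eval_centeredGaussian hS i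
  have ha := sum_exp_pos fun i => S i i / 2
  set a := ∑ i, Real.exp (S i i / 2)
  have hmean : ∫ x, ∑ i, Real.exp (x i) ∂(centeredGaussian S) = a := by
    rw [integral_finsetSum _ fun i _ => integrable_exp_eval_centeredGaussian hS i]
    simp only [integral_exp_eval_centeredGaussian hS, a]
  calc gaussianFreeEnergy S
      ≤ ∫ x, (∑ i, Real.exp (x i)) / a + (Real.log a - 1) ∂(centeredGaussian S) :=
        integral_mono (integrable_logSumExp_centeredGaussian S)
          ((hint.div_const a).add (integrable_const _)) fun x => logSumExp_le_div_add x.ofLp ha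
    _ = a / a + (Real.log a - 1) := by
        rw [integral_add (hint.div_const a) (integrable_const _), integral_div, hmean]
        simp
    _ = Real.log a := by rw [div_self ha.ne']; ring

lemma integrable_ciSup_centeredGaussian (S : Matrix ι ι ℝ) :
    Integrable (fun x => ⨆ i, x i) (centeredGaussian S) :=
  integrable_of_le_of_le (Measurable.iSup fun i => by fun_prop).aestronglyMeasurable
    (Eventually.of_forall fun x =>
      le_ciSup (Set.finite_range x.ofLp).bddAbove (Classical.arbitrary ι))
    (Eventually.of_forall fun x => ciSup_le_logSumExp x.ofLp)
    (integrable_eval_centeredGaussian S _) (integrable_logSumExp_centeredGaussian S)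

lemma gaussianMax_le_gaussianFreeEnergy (S : Matrix ι ι ℝ) :
    gaussianMax S ≤ gaussianFreeEnergy S :=
  integral_mono (integrable_ciSup_centeredGaussian S) (integrable_logSumExp_centeredGaussian S)
    fun x => ciSup_le_logSumExp x.ofLp

lemma gaussianFreeEnergy_le_log_card_add_gaussianMax (S : Matrix ι ι ℝ) :
    gaussianFreeEnergy S ≤ Real.log (Fintype.card ι) + gaussianMax S := by
  have hmax := integrable_ciSup_centeredGaussian S
  have hmono := integral_mono (integrable_logSumExp_centeredGaussian S)
    ((integrable_const _).add hmax) fun x => logSumExp_le_log_card_add_ciSup x.ofLp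
  simpa [gaussianFreeEnergy, gaussianMax, integral_add (integrable_const _) hmax] using hmono

theorem tendsto_gaussianFreeEnergy_sq_smul_div (hS : S.PosSemidef) :
    Tendsto (fun β : ℝ => gaussianFreeEnergy (β ^ 2 • S) / β) atTop (nhds (gaussianMax S)) := by
  have hupper : Tendsto (fun β : ℝ => Real.log (Fintype.card ι) / β + gaussianMax S) atTop
      (nhds (gaussianMax S)) := by
    simpa using (tendsto_const_nhds.div_atTop tendsto_id).add_const (gaussianMax S)
  refine tendsto_of_tendsto_of_tendsto_of_le_of_le' tendsto_const_nhds hupper ?_ ?_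
  all_goals
    filter_upwards [eventually_gt_atTop 0] with β hβ
    have hscale := gaussianMax_sq_smul hS hβ.le
  · rw [le_div_iff₀' hβ, ← hscale]
    exact gaussianMax_le_gaussianFreeEnergy _
  · rw [div_add' _ _ _ hβ.ne', mul_comm, ← hscale]
    gcongr
    exact gaussianFreeEnergy_le_log_card_add_gaussianMax _

end GaussianFreeEnergy

lemma exists_tendsto_div_of_superadditive {u : ℕ → ℝ} {C : ℝ} (hu : ∀ m n, u m + u n ≤ u (m + n))
    (hC : ∀ n, u n ≤ C * n) : ∃ L, Tendsto (fun n : ℕ => 1 / (n : ℝ) * u n) atTop (nhds L) := by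
  have hneg : Subadditive (fun n => -u n) := fun m n => by linarith [hu m n]
  have hbdd : BddBelow (Set.range fun n : ℕ => -u n / n) := by
    refine ⟨min 0 (-C), Set.forall_mem_range.2 fun n => ?_⟩
    rcases n.eq_zero_or_pos with rfl | hn
    · simp
    · refine (min_le_right _ _).trans ((le_div_iff₀ (Nat.cast_pos.2 hn)).2 ?_)
      linarith [hC n]
  exact ⟨-hneg.lim, (hneg.tendsto_lim hbdd).neg.congr fun n => by ring⟩

section SherringtonKirkpatrick

variable {n : ℕ}

/-- The Sherrington–Kirkpatrick Hamiltonian `½ ⟨σ, M σ⟩`, as a function of the spin configuration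
`σ`, encoded by a Boolean vector. -/
def skHamiltonian (M : Fin n → Fin n → ℝ) (b : Fin n → Bool) : ℝ :=
  1 / 2 * ∑ i, ∑ j, signVec b i * M i j * signVec b j

/-- The covariance matrix `⟨σ, τ⟩² / (2n)` of the Sherrington–Kirkpatrick Hamiltonian of a `GOE(n)`
matrix. -/
def skCovariance (n : ℕ) : Matrix (Fin n → Bool) (Fin n → Bool) ℝ :=
  fun b c => (∑ i, signVec b i * signVec c i) ^ 2 / (2 * n)

lemma skHamiltonian_eq_sum_prod (M : Fin n → Fin n → ℝ) (b : Fin n → Bool) :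
    skHamiltonian M b =
      ∑ p : Fin n × Fin n, signVec b p.1 * signVec b p.2 / 2 * M p.1 p.2 := by
  simp only [skHamiltonian, Fintype.sum_prod_type, Finset.mul_sum]
  exact Finset.sum_congr rfl fun _ _ => Finset.sum_congr rfl fun _ _ => by ring

lemma signVec_mul_self (b : Fin n → Bool) (i : Fin n) : signVec b i * signVec b i = 1 := by
  unfold signVec
  split_ifs <;> norm_num

lemma skCovariance_self (b : Fin n → Bool) : skCovariance n b b = n / 2 := by
  simp only [skCovariance, signVec_mul_self, Finset.sum_const, Finset.card_univ, Fintype.card_fin,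
    nsmul_eq_mul, mul_one]
  rcases n.eq_zero_or_pos with rfl | hn
  · simp
  · field_simp

lemma posSemidef_skCovariance (n : ℕ) : (skCovariance n).PosSemidef := by
  let G : Matrix (Fin n → Bool) (Fin n × Fin n) ℝ := fun b p => signVec b p.1 * signVec b p.2
  have hgram : skCovariance n = (1 / (2 * n : ℝ)) • (G * G.conjTranspose) := by
    ext b c
    rw [Matrix.smul_apply, Matrix.mul_apply]
    simp only [Matrix.conjTranspose_apply, star_trivial]
    simp only [skCovariance, G, sq, Finset.sum_mul_sum, Fintype.sum_prod_type, smul_eq_mul]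
    rw [div_eq_inv_mul, one_div]
    congr 1
    exact Finset.sum_congr rfl fun _ _ => Finset.sum_congr rfl fun _ _ => by ring
  rw [hgram]
  exact (Matrix.posSemidef_self_mul_conjTranspose G).smul (by positivity)

lemma add_sq_div_add_le (x y : ℝ) {a b : ℝ} (ha : 0 < a) (hb : 0 < b) :
    (x + y) ^ 2 / (a + b) ≤ x ^ 2 / a + y ^ 2 / b := by
  simpa [Fin.sum_univ_two] using Finset.sq_sum_div_le_sum_sq_div Finset.univ ![x, y]
    (g := ![a, b]) (by simp [Fin.forall_fin_two, ha, hb])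

lemma skCovariance_add_le (m n : ℕ) (b c : Fin (m + n) → Bool) :
    skCovariance (m + n) b c ≤
      skCovariance m (fun i => b (Fin.castAdd n i)) (fun i => c (Fin.castAdd n i)) +
        skCovariance n (fun i => b (Fin.natAdd m i)) (fun i => c (Fin.natAdd m i)) := by
  simp only [skCovariance, Fin.sum_univ_add, Nat.cast_add, mul_add, signVec]
  rcases m.eq_zero_or_pos with rfl | hm
  · simp
  rcases n.eq_zero_or_pos with rfl | hn
  · simp
  exact add_sq_div_add_le _ _ (by positivity) (by positivity)

theorem gaussianFreeEnergy_skCovariance_superadditive (β : ℝ) (m n : ℕ) :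
    gaussianFreeEnergy (β ^ 2 • skCovariance m) + gaussianFreeEnergy (β ^ 2 • skCovariance n) ≤
      gaussianFreeEnergy (β ^ 2 • skCovariance (m + n)) := by
  have hpsd (k : ℕ) := (posSemidef_skCovariance k).smul (sq_nonneg β)
  rw [← gaussianFreeEnergy_prod (Fin.appendEquiv m n).symm (hpsd m) (hpsd n)]
  refine gaussianFreeEnergy_anti_of_diag_eq (hpsd _)
    (((hpsd m).submatrix _).add ((hpsd n).submatrix _)) (fun b => ?_) fun b c => ?_
  · simp only [Matrix.add_apply, Matrix.submatrix_apply, Matrix.smul_apply, skCovariance_self,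
      smul_eq_mul, Nat.cast_add]
    ring
  · simp only [Matrix.add_apply, Matrix.submatrix_apply, Matrix.smul_apply, smul_eq_mul, ← mul_add]
    exact mul_le_mul_of_nonneg_left (skCovariance_add_le m n b c) (sq_nonneg β)

theorem gaussianMax_skCovariance_superadditive (m n : ℕ) :
    gaussianMax (skCovariance m) + gaussianMax (skCovariance n) ≤
      gaussianMax (skCovariance (m + n)) := by
  have hlim (k : ℕ) := tendsto_gaussianFreeEnergy_sq_smul_div (posSemidef_skCovariance k)
  refine le_of_tendsto_of_tendsto ((hlim m).add (hlim n)) (hlim (m + n)) ?_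
  filter_upwards [eventually_ge_atTop 0] with β hβ
  rw [← add_div]
  exact div_le_div_of_nonneg_right (gaussianFreeEnergy_skCovariance_superadditive β m n) hβ

lemma gaussianFreeEnergy_skCovariance_le (β : ℝ) (n : ℕ) :
    gaussianFreeEnergy (β ^ 2 • skCovariance n) ≤ (Real.log 2 + β ^ 2 / 4) * n := by
  refine (gaussianFreeEnergy_le_logSumExp_diag
    ((posSemidef_skCovariance n).smul (sq_nonneg β))).trans_eq ?_
  simp only [logSumExp, Matrix.smul_apply, skCovariance_self, smul_eq_mul, Finset.sum_const,
    Finset.card_univ, Fintype.card_fun, Fintype.card_bool, Fintype.card_fin, nsmul_eq_mul,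
    Nat.cast_pow, Nat.cast_ofNat]
  rw [Real.log_mul (by positivity) (Real.exp_ne_zero _), Real.log_pow, Real.log_exp]
  ring

lemma gaussianMax_skCovariance_le (n : ℕ) :
    gaussianMax (skCovariance n) ≤ (Real.log 2 + 1 / 4) * n := by
  exact (gaussianMax_le_gaussianFreeEnergy _).trans
    (by simpa using gaussianFreeEnergy_skCovariance_le 1 n)

theorem exists_tendsto_gaussianFreeEnergy_skCovariance (β : ℝ) :
    ∃ L, Tendsto (fun n : ℕ => 1 / (n : ℝ) * gaussianFreeEnergy (β ^ 2 • skCovariance n))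
      atTop (nhds L) :=
  exists_tendsto_div_of_superadditive (gaussianFreeEnergy_skCovariance_superadditive β)
    (gaussianFreeEnergy_skCovariance_le β)

theorem exists_tendsto_gaussianMax_skCovariance :
    ∃ M, Tendsto (fun n : ℕ => 1 / (n : ℝ) * gaussianMax (skCovariance n)) atTop (nhds M) :=
  exists_tendsto_div_of_superadditive gaussianMax_skCovariance_superadditive
    gaussianMax_skCovariance_le

namespace IsGOE

variable {Ω : Type*} [MeasurableSpace Ω] {μ : Measure Ω} {A : Ω → Fin n → Fin n → ℝ}

lemma measurable_entry (h : IsGOE μ n A) (i j : Fin n) : Measurable fun ω => A ω i j :=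
  h.1 i j

lemma entry_comm (h : IsGOE μ n A) (ω : Ω) (i j : Fin n) : A ω i j = A ω j i :=
  h.2.1 ω i j

lemma iIndepFun_upper (h : IsGOE μ n A) :
    iIndepFun (fun (p : {p : Fin n × Fin n // p.1 ≤ p.2}) ω => A ω p.1.1 p.1.2) μ :=
  h.2.2.1

lemma entry_eq_min_max (h : IsGOE μ n A) (ω : Ω) (i j : Fin n) :
    A ω i j = A ω (min i j) (max i j) := by
  rcases le_total i j with hij | hij
  · rw [min_eq_left hij, max_eq_right hij]
  · rw [min_eq_right hij, max_eq_left hij, h.entry_comm]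

lemma map_entry (h : IsGOE μ n A) (i j : Fin n) :
    μ.map (fun ω => A ω i j) = gaussianReal 0 ((if i = j then 2 else 1) / n) := by
  obtain ⟨-, hsymm, -, hdiag, hoff⟩ := h
  rcases lt_trichotomy i j with hij | rfl | hij
  · rw [if_neg hij.ne, hoff i j hij]
  · rw [if_pos rfl, hdiag i]
  · simp only [if_neg hij.ne', hsymm _ i j, hoff j i hij]

lemma hasGaussianLaw_entry (h : IsGOE μ n A) (i j : Fin n) :
    HasGaussianLaw (fun ω => A ω i j) μ :=
  ⟨by rw [h.map_entry]; infer_instance⟩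

lemma integral_entry (h : IsGOE μ n A) (i j : Fin n) : ∫ ω, A ω i j ∂μ = 0 := by
  rw [← integral_map (f := fun x : ℝ => x) (h.measurable_entry i j).aemeasurable (by fun_prop),
    h.map_entry, integral_id_gaussianReal]

lemma variance_entry (h : IsGOE μ n A) (i j : Fin n) :
    Var[fun ω => A ω i j; μ] = (if i = j then 2 else 1) / n := by
  have hvar := variance_map (Y := fun ω => A ω i j) (X := id) (μ := μ) (by fun_prop)
    (h.measurable_entry i j).aemeasurable
  rw [h.map_entry, variance_id_gaussianReal] at hvar
  rw [← Function.id_comp fun ω => A ω i j, ← hvar]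
  split_ifs <;> simp

lemma covariance_entry (h : IsGOE μ n A) (i j k l : Fin n) :
    cov[fun ω => A ω i j, fun ω => A ω k l; μ] =
      ((if i = k ∧ j = l then 1 else 0) + (if i = l ∧ j = k then 1 else 0)) / n := by
  have hsymm (i j : Fin n) : (fun ω => A ω i j) = fun ω => A ω j i :=
    funext fun ω => h.entry_comm ω i j
  wlog hij : i ≤ j generalizing i j
  · rw [hsymm, this j i (le_of_not_ge hij), add_comm]
    simp only [and_comm]
  wlog hkl : k ≤ l generalizing k l
  · rw [hsymm k l, this l k (le_of_not_ge hkl), add_comm]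
  by_cases heq : i = k ∧ j = l
  · obtain ⟨rfl, rfl⟩ := heq
    rw [covariance_self (h.measurable_entry i j).aemeasurable, h.variance_entry]
    by_cases hdiag : i = j
    · simp only [hdiag, ↓reduceIte, and_self]
      norm_num
    · simp [hdiag]
  · have hindep := h.iIndepFun_upper.indepFun (i := ⟨(i, j), hij⟩) (j := ⟨(k, l), hkl⟩)
      (by simpa [Subtype.ext_iff, Prod.ext_iff] using heq)
    rw [hindep.covariance_eq_zero (h.hasGaussianLaw_entry i j).memLp_two
      (h.hasGaussianLaw_entry k l).memLp_two]
    have hne : ¬(i = l ∧ j = k) := by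
      rintro ⟨rfl, rfl⟩
      exact heq ⟨le_antisymm hij hkl, le_antisymm hkl hij⟩
    simp [heq, hne]

lemma hasGaussianLaw_skHamiltonian (h : IsGOE μ n A) :
    HasGaussianLaw (fun ω => skHamiltonian (A ω)) μ := by
  have hupper := h.iIndepFun_upper.hasGaussianLaw
    fun (p : {p : Fin n × Fin n // p.1 ≤ p.2}) => h.hasGaussianLaw_entry p.1.1 p.1.2
  refine (hupper.map (ContinuousLinearMap.pi fun b : Fin n → Bool =>
    (1 / 2 : ℝ) • ∑ i, ∑ j, (signVec b i * signVec b j) • ContinuousLinearMap.proj (R := ℝ)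
      (φ := fun _ : {p : Fin n × Fin n // p.1 ≤ p.2} => ℝ)
      ⟨(min i j, max i j), min_le_max⟩)).congr (ae_of_all _ fun ω => ?_)
  ext b
  simp [skHamiltonian, h.entry_eq_min_max, mul_right_comm]

lemma integral_skHamiltonian (h : IsGOE μ n A) (b : Fin n → Bool) :
    ∫ ω, skHamiltonian (A ω) b ∂μ = 0 := by
  simp only [skHamiltonian_eq_sum_prod]
  rw [integral_finsetSum _ fun p _ => (h.hasGaussianLaw_entry p.1 p.2).integrable.const_mul _]
  simp only [integral_const_mul, h.integral_entry, mul_zero, Finset.sum_const_zero]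

lemma covariance_skHamiltonian (h : IsGOE μ n A) (b c : Fin n → Bool) :
    cov[fun ω => skHamiltonian (A ω) b, fun ω => skHamiltonian (A ω) c; μ] =
      skCovariance n b c := by
  have hprob := h.iIndepFun_upper.isProbabilityMeasure
  have hmemLp (r : ℝ) (p : Fin n × Fin n) : MemLp (fun ω => r * A ω p.1 p.2) 2 μ :=
    (h.hasGaussianLaw_entry p.1 p.2).memLp_two.const_mul r
  have hterm (p : Fin n × Fin n) :
      ∑ q : Fin n × Fin n, signVec c q.1 * signVec c q.2 / 2 *
        (signVec b p.1 * signVec b p.2 / 2 *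
          (((if p.1 = q.1 ∧ p.2 = q.2 then 1 else 0) + (if p.1 = q.2 ∧ p.2 = q.1 then 1 else 0)) /
            (n : ℝ))) =
      (signVec b p.1 * signVec c p.1) * (signVec b p.2 * signVec c p.2) / (2 * n) := by
    simp only [Fintype.sum_prod_type, ite_and, mul_add, add_div, Finset.sum_add_distrib, ite_div,
      mul_ite, zero_div, mul_zero, Finset.sum_ite_irrel, Finset.sum_ite_eq, Finset.mem_univ,
      if_true, Finset.sum_const_zero]
    ring
  simp only [skHamiltonian_eq_sum_prod]
  rw [covariance_fun_sum_fun_sum (fun p => hmemLp _ p) (fun q => hmemLp _ q)]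
  simp only [covariance_const_mul_left, covariance_const_mul_right, h.covariance_entry, hterm]
  rw [skCovariance, sq, Finset.sum_mul_sum, Fintype.sum_prod_type]
  simp only [Finset.sum_div]

theorem hasLaw_skHamiltonian (h : IsGOE μ n A) :
    HasLaw (fun ω => WithLp.toLp 2 (skHamiltonian (A ω))) (centeredGaussian (skCovariance n)) μ :=
  hasLaw_multivariateGaussian_of_covariance h.hasGaussianLaw_skHamiltonian
    h.integral_skHamiltonian (posSemidef_skCovariance n) h.covariance_skHamiltonian

lemma integral_logSumExp_smul_skHamiltonian (h : IsGOE μ n A) (β : ℝ) :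
    ∫ ω, logSumExp (β • skHamiltonian (A ω)) ∂μ = gaussianFreeEnergy (β ^ 2 • skCovariance n) := by
  rw [← integral_logSumExp_smul_centeredGaussian (posSemidef_skCovariance n)]
  exact h.hasLaw_skHamiltonian.integral_comp (f := fun x => logSumExp (β • x.ofLp))
    (measurable_logSumExp_ofLp.comp (measurable_const_smul β)).aestronglyMeasurable

lemma integral_ciSup_skHamiltonian (h : IsGOE μ n A) :
    ∫ ω, ⨆ b, skHamiltonian (A ω) b ∂μ = gaussianMax (skCovariance n) :=
  h.hasLaw_skHamiltonian.integral_comp (f := fun x => ⨆ b, x b)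
    (Measurable.iSup fun b => by fun_prop).aestronglyMeasurable

end IsGOE

end SherringtonKirkpatrick

theorem sk_free_energy_limit_exists_general {Ω : ℕ → Type*} [∀ n, MeasurableSpace (Ω n)]
    (μ : (n : ℕ) → Measure (Ω n)) (A : (n : ℕ) → Ω n → Fin n → Fin n → ℝ)
    (hGOE : ∀ n, 1 ≤ n → IsGOE (μ n) n (A n)) :
    (∀ β : ℝ, ∃ L : ℝ, Tendsto
      (fun n : ℕ => (1 / (n : ℝ)) * ∫ ω, Real.log (∑ b : Fin n → Bool,
        Real.exp (β * ((1/2) * ∑ i, ∑ j, signVec b i * A n ω i j * signVec b j))) ∂(μ n))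
      atTop (nhds L)) ∧
    (∃ M : ℝ, Tendsto
      (fun n : ℕ => (1 / (n : ℝ)) * ∫ ω,
        (⨆ b : Fin n → Bool, (1/2) * ∑ i, ∑ j, signVec b i * A n ω i j * signVec b j) ∂(μ n))
      atTop (nhds M)) := by
  constructor
  · intro β
    obtain ⟨L, hL⟩ := exists_tendsto_gaussianFreeEnergy_skCovariance β
    refine ⟨L, hL.congr' ?_⟩
    filter_upwards [eventually_ge_atTop 1] with n hn
    rw [← (hGOE n hn).integral_logSumExp_smul_skHamiltonian β]
    rfl
  · obtain ⟨M, hM⟩ := exists_tendsto_gaussianMax_skCovariance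
    refine ⟨M, hM.congr' ?_⟩
    filter_upwards [eventually_ge_atTop 1] with n hn
    rw [← (hGOE n hn).integral_ciSup_skHamiltonian]
    rfl

/-- **Existence of the thermodynamic limit for the SK model** (Guerra–Toninelli).
With `H_n(σ) = ½⟨σ, A_n σ⟩` for `A_n ~ GOE(n)`, for every `β > 0` the limit
`lim_n (1/n) E[log Σ_σ exp(β H_n(σ))]` exists and is finite, and consequently
`lim_n (1/n) E[max_σ H_n(σ)]` exists and is finite. -/
theorem sk_free_energy_limit_exists {Ω : Type*} [MeasurableSpace Ω] (μ : Measure Ω)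
    [IsProbabilityMeasure μ]
    (A : (n : ℕ) → Ω → Fin n → Fin n → ℝ)
    (hGOE : ∀ n, 1 ≤ n → IsGOE μ n (A n)) :
    (∀ β : ℝ, 0 < β → ∃ L : ℝ, Tendsto
      (fun n : ℕ => (1 / (n : ℝ)) * ∫ ω, Real.log (∑ b : Fin n → Bool,
        Real.exp (β * ((1/2) * ∑ i, ∑ j, signVec b i * A n ω i j * signVec b j))) ∂μ)
      atTop (nhds L)) ∧
    (∃ M : ℝ, Tendsto
      (fun n : ℕ => (1 / (n : ℝ)) * ∫ ω,
        (⨆ b : Fin n → Bool, (1/2) * ∑ i, ∑ j, signVec b i * A n ω i j * signVec b j) ∂μ)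
      atTop (nhds M)) := by
  obtain ⟨hfree, hmax⟩ := sk_free_energy_limit_exists_general (fun _ => μ) A hGOE
  exact ⟨fun β _ => hfree β, hmax⟩

end
end

section
/- There exists an absolute constant C > 0 such that for every n ≥ 2 and every symmetric matrix A ∈ ℝ^{n×n} with zero diagonal, max_{C' ∈ ℰ_n} ⟨A, C'⟩ ≤ C (log n) · max_{σ ∈ {−1,1}^n} ⟨σ, Aσ⟩, where both sides are non-negative. -/
noncomputable section

/-- The elliptope `ℰ_n`: symmetric positive semidefinite matrices with unit diagonal. -/
def elliptope (n : ℕ) : Set (Matrix (Fin n) (Fin n) ℝ) :=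
  {C | C.PosSemidef ∧ ∀ i, C i i = 1}

/-!
Let `M` be the maximum of `v ↦ vᵀAv` over `{-1,1}ⁿ`. As the diagonal of `A` is non-negative, this
form is convex in each coordinate separately, so `M` also bounds it on the cube `[-1,1]ⁿ`, and by
homogeneity `xᵀAx ≤ M ‖x‖∞²` for every `x`. For `K` in the elliptope take `X ∼ N(0, K)`: then
`⟨A, K⟩ = 𝔼 XᵀAX ≤ M 𝔼 ‖X‖∞²`. Each `Xᵢ` is a standard Gaussian, so
`𝔼 exp (‖X‖∞² / 4) ≤ ∑ᵢ 𝔼 exp (Xᵢ² / 4) = √2 n`, and Jensen's inequality gives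
`𝔼 ‖X‖∞² ≤ 4 log (√2 n) ≤ 6 log n`.
-/

open Finset Matrix MeasureTheory ProbabilityTheory Real WithLp
open scoped NNReal

theorem le_of_forall_vertex_le_of_convexOn_update {ι : Type*} [Finite ι] [DecidableEq ι]
    {f : (ι → ℝ) → ℝ} {a b : ι → ℝ} {M : ℝ}
    (hf : ∀ y i, ConvexOn ℝ (Set.Icc (a i) (b i)) fun t ↦ f (Function.update y i t))
    (hM : ∀ v, (∀ i, v i = a i ∨ v i = b i) → f v ≤ M) {y : ι → ℝ} (hy : y ∈ Set.Icc a b) :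
    f y ≤ M := by
  have := Fintype.ofFinite ι
  suffices h : ∀ s : Finset ι, ∀ y ∈ Set.Icc a b, (∀ i ∉ s, y i = a i ∨ y i = b i) → f y ≤ M from
    h univ y hy (by simp)
  intro s
  induction s using Finset.induction_on with
  | empty => exact fun y _ hv ↦ hM y fun i ↦ hv i (notMem_empty i)
  | insert i s _ ih =>
    intro y hy hv
    have hab : a i ≤ b i := (hy.1 i).trans (hy.2 i)
    have hendpoint (c : ℝ) (hc : c = a i ∨ c = b i) : f (Function.update y i c) ≤ M := by
      have hmem : c ∈ Set.Icc (a i) (b i) := by rcases hc with rfl | rfl <;> simp [hab]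
      refine ih _ ⟨le_update_iff.2 ⟨hmem.1, fun j _ ↦ hy.1 j⟩,
        update_le_iff.2 ⟨hmem.2, fun j _ ↦ hy.2 j⟩⟩ fun j hj ↦ ?_
      obtain rfl | hji := eq_or_ne j i
      · simpa using hc
      · simpa [hji] using hv j (by simp [hji, hj])
    calc f y = f (Function.update y i (y i)) := by rw [Function.update_eq_self]
      _ ≤ max (f (Function.update y i (a i))) (f (Function.update y i (b i))) :=
        (hf y i).le_max_of_mem_Icc (by simp [hab]) (by simp [hab]) ⟨hy.1 i, hy.2 i⟩
      _ ≤ M := max_le (hendpoint _ (.inl rfl)) (hendpoint _ (.inr rfl))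

section QuadraticForm

variable {ι : Type*} [Fintype ι] {A : Matrix ι ι ℝ} {M : ℝ}

theorem dotProduct_mulVec_eq_sum_sum {R : Type*} [CommSemiring R] (A : Matrix ι ι R) (x : ι → R) :
    x ⬝ᵥ A *ᵥ x = ∑ i, ∑ j, A i j * (x i * x j) := by
  simp only [dotProduct, mulVec, mul_sum, mul_left_comm]

theorem convexOn_dotProduct_mulVec_update [DecidableEq ι] {i : ι} (hA : 0 ≤ A i i) (y : ι → ℝ) :
    ConvexOn ℝ Set.univ fun t ↦ Function.update y i t ⬝ᵥ A *ᵥ Function.update y i t := by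
  set z := Function.update y i 0
  set e : ι → ℝ := Pi.single i 1
  have hupdate (t : ℝ) : Function.update y i t = z + t • e := by
    ext j
    obtain rfl | hj := eq_or_ne j i <;> simp [z, e, *]
  have hexpand : (fun t ↦ Function.update y i t ⬝ᵥ A *ᵥ Function.update y i t) =
      fun t ↦ A i i * t ^ 2 + ((z ⬝ᵥ A *ᵥ e + e ⬝ᵥ A *ᵥ z) * t + z ⬝ᵥ A *ᵥ z) := by
    ext t
    have hee : e ⬝ᵥ A *ᵥ e = A i i := by simp [e]
    simp only [hupdate, mulVec_add, mulVec_smul, add_dotProduct, dotProduct_add, smul_dotProduct,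
      dotProduct_smul, smul_eq_mul, hee]
    ring
  rw [hexpand]
  refine ((even_two.convexOn_pow (𝕜 := ℝ)).smul hA).add (.add ?_ (convexOn_const _ convex_univ))
  exact (LinearMap.mulLeft ℝ (z ⬝ᵥ A *ᵥ e + e ⬝ᵥ A *ᵥ z)).convexOn convex_univ

theorem dotProduct_mulVec_le_of_mem_cube (hA : ∀ i, 0 ≤ A i i)
    (hM : ∀ v : ι → ℝ, (∀ i, v i = -1 ∨ v i = 1) → v ⬝ᵥ A *ᵥ v ≤ M)
    {y : ι → ℝ} (hy : ∀ i, |y i| ≤ 1) : y ⬝ᵥ A *ᵥ y ≤ M := by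
  classical
  exact le_of_forall_vertex_le_of_convexOn_update (f := fun y ↦ y ⬝ᵥ A *ᵥ y)
    (fun y i ↦ (convexOn_dotProduct_mulVec_update (hA i) y).subset
      (Set.subset_univ _) (convex_Icc _ _))
    hM ⟨fun i ↦ (abs_le.1 (hy i)).1, fun i ↦ (abs_le.1 (hy i)).2⟩

theorem nonneg_of_forall_sign_dotProduct_mulVec_le (hA : ∀ i, 0 ≤ A i i)
    (hM : ∀ v : ι → ℝ, (∀ i, v i = -1 ∨ v i = 1) → v ⬝ᵥ A *ᵥ v ≤ M) : 0 ≤ M := by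
  simpa using dotProduct_mulVec_le_of_mem_cube hA hM (y := 0) (by simp)

theorem dotProduct_mulVec_le_mul_norm_sq (hA : ∀ i, 0 ≤ A i i)
    (hM : ∀ v : ι → ℝ, (∀ i, v i = -1 ∨ v i = 1) → v ⬝ᵥ A *ᵥ v ≤ M) (x : ι → ℝ) :
    x ⬝ᵥ A *ᵥ x ≤ M * ‖x‖ ^ 2 := by
  obtain rfl | hx := eq_or_ne x 0
  · simp
  have hnorm : 0 < ‖x‖ := norm_pos_iff.2 hx
  have hunit := dotProduct_mulVec_le_of_mem_cube hA hM (y := ‖x‖⁻¹ • x) fun i ↦ by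
    rw [Pi.smul_apply, smul_eq_mul, abs_mul, abs_of_pos (inv_pos.2 hnorm), inv_mul_le_one₀ hnorm]
    exact norm_le_pi_norm x i
  calc x ⬝ᵥ A *ᵥ x = (‖x‖⁻¹ • x) ⬝ᵥ A *ᵥ (‖x‖⁻¹ • x) * ‖x‖ ^ 2 := by
        simp only [mulVec_smul, dotProduct_smul, smul_dotProduct, smul_eq_mul]
        field_simp
    _ ≤ M * ‖x‖ ^ 2 := by gcongr

end QuadraticForm

theorem integral_le_log_sum_integral_exp {Ω ι : Type*} [MeasurableSpace Ω] {μ : Measure Ω}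
    [IsProbabilityMeasure μ] [Fintype ι] [Nonempty ι] {W : Ω → ℝ} {Z : ι → Ω → ℝ}
    (hW : Integrable W μ) (hZ : ∀ i, Integrable (fun ω ↦ exp (Z i ω)) μ)
    (hWZ : ∀ ω, ∃ i, W ω ≤ Z i ω) : ∫ ω, W ω ∂μ ≤ log (∑ i, ∫ ω, exp (Z i ω) ∂μ) := by
  set S := ∑ i, ∫ ω, exp (Z i ω) ∂μ with hS
  have hSpos : 0 < S := sum_pos (fun i _ ↦ integral_exp_pos (hZ i)) univ_nonempty
  -- The tangent to `exp` at `log S` replaces Jensen's inequality.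
  have htangent (ω : Ω) : W ω ≤ log S - 1 + (∑ i, exp (Z i ω)) / S := by
    obtain ⟨i, hi⟩ := hWZ ω
    calc W ω ≤ log S - 1 + exp (W ω - log S) := by linarith [add_one_le_exp (W ω - log S)]
      _ = log S - 1 + exp (W ω) / S := by rw [exp_sub, exp_log hSpos]
      _ ≤ log S - 1 + exp (Z i ω) / S := by gcongr
      _ ≤ log S - 1 + (∑ i, exp (Z i ω)) / S := by
        gcongr
        exact single_le_sum (f := fun i ↦ exp (Z i ω)) (fun _ _ ↦ (exp_pos _).le) (mem_univ i)
  have hsum : Integrable (fun ω ↦ (∑ i, exp (Z i ω)) / S) μ :=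
    (integrable_finsetSum _ fun i _ ↦ hZ i).div_const S
  calc ∫ ω, W ω ∂μ ≤ ∫ ω, (log S - 1 + (∑ i, exp (Z i ω)) / S) ∂μ :=
        integral_mono hW ((integrable_const _).add hsum) htangent
    _ = log S - 1 + S / S := by
      rw [integral_add (integrable_const _) hsum, integral_div,
        integral_finsetSum _ fun i _ ↦ hZ i]
      simp [hS]
    _ = log S := by rw [div_self hSpos.ne', sub_add_cancel]

section Gaussian

theorem integral_exp_mul_sq_gaussianReal {v : ℝ≥0} {s : ℝ} (hs : 2 * s * v < 1) :
    ∫ x, exp (s * x ^ 2) ∂gaussianReal 0 v = (√(1 - 2 * s * v))⁻¹ := by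
  obtain rfl | hv := eq_or_ne v 0
  · simp
  have : (0 : ℝ) < v := NNReal.coe_pos.2 (pos_iff_ne_zero.2 hv)
  have hdensity (x : ℝ) : gaussianPDFReal 0 v x • exp (s * x ^ 2) =
      (√(2 * π * v))⁻¹ * exp (-((1 - 2 * s * v) / (2 * v)) * x ^ 2) := by
    rw [gaussianPDFReal_def, smul_eq_mul, mul_assoc, ← exp_add]
    congr 2
    field_simp
    ring
  simp_rw [integral_gaussianReal_eq_integral_smul hv, hdensity, integral_const_mul,
    integral_gaussian]
  rw [← sqrt_inv, ← sqrt_inv, ← sqrt_mul (by positivity)]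
  have : 1 - 2 * s * v ≠ 0 := by linarith
  congr 1
  field_simp

theorem integrable_exp_mul_sq_gaussianReal {v : ℝ≥0} {s : ℝ} (hs : 2 * s * v < 1) :
    Integrable (fun x ↦ exp (s * x ^ 2)) (gaussianReal 0 v) := by
  apply Integrable.of_integral_ne_zero
  rw [integral_exp_mul_sq_gaussianReal hs]
  have : 0 < 1 - 2 * s * v := by linarith
  positivity

variable {ι : Type*} [Fintype ι] [DecidableEq ι] {S : Matrix ι ι ℝ}

theorem memLp_two_eval_multivariateGaussian (m : EuclideanSpace ℝ ι) (S : Matrix ι ι ℝ) (i : ι) :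
    MemLp (fun x ↦ x i) 2 (multivariateGaussian m S) :=
  MemLp.eval_piLp (f := id) IsGaussian.memLp_two_id i

theorem integral_eval_mul_eval_multivariateGaussian (hS : S.PosSemidef) (i j : ι) :
    ∫ x, x i * x j ∂multivariateGaussian 0 S = S i j := by
  have hmean : ∫ x, x i ∂multivariateGaussian 0 S = 0 := by
    simpa using (EuclideanSpace.proj (𝕜 := ℝ) i).integral_comp_id_comm
      (μ := multivariateGaussian 0 S) IsGaussian.integrable_id
  rw [← covariance_eval_multivariateGaussian (μ := 0) hS i j,
    covariance_eq_sub (memLp_two_eval_multivariateGaussian 0 S i)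
      (memLp_two_eval_multivariateGaussian 0 S j), hmean, zero_mul, sub_zero]
  rfl

theorem integrable_eval_mul_eval_multivariateGaussian (m : EuclideanSpace ℝ ι) (S : Matrix ι ι ℝ)
    (i j : ι) : Integrable (fun x ↦ x i * x j) (multivariateGaussian m S) :=
  (memLp_two_eval_multivariateGaussian m S i).integrable_mul
    (memLp_two_eval_multivariateGaussian m S j)

theorem integrable_dotProduct_mulVec_multivariateGaussian (m : EuclideanSpace ℝ ι)
    (S A : Matrix ι ι ℝ) :
    Integrable (fun x ↦ ofLp x ⬝ᵥ A *ᵥ ofLp x) (multivariateGaussian m S) := by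
  simp_rw [dotProduct_mulVec_eq_sum_sum]
  exact integrable_finsetSum _ fun i _ ↦ integrable_finsetSum _ fun j _ ↦
    (integrable_eval_mul_eval_multivariateGaussian m S i j).const_mul _

theorem integral_dotProduct_mulVec_multivariateGaussian (hS : S.PosSemidef) (A : Matrix ι ι ℝ) :
    ∫ x, ofLp x ⬝ᵥ A *ᵥ ofLp x ∂multivariateGaussian 0 S = trace (A * S) := by
  have hint (i j : ι) : Integrable (fun x ↦ A i j * (x i * x j)) (multivariateGaussian 0 S) :=
    (integrable_eval_mul_eval_multivariateGaussian 0 S i j).const_mul _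
  have hsymm (i j : ι) : S i j = S j i := hS.isHermitian.apply j i
  calc ∫ x, ofLp x ⬝ᵥ A *ᵥ ofLp x ∂multivariateGaussian 0 S
      = ∑ i, ∑ j, A i j * S i j := by
        simp_rw [dotProduct_mulVec_eq_sum_sum]
        rw [integral_finsetSum _ fun i _ ↦ integrable_finsetSum _ fun j _ ↦ hint i j]
        simp_rw [integral_finsetSum _ fun j _ ↦ hint _ j, integral_const_mul,
          integral_eval_mul_eval_multivariateGaussian hS]
    _ = trace (A * S) := by
        simp_rw [trace, diag_apply, mul_apply]
        exact sum_congr rfl fun i _ ↦ sum_congr rfl fun j _ ↦ by rw [hsymm]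

theorem measurePreserving_eval_multivariateGaussian_zero (hS : S.PosSemidef) (i : ι) :
    MeasurePreserving (fun x ↦ x i) (multivariateGaussian 0 S)
      (gaussianReal 0 (S i i).toNNReal) := by
  simpa using measurePreserving_eval_multivariateGaussian (μ := 0) hS (i := i)

theorem integrable_exp_mul_eval_sq_multivariateGaussian (hS : S.PosSemidef) {s : ℝ} {i : ι}
    (hs : 2 * s * S i i < 1) :
    Integrable (fun x ↦ exp (s * x i ^ 2)) (multivariateGaussian 0 S) := by
  rw [← Real.coe_toNNReal (S i i) hS.diag_nonneg] at hs
  exact (measurePreserving_eval_multivariateGaussian_zero hS i).integrable_comp_of_integrable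
    (integrable_exp_mul_sq_gaussianReal hs)

theorem integral_exp_mul_eval_sq_multivariateGaussian (hS : S.PosSemidef) {s : ℝ} {i : ι}
    (hs : 2 * s * S i i < 1) :
    ∫ x, exp (s * x i ^ 2) ∂multivariateGaussian 0 S = (√(1 - 2 * s * S i i))⁻¹ := by
  have heval := measurePreserving_eval_multivariateGaussian_zero hS i
  rw [← Real.coe_toNNReal (S i i) hS.diag_nonneg] at hs ⊢
  rw [← integral_exp_mul_sq_gaussianReal hs, ← heval.map_eq,
    integral_map heval.aemeasurable (by fun_prop)]

-- `ofLp x` carries the sup norm, whereas `x` itself carries the Euclidean one.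
theorem integrable_norm_ofLp_sq_multivariateGaussian (m : EuclideanSpace ℝ ι) (S : Matrix ι ι ℝ) :
    Integrable (fun x ↦ ‖ofLp x‖ ^ 2) (multivariateGaussian m S) :=
  (MemLp.of_eval (memLp_two_eval_multivariateGaussian m S)).integrable_norm_pow two_ne_zero

theorem integral_norm_ofLp_sq_multivariateGaussian_le [Nonempty ι] (hS : S.PosSemidef)
    (hdiag : ∀ i, S i i ≤ 1) :
    ∫ x, ‖ofLp x‖ ^ 2 ∂multivariateGaussian 0 S ≤ 4 * log (√2 * Fintype.card ι) := by
  have hvar (i : ι) : 2 * (1 / 4) * S i i ≤ 1 / 2 := by linarith [hdiag i]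
  have hexp (i : ι) := integrable_exp_mul_eval_sq_multivariateGaussian hS
    ((hvar i).trans_lt one_half_lt_one)
  have hmoment (i : ι) : ∫ x, exp (1 / 4 * x i ^ 2) ∂multivariateGaussian 0 S ≤ √2 := by
    rw [integral_exp_mul_eval_sq_multivariateGaussian hS ((hvar i).trans_lt one_half_lt_one)]
    calc (√(1 - 2 * (1 / 4) * S i i))⁻¹ ≤ (√2⁻¹)⁻¹ := by
          gcongr
          linarith [hvar i]
      _ = √2 := by rw [sqrt_inv, inv_inv]
  have hmax (x : EuclideanSpace ℝ ι) : ∃ i, 1 / 4 * ‖ofLp x‖ ^ 2 ≤ 1 / 4 * x i ^ 2 := by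
    obtain ⟨i, hi⟩ := (IsGreatest.pi_norm (ofLp x)).1
    exact ⟨i, by simp [← hi]⟩
  have hquarter : 1 / 4 * ∫ x, ‖ofLp x‖ ^ 2 ∂multivariateGaussian 0 S ≤
      log (√2 * Fintype.card ι) :=
    calc 1 / 4 * ∫ x, ‖ofLp x‖ ^ 2 ∂multivariateGaussian 0 S
        = ∫ x, 1 / 4 * ‖ofLp x‖ ^ 2 ∂multivariateGaussian 0 S := (integral_const_mul _ _).symm
      _ ≤ log (∑ i, ∫ x, exp (1 / 4 * x i ^ 2) ∂multivariateGaussian 0 S) :=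
        integral_le_log_sum_integral_exp
          ((integrable_norm_ofLp_sq_multivariateGaussian 0 S).const_mul (1 / 4)) hexp hmax
      _ ≤ log (√2 * Fintype.card ι) := by
        refine log_le_log (sum_pos (fun i _ ↦ integral_exp_pos (hexp i)) univ_nonempty) ?_
        simpa [mul_comm] using sum_le_card_nsmul univ _ _ fun i _ ↦ hmoment i
  linarith

end Gaussian

theorem trace_mul_le_of_posSemidef_of_diag_le_one {ι : Type*} [Fintype ι] [Nonempty ι]
    {A K : Matrix ι ι ℝ} {M : ℝ} (hA : ∀ i, 0 ≤ A i i)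
    (hM : ∀ v : ι → ℝ, (∀ i, v i = -1 ∨ v i = 1) → v ⬝ᵥ A *ᵥ v ≤ M)
    (hK : K.PosSemidef) (hdiag : ∀ i, K i i ≤ 1) :
    trace (A * K) ≤ 4 * log (√2 * Fintype.card ι) * M := by
  classical
  calc trace (A * K) = ∫ x, ofLp x ⬝ᵥ A *ᵥ ofLp x ∂multivariateGaussian 0 K :=
        (integral_dotProduct_mulVec_multivariateGaussian hK A).symm
    _ ≤ ∫ x, M * ‖ofLp x‖ ^ 2 ∂multivariateGaussian 0 K :=
        integral_mono (integrable_dotProduct_mulVec_multivariateGaussian 0 K A)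
          ((integrable_norm_ofLp_sq_multivariateGaussian 0 K).const_mul M)
          fun x ↦ dotProduct_mulVec_le_mul_norm_sq hA hM (ofLp x)
    _ = (∫ x, ‖ofLp x‖ ^ 2 ∂multivariateGaussian 0 K) * M := by
        rw [integral_const_mul, mul_comm]
    _ ≤ 4 * log (√2 * Fintype.card ι) * M :=
        mul_le_mul_of_nonneg_right (integral_norm_ofLp_sq_multivariateGaussian_le hK hdiag)
          (nonneg_of_forall_sign_dotProduct_mulVec_le hA hM)

theorem four_mul_log_sqrt_two_mul_le {r : ℝ} (hr : 2 ≤ r) : 4 * log (√2 * r) ≤ 6 * log r := by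
  have hlog : log 2 ≤ log r := log_le_log two_pos hr
  rw [log_mul (by positivity) (by positivity), log_sqrt zero_le_two]
  linarith

section Elliptope

variable {n : ℕ}

theorem one_mem_elliptope (n : ℕ) : (1 : Matrix (Fin n) (Fin n) ℝ) ∈ elliptope n :=
  ⟨.one, fun _ ↦ one_apply_eq _⟩

theorem exists_signVec_eq {v : Fin n → ℝ} (hv : ∀ i, v i = -1 ∨ v i = 1) :
    ∃ b, signVec b = v := by
  refine ⟨fun i ↦ decide (v i = 1), funext fun i ↦ ?_⟩
  rcases hv i with h | h <;> norm_num [signVec, h]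

theorem dotProduct_mulVec_le_iSup_signVec (A : Matrix (Fin n) (Fin n) ℝ) {v : Fin n → ℝ}
    (hv : ∀ i, v i = -1 ∨ v i = 1) :
    v ⬝ᵥ A *ᵥ v ≤ ⨆ b : Fin n → Bool, ∑ i, ∑ j, signVec b i * A i j * signVec b j := by
  obtain ⟨b, rfl⟩ := exists_signVec_eq hv
  have hexpand : signVec b ⬝ᵥ A *ᵥ signVec b = ∑ i, ∑ j, signVec b i * A i j * signVec b j := by
    simp only [dotProduct, mulVec, mul_sum, mul_assoc]
  rw [hexpand]
  exact le_ciSup (f := fun b ↦ ∑ i, ∑ j, signVec b i * A i j * signVec b j)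
    (Set.finite_range _).bddAbove b

theorem trace_mul_le_of_mem_elliptope (hn : 2 ≤ n) {A K : Matrix (Fin n) (Fin n) ℝ}
    (hA : ∀ i, 0 ≤ A i i) (hK : K ∈ elliptope n) :
    trace (A * K) ≤ 6 * log n *
      ⨆ b : Fin n → Bool, ∑ i, ∑ j, signVec b i * A i j * signVec b j := by
  have : NeZero n := ⟨by lia⟩
  have hM := fun v ↦ dotProduct_mulVec_le_iSup_signVec A (v := v)
  have hbound := trace_mul_le_of_posSemidef_of_diag_le_one hA hM hK.1 fun i ↦ (hK.2 i).le
  rw [Fintype.card_fin] at hbound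
  exact hbound.trans (mul_le_mul_of_nonneg_right
    (four_mul_log_sqrt_two_mul_le (by exact_mod_cast hn))
    (nonneg_of_forall_sign_dotProduct_mulVec_le hA hM))

end Elliptope

theorem grothendieck_log_n_approximation_general {n : ℕ} (hn : 2 ≤ n)
    {A : Matrix (Fin n) (Fin n) ℝ} (hA : ∀ i, 0 ≤ A i i) :
    (0 ≤ ⨆ b : Fin n → Bool, ∑ i, ∑ j, signVec b i * A i j * signVec b j) ∧
    (0 ≤ sSup ((fun C' ↦ trace (A * C')) '' elliptope n)) ∧
    sSup ((fun C' ↦ trace (A * C')) '' elliptope n)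
      ≤ 6 * log n *
        ⨆ b : Fin n → Bool, ∑ i, ∑ j, signVec b i * A i j * signVec b j := by
  have hbound : ∀ t ∈ (fun C' ↦ trace (A * C')) '' elliptope n, t ≤ 6 * log n *
      ⨆ b : Fin n → Bool, ∑ i, ∑ j, signVec b i * A i j * signVec b j :=
    Set.forall_mem_image.2 fun _ hK ↦ trace_mul_le_of_mem_elliptope hn hA hK
  have hone := Set.mem_image_of_mem (fun C' ↦ trace (A * C')) (one_mem_elliptope n)
  refine ⟨nonneg_of_forall_sign_dotProduct_mulVec_le hA fun _ ↦ dotProduct_mulVec_le_iSup_signVec A,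
    ?_, csSup_le ⟨_, hone⟩ hbound⟩
  calc 0 ≤ trace (A * 1) := by
        rw [mul_one]
        exact sum_nonneg fun i _ ↦ hA i
    _ ≤ sSup ((fun C' ↦ trace (A * C')) '' elliptope n) := le_csSup ⟨_, hbound⟩ hone

/-- **Grothendieck-type inequality for the elliptope relaxation.** There is an absolute
constant `C > 0` such that for every `n ≥ 2` and every symmetric `A ∈ ℝ^{n×n}` with zero
diagonal, `max_{C' ∈ ℰ_n} ⟨A, C'⟩ ≤ C (log n) max_{σ ∈ {−1,1}^n} ⟨σ, Aσ⟩`, both sides being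
non-negative. -/
theorem grothendieck_log_n_approximation :
    ∃ C : ℝ, 0 < C ∧ ∀ n : ℕ, 2 ≤ n → ∀ A : Matrix (Fin n) (Fin n) ℝ,
      A.IsSymm → (∀ i, A i i = 0) →
      (0 ≤ ⨆ b : Fin n → Bool, ∑ i, ∑ j, signVec b i * A i j * signVec b j) ∧
      (0 ≤ sSup ((fun C' => Matrix.trace (A * C')) '' elliptope n)) ∧
      sSup ((fun C' => Matrix.trace (A * C')) '' elliptope n)
        ≤ C * Real.log n *
          ⨆ b : Fin n → Bool, ∑ i, ∑ j, signVec b i * A i j * signVec b j := by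
  exact ⟨6, by norm_num, fun n hn A _ hdiag ↦
    grothendieck_log_n_approximation_general hn fun i ↦ (hdiag i).ge⟩

end
end

section
/- Let A_n ~ GOE(n) for each n. Then (1/(2n)) max_{C ∈ ℰ_n} ⟨A_n, C⟩ converges to 1 in probability as n → ∞, i.e., for every ε > 0, P(|(1/(2n)) max_{C ∈ ℰ_n} ⟨A_n, C⟩ − 1| > ε) → 0. -/
open MeasureTheory ProbabilityTheory Filter
open scoped NNReal ENNReal

noncomputable section

/-!
Deleting the first row and column of a spiked matrix `A + s u uᵀ`, with the unit vector `u` rotated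
to the first basis vector, leaves by the Schur complement at level `a` a GOE matrix of one dimension
less with a spike of size close to `1 / (a - s)`, and one eigenvalue above `a` is split off exactly
when `s > a`. For `a = 2 + ε` the map `s ↦ 1 / (a - s)` preserves `s ≤ 1`, so starting from `s = 0`
no eigenvalue exceeds `a`. For `a = 2 - ε` it has no fixed point and its orbits cross `a` once in a
bounded number of steps. Running it for a small fraction of the rows, while the squared length of
the deleted column is still close to `1`, yields linearly many eigenvalues above `a`.

The first bound gives `⟨A, C⟩ ≤ (2 + ε) n` on the elliptope. Conversely, the positive part `M` of
`A - a` satisfies `⟨A, M⟩ ≥ a tr M`, where `tr M` is of order `n` by the second bound. Since the law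
of `M` is invariant under rotations, its diagonal is nearly constant: a rotation by 45 degrees makes
`M i i - M j j` as small as an off-diagonal entry. Hence `M` rescaled to trace `n` is close to a
point of the elliptope, obtained by normalising the columns of a square root.
-/

open scoped Matrix MatrixOrder

section Vectors

variable {ι : Type*} [Fintype ι]

lemma dotProduct_self_nonneg (v : ι → ℝ) : 0 ≤ v ⬝ᵥ v :=
  Finset.sum_nonneg fun i _ ↦ mul_self_nonneg (v i)

lemma exists_unit_smul [Nonempty ι] (v : ι → ℝ) :
    ∃ u : ι → ℝ, u ⬝ᵥ u = 1 ∧ √(v ⬝ᵥ v) • u = v := by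
  classical
  rcases eq_or_ne v 0 with rfl | hv
  · obtain ⟨i⟩ := ‹Nonempty ι›
    exact ⟨Pi.single i 1, by simp, by simp⟩
  · have hpos : 0 < v ⬝ᵥ v :=
      (dotProduct_self_nonneg v).lt_of_ne' fun h ↦ hv (dotProduct_self_eq_zero.1 h)
    refine ⟨(√(v ⬝ᵥ v))⁻¹ • v, ?_, smul_inv_smul₀ (Real.sqrt_pos.2 hpos).ne' v⟩
    rw [smul_dotProduct, dotProduct_smul, smul_smul, ← sq, inv_pow, Real.sq_sqrt hpos.le,
      smul_eq_mul, inv_mul_cancel₀ hpos.ne']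

lemma exists_unit_vecMulVec_self_eq_smul [Nonempty ι] (v : ι → ℝ) :
    ∃ u : ι → ℝ, u ⬝ᵥ u = 1 ∧ Matrix.vecMulVec v v = (v ⬝ᵥ v) • Matrix.vecMulVec u u := by
  obtain ⟨u, hu, huv⟩ := exists_unit_smul v
  refine ⟨u, hu, ?_⟩
  have h : Matrix.vecMulVec (√(v ⬝ᵥ v) • u) (√(v ⬝ᵥ v) • u) =
      (v ⬝ᵥ v) • Matrix.vecMulVec u u := by
    rw [Matrix.smul_vecMulVec, Matrix.vecMulVec_smul, smul_smul,
      Real.mul_self_sqrt (dotProduct_self_nonneg v)]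
  rwa [huv] at h

lemma conj_vecMulVec (O : Matrix ι ι ℝ) (u : ι → ℝ) :
    O * Matrix.vecMulVec u u * Oᵀ = Matrix.vecMulVec (O *ᵥ u) (O *ᵥ u) := by
  rw [Matrix.mul_vecMulVec, Matrix.vecMulVec_mul, Matrix.vecMul_transpose]

end Vectors

section Orthogonal

variable {ι : Type*} [Fintype ι] [DecidableEq ι] {O : Matrix ι ι ℝ}

lemma transpose_mem_orthogonalGroup (hO : O ∈ Matrix.orthogonalGroup ι ℝ) :
    Oᵀ ∈ Matrix.orthogonalGroup ι ℝ := by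
  rwa [Matrix.mem_orthogonalGroup_iff', Matrix.transpose_transpose,
    ← Matrix.mem_orthogonalGroup_iff]

lemma transpose_conj_conj (hO : O ∈ Matrix.orthogonalGroup ι ℝ) (B : Matrix ι ι ℝ) :
    Oᵀ * (O * B * Oᵀ) * O = B := by
  have h := (Matrix.mem_orthogonalGroup_iff' ι ℝ).1 hO
  calc Oᵀ * (O * B * Oᵀ) * O = (Oᵀ * O) * B * (Oᵀ * O) := by simp only [Matrix.mul_assoc]
    _ = B := by rw [h, Matrix.one_mul, Matrix.mul_one]

lemma conj_mul_conj (hO : O ∈ Matrix.orthogonalGroup ι ℝ) (A B : Matrix ι ι ℝ) :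
    (O * A * Oᵀ) * (O * B * Oᵀ) = O * (A * B) * Oᵀ := by
  calc (O * A * Oᵀ) * (O * B * Oᵀ) = O * A * (Oᵀ * O) * B * Oᵀ := by simp only [Matrix.mul_assoc]
    _ = O * (A * B) * Oᵀ := by
      rw [(Matrix.mem_orthogonalGroup_iff' ι ℝ).1 hO, Matrix.mul_one, Matrix.mul_assoc O]

lemma trace_conj (hO : O ∈ Matrix.orthogonalGroup ι ℝ) (B : Matrix ι ι ℝ) :
    (O * B * Oᵀ).trace = B.trace := by
  rw [Matrix.trace_mul_comm, ← Matrix.mul_assoc, (Matrix.mem_orthogonalGroup_iff' ι ℝ).1 hO,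
    Matrix.one_mul]

lemma mulVec_dotProduct_mulVec (hO : O ∈ Matrix.orthogonalGroup ι ℝ) (x y : ι → ℝ) :
    (O *ᵥ x) ⬝ᵥ (O *ᵥ y) = x ⬝ᵥ y := by
  rw [Matrix.dotProduct_mulVec, Matrix.vecMul_mulVec, (Matrix.mem_orthogonalGroup_iff' ι ℝ).1 hO,
    Matrix.vecMul_one]

lemma conj_mulVec_mulVec (hO : O ∈ Matrix.orthogonalGroup ι ℝ) (B : Matrix ι ι ℝ) (x : ι → ℝ) :
    (O * B * Oᵀ) *ᵥ (O *ᵥ x) = O *ᵥ (B *ᵥ x) := by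
  rw [Matrix.mulVec_mulVec, Matrix.mul_assoc, (Matrix.mem_orthogonalGroup_iff' ι ℝ).1 hO,
    Matrix.mul_one, Matrix.mulVec_mulVec]

lemma exists_orthogonal_row_eq (s : Set ι) (v : ι → ι → ℝ)
    (hv : ∀ i ∈ s, ∀ j ∈ s, v i ⬝ᵥ v j = if i = j then 1 else 0) :
    ∃ O ∈ Matrix.orthogonalGroup ι ℝ, ∀ i ∈ s, O i = v i := by
  let w : ι → EuclideanSpace ℝ ι := fun i ↦ WithLp.toLp 2 (v i)
  have hw : Orthonormal ℝ (s.domRestrict w) := by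
    rw [orthonormal_iff_ite]
    rintro ⟨i, hi⟩ ⟨j, hj⟩
    simpa [w, PiLp.inner_apply, dotProduct, mul_comm] using hv i hi j hj
  obtain ⟨b, hb⟩ := hw.exists_orthonormalBasis_extension_of_card_eq (by simp)
  refine ⟨Matrix.of fun i ↦ (b i).ofLp, ?_, fun i hi ↦ ?_⟩
  · rw [Matrix.mem_orthogonalGroup_iff]
    ext i j
    rw [Matrix.one_apply, ← orthonormal_iff_ite.1 b.orthonormal i j]
    simp [Matrix.mul_apply, PiLp.inner_apply, mul_comm]
  · exact congrArg WithLp.ofLp (hb i hi)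

lemma exists_orthogonal_mulVec_eq_single {u : ι → ℝ} (hu : u ⬝ᵥ u = 1) (i : ι) :
    ∃ O ∈ Matrix.orthogonalGroup ι ℝ, O *ᵥ u = Pi.single i 1 := by
  obtain ⟨O, hO, hOi⟩ := exists_orthogonal_row_eq {i} (fun _ ↦ u) (by
    rintro _ rfl _ rfl
    simpa using hu)
  refine ⟨O, hO, funext fun j ↦ ?_⟩
  have h := congrFun₂ ((Matrix.mem_orthogonalGroup_iff ι ℝ).1 hO) j i
  rw [Matrix.mul_apply'] at h
  simp only [Matrix.transpose_apply, hOi i rfl] at h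
  simpa [Matrix.mulVec, Matrix.one_apply, Pi.single_apply] using h

end Orthogonal

section EigenvaluesAbove

variable {ι : Type*} [Fintype ι] {m : ℕ} {t : ℝ} {A B : Matrix ι ι ℝ}

lemma mul_dotProduct_lt_smul_iff {c : ℝ} (hc : c ≠ 0) (x : ι → ℝ) :
    t * ((c • x) ⬝ᵥ (c • x)) < (c • x) ⬝ᵥ B *ᵥ (c • x) ↔ t * (x ⬝ᵥ x) < x ⬝ᵥ B *ᵥ x := by
  simp only [Matrix.mulVec_smul, smul_dotProduct, dotProduct_smul, smul_eq_mul]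
  rw [← mul_assoc c c, ← mul_assoc c c, mul_left_comm, mul_lt_mul_iff_right₀ (mul_self_pos.2 hc)]

/-- `EigenvaluesAbove m t B` says that the quadratic form of `B - t` is positive definite on an
`m`-dimensional subspace, given by an (automatically injective) parametrisation. For symmetric `B`
this means that at least `m` eigenvalues, with multiplicity, exceed `t`. -/
def EigenvaluesAbove (m : ℕ) (t : ℝ) (B : Matrix ι ι ℝ) : Prop :=
  ∃ L : (Fin m → ℝ) →ₗ[ℝ] (ι → ℝ), ∀ y ≠ 0, t * (L y ⬝ᵥ L y) < L y ⬝ᵥ B *ᵥ L y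

namespace EigenvaluesAbove

lemma zero (t : ℝ) (B : Matrix ι ι ℝ) : EigenvaluesAbove 0 t B :=
  ⟨0, fun y hy ↦ absurd (Subsingleton.elim y 0) hy⟩

lemma mono (h : ∀ x, x ⬝ᵥ A *ᵥ x ≤ x ⬝ᵥ B *ᵥ x) (hA : EigenvaluesAbove m t A) :
    EigenvaluesAbove m t B :=
  let ⟨L, hL⟩ := hA
  ⟨L, fun y hy ↦ (hL y hy).trans_le (h _)⟩

lemma add_smul_vecMulVec_mono {c d : ℝ} (hcd : c ≤ d) (v : ι → ℝ)
    (h : EigenvaluesAbove m t (A + c • Matrix.vecMulVec v v)) :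
    EigenvaluesAbove m t (A + d • Matrix.vecMulVec v v) := by
  refine h.mono fun x ↦ ?_
  simp only [Matrix.add_mulVec, dotProduct_add, Matrix.smul_mulVec, Matrix.vecMulVec_mulVec,
    dotProduct_smul, op_smul_eq_smul, smul_eq_mul, dotProduct_comm x v]
  gcongr
  exact mul_self_nonneg _

lemma one_iff : EigenvaluesAbove 1 t B ↔ ∃ x, t * (x ⬝ᵥ x) < x ⬝ᵥ B *ᵥ x := by
  refine ⟨fun ⟨L, hL⟩ ↦ ⟨L 1, hL 1 one_ne_zero⟩, fun ⟨x, hx⟩ ↦ ?_⟩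
  refine ⟨(LinearMap.proj 0 : (Fin 1 → ℝ) →ₗ[ℝ] ℝ).smulRight x, fun y hy ↦ ?_⟩
  have hy0 : y 0 ≠ 0 := fun h0 ↦ hy (funext fun i ↦ by rwa [Subsingleton.elim i 0])
  exact (mul_dotProduct_lt_smul_iff hy0 x).2 hx

lemma conj_iff [DecidableEq ι] {O : Matrix ι ι ℝ} (hO : O ∈ Matrix.orthogonalGroup ι ℝ) :
    EigenvaluesAbove m t (O * B * Oᵀ) ↔ EigenvaluesAbove m t B := by
  have conj {Q : Matrix ι ι ℝ} (hQ : Q ∈ Matrix.orthogonalGroup ι ℝ) {C : Matrix ι ι ℝ} :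
      EigenvaluesAbove m t C → EigenvaluesAbove m t (Q * C * Qᵀ) := fun ⟨L, hL⟩ ↦
    ⟨Q.mulVecLin.comp L, fun y hy ↦ by
      simpa only [LinearMap.comp_apply, Matrix.mulVecLin_apply, conj_mulVec_mulVec hQ,
        mulVec_dotProduct_mulVec hQ] using hL y hy⟩
  refine ⟨fun h ↦ ?_, conj hO⟩
  simpa only [Matrix.transpose_transpose, transpose_conj_conj hO] using
    conj (transpose_mem_orthogonalGroup hO) h

end EigenvaluesAbove

lemma isOpen_setOf_eigenvaluesAbove (m : ℕ) (t : ℝ) :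
    IsOpen {B : Matrix ι ι ℝ | EigenvaluesAbove m t B} := by
  have h_union : {B : Matrix ι ι ℝ | EigenvaluesAbove m t B} =
      ⋃ L : (Fin m → ℝ) →ₗ[ℝ] (ι → ℝ), {B | ∀ y ∈ Metric.sphere (0 : Fin m → ℝ) 1,
        t * (L y ⬝ᵥ L y) < L y ⬝ᵥ B *ᵥ L y} := by
    ext B
    simp only [EigenvaluesAbove, Set.mem_iUnion, Set.mem_ofPred_eq]
    refine exists_congr fun L ↦ ⟨fun h y hy ↦ h y ?_, fun h y hy ↦ ?_⟩
    · rintro rfl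
      simp at hy
    · rw [← mul_dotProduct_lt_smul_iff (inv_ne_zero (norm_ne_zero_iff.2 hy)) (L y), ← map_smul]
      exact h _ (by simp [norm_smul, hy])
  rw [h_union]
  refine isOpen_iUnion fun L ↦ isOpen_iff_mem_nhds.2 fun B hB ↦ ?_
  have hL : Continuous L := L.continuous_of_finiteDimensional
  refine (isCompact_sphere (0 : Fin m → ℝ) 1).eventually_forall_of_forall_eventually fun y hy ↦ ?_
  exact (isOpen_lt (by fun_prop) (by fun_prop)).mem_nhds (hB y hy)

end EigenvaluesAbove

section Bordered

variable {n m : ℕ} {g t : ℝ} {b : Fin n → ℝ} {G : Matrix (Fin n) (Fin n) ℝ}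

/-- The symmetric extension of `G` by a first row and column with corner `g` and remaining
entries `b`. -/
def bordered (g : ℝ) (b : Fin n → ℝ) (G : Matrix (Fin n) (Fin n) ℝ) :
    Matrix (Fin (n + 1)) (Fin (n + 1)) ℝ :=
  Matrix.of (Fin.cons (Fin.cons g b) fun i ↦ Fin.cons (b i) (G i))

lemma bordered_add_smul_vecMulVec_single (g s : ℝ) (b : Fin n → ℝ)
    (G : Matrix (Fin n) (Fin n) ℝ) :
    bordered g b G + s • Matrix.vecMulVec (Pi.single 0 1) (Pi.single 0 1) =
      bordered (g + s) b G := by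
  ext i j
  refine Fin.cases ?_ (fun i ↦ ?_) i <;> refine Fin.cases ?_ (fun j ↦ ?_) j <;>
    simp [bordered, Matrix.vecMulVec_apply]

lemma cons_dotProduct_bordered_mulVec_cons (g : ℝ) (b : Fin n → ℝ)
    (G : Matrix (Fin n) (Fin n) ℝ) (x₀ : ℝ) (x : Fin n → ℝ) :
    (Fin.cons x₀ x : Fin (n + 1) → ℝ) ⬝ᵥ bordered g b G *ᵥ Fin.cons x₀ x =
      g * x₀ ^ 2 + 2 * x₀ * (b ⬝ᵥ x) + x ⬝ᵥ G *ᵥ x := by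
  have h_zero : (bordered g b G *ᵥ Fin.cons x₀ x) 0 = g * x₀ + b ⬝ᵥ x := by
    simp [bordered, Matrix.mulVec, dotProduct, Fin.sum_univ_succ]
  have h_succ (i : Fin n) : (bordered g b G *ᵥ Fin.cons x₀ x) i.succ = b i * x₀ + (G *ᵥ x) i := by
    simp [bordered, Matrix.mulVec, dotProduct, Fin.sum_univ_succ]
  simp only [dotProduct, Fin.sum_univ_succ, h_zero, h_succ, Fin.cons_zero, Fin.cons_succ, mul_add,
    Finset.sum_add_distrib, ← mul_assoc, mul_comm (x _) (b _), ← Finset.sum_mul]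
  ring

lemma bordered_schur_identity (hd : t - g ≠ 0) (b : Fin n → ℝ) (G : Matrix (Fin n) (Fin n) ℝ)
    (x₀ : ℝ) (x : Fin n → ℝ) :
    (Fin.cons x₀ x : Fin (n + 1) → ℝ) ⬝ᵥ bordered g b G *ᵥ Fin.cons x₀ x -
        t * ((Fin.cons x₀ x : Fin (n + 1) → ℝ) ⬝ᵥ Fin.cons x₀ x) =
      -(t - g) * (x₀ - (t - g)⁻¹ * (b ⬝ᵥ x)) ^ 2 +
        (x ⬝ᵥ (G + (t - g)⁻¹ • Matrix.vecMulVec b b) *ᵥ x - t * (x ⬝ᵥ x)) := by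
  have h_norm : (Fin.cons x₀ x : Fin (n + 1) → ℝ) ⬝ᵥ Fin.cons x₀ x = x₀ * x₀ + x ⬝ᵥ x := by
    simp [dotProduct, Fin.sum_univ_succ]
  rw [cons_dotProduct_bordered_mulVec_cons, h_norm]
  simp only [Matrix.add_mulVec, dotProduct_add, Matrix.smul_mulVec, Matrix.vecMulVec_mulVec,
    dotProduct_smul, op_smul_eq_smul, smul_eq_mul, dotProduct_comm x b]
  field_simp
  ring

/-- The linear map `x ↦ (f x, L x)` with values in vectors of length `n + 1`. -/
def consLinear {E : Type*} [AddCommGroup E] [Module ℝ E] (f : E →ₗ[ℝ] ℝ)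
    (L : E →ₗ[ℝ] (Fin n → ℝ)) : E →ₗ[ℝ] (Fin (n + 1) → ℝ) :=
  LinearMap.pi (Fin.cons f fun i ↦ LinearMap.proj i ∘ₗ L)

lemma consLinear_apply {E : Type*} [AddCommGroup E] [Module ℝ E] (f : E →ₗ[ℝ] ℝ)
    (L : E →ₗ[ℝ] (Fin n → ℝ)) (x : E) : consLinear f L x = Fin.cons (f x) (L x) := by
  ext i
  refine Fin.cases ?_ (fun i ↦ ?_) i <;> simp [consLinear]

lemma EigenvaluesAbove.bordered (hd : t - g ≠ 0)
    (h : EigenvaluesAbove m t (G + (t - g)⁻¹ • Matrix.vecMulVec b b)) :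
    EigenvaluesAbove m t (bordered g b G) := by
  obtain ⟨L, hL⟩ := h
  refine ⟨consLinear ((t - g)⁻¹ • (dotProductBilin ℝ ℝ b) ∘ₗ L) L, fun y hy ↦ ?_⟩
  rw [consLinear_apply, ← sub_pos, bordered_schur_identity hd]
  simpa using hL y hy

lemma EigenvaluesAbove.bordered_succ (hd : t - g < 0)
    (h : EigenvaluesAbove m t (G + (t - g)⁻¹ • Matrix.vecMulVec b b)) :
    EigenvaluesAbove (m + 1) t (_root_.bordered g b G) := by
  obtain ⟨L, hL⟩ := h
  let tail : (Fin (m + 1) → ℝ) →ₗ[ℝ] (Fin m → ℝ) := LinearMap.funLeft ℝ ℝ Fin.succ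
  refine ⟨consLinear (LinearMap.proj 0 + (t - g)⁻¹ • (dotProductBilin ℝ ℝ b) ∘ₗ L ∘ₗ tail)
    (L ∘ₗ tail), fun y hy ↦ ?_⟩
  rw [consLinear_apply, ← sub_pos, bordered_schur_identity hd.ne]
  simp only [LinearMap.add_apply, LinearMap.proj_apply, LinearMap.smul_apply, LinearMap.comp_apply,
    smul_eq_mul, dotProductBilin_apply_apply, add_sub_cancel_right]
  have h_head : 0 ≤ -(t - g) * y 0 ^ 2 := mul_nonneg (neg_nonneg.2 hd.le) (sq_nonneg _)
  rcases eq_or_ne (tail y) 0 with h_tail | h_tail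
  · have hy0 : y 0 ≠ 0 := fun h0 ↦ hy (funext (Fin.cases h0 (congrFun h_tail)))
    have : 0 < -(t - g) * y 0 ^ 2 := mul_pos (neg_pos.2 hd) (by positivity)
    simpa [h_tail] using this
  · linarith [hL _ h_tail]

lemma EigenvaluesAbove.of_bordered (hd : 0 < t - g)
    (h : EigenvaluesAbove 1 t (_root_.bordered g b G)) :
    EigenvaluesAbove 1 t (G + (t - g)⁻¹ • Matrix.vecMulVec b b) := by
  rw [EigenvaluesAbove.one_iff] at *
  obtain ⟨x, hx⟩ := h
  refine ⟨Fin.tail x, ?_⟩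
  have h_schur := bordered_schur_identity hd.ne' b G (x 0) (Fin.tail x)
  rw [Fin.cons_self_tail] at h_schur
  nlinarith [mul_nonneg hd.le (sq_nonneg (x 0 - (t - g)⁻¹ * (b ⬝ᵥ Fin.tail x)))]

end Bordered

section GOECharFun

variable {ι κ : Type*}

instance : MeasurableSpace (Matrix ι κ ℝ) := MeasurableSpace.pi

instance [Countable ι] [Countable κ] : BorelSpace (Matrix ι κ ℝ) :=
  inferInstanceAs (BorelSpace (ι → κ → ℝ))

variable [Fintype ι]

/-- `ρ` is the law of a symmetric matrix with independent centred Gaussian entries, of variance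
`2 v` on the diagonal and `v` off it, as expressed by its characteristic function. -/
def HasGOECharFun (v : ℝ≥0) (ρ : Measure (Matrix ι ι ℝ)) : Prop :=
  ∀ T : Matrix ι ι ℝ, ∫ G, Complex.exp (((Tᵀ * G).trace : ℝ) * Complex.I) ∂ρ =
    Complex.exp (-(v / 4 * ((T + Tᵀ) * (T + Tᵀ)).trace : ℝ))

lemma trace_transpose_mul [Fintype κ] (M N : Matrix κ ι ℝ) :
    (Mᵀ * N).trace = ∑ i, ∑ j, M i j * N i j := by
  simp only [Matrix.trace, Matrix.diag, Matrix.mul_apply, Matrix.transpose_apply]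
  exact Finset.sum_comm

lemma exists_eq_trace_transpose_mul (L : Matrix ι ι ℝ →ₗ[ℝ] ℝ) :
    ∃ T : Matrix ι ι ℝ, ∀ G, L G = (Tᵀ * G).trace := by
  classical
  refine ⟨Matrix.of fun i j ↦ L (Matrix.single i j 1), fun G ↦ ?_⟩
  have h_single (i j : ι) : Matrix.single i j (G i j) = G i j • Matrix.single i j (1 : ℝ) := by
    rw [Matrix.smul_single, smul_eq_mul, mul_one]
  nth_rw 1 [Matrix.matrix_eq_sum_single G]
  simp only [trace_transpose_mul, map_sum, Matrix.of_apply, h_single, map_smul, smul_eq_mul,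
    mul_comm]

lemma trace_add_transpose_sq (T : Matrix ι ι ℝ) :
    ((T + Tᵀ) * (T + Tᵀ)).trace = ∑ i, ∑ j, (T i j + T j i) ^ 2 := by
  have h : (T + Tᵀ)ᵀ = T + Tᵀ := by
    rw [Matrix.transpose_add, Matrix.transpose_transpose, add_comm]
  rw [← congrArg (· * (T + Tᵀ)) h, trace_transpose_mul]
  simp only [Matrix.add_apply, Matrix.transpose_apply, sq]

namespace HasGOECharFun

variable {v : ℝ≥0} {ρ ρ' : Measure (Matrix ι ι ℝ)}

lemma unique [IsFiniteMeasure ρ] [IsFiniteMeasure ρ'] (h : HasGOECharFun v ρ)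
    (h' : HasGOECharFun v ρ') : ρ = ρ' := by
  -- `Matrix ι ι ℝ` carries no global norm, so uniqueness is quoted on the function space.
  have hρ : IsFiniteMeasure (α := ι → ι → ℝ) ρ := ‹_›
  have hρ' : IsFiniteMeasure (α := ι → ι → ℝ) ρ' := ‹_›
  refine Measure.ext_of_charFunDual (E := ι → ι → ℝ) (funext fun L ↦ ?_)
  obtain ⟨T, hT⟩ := exists_eq_trace_transpose_mul (L : (ι → ι → ℝ) →ₗ[ℝ] ℝ)
  have hL (σ : Measure (Matrix ι ι ℝ)) : charFunDual (E := ι → ι → ℝ) σ L =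
      ∫ G, Complex.exp (((Tᵀ * G).trace : ℝ) * Complex.I) ∂σ :=
    (charFunDual_apply (E := ι → ι → ℝ) L).trans <| integral_congr_ae <| .of_forall fun G ↦
      congrArg (fun r : ℝ ↦ Complex.exp (r * Complex.I)) (hT G)
  exact (hL ρ).trans ((h T).trans ((h' T).symm.trans (hL ρ').symm))

lemma map_conj [DecidableEq ι] (h : HasGOECharFun v ρ) {O : Matrix ι ι ℝ}
    (hO : O ∈ Matrix.orthogonalGroup ι ℝ) : HasGOECharFun v (ρ.map fun G ↦ O * G * Oᵀ) := by
  intro T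
  have h_trace (G : Matrix ι ι ℝ) : (Tᵀ * (O * G * Oᵀ)).trace = ((Oᵀ * T * O)ᵀ * G).trace := by
    rw [← Matrix.mul_assoc, Matrix.trace_mul_comm]
    simp only [Matrix.transpose_mul, Matrix.transpose_transpose, Matrix.mul_assoc]
  have h_symm : Oᵀ * T * O + (Oᵀ * T * O)ᵀ = Oᵀ * (T + Tᵀ) * O := by
    simp only [Matrix.transpose_mul, Matrix.transpose_transpose, Matrix.mul_add, Matrix.add_mul,
      Matrix.mul_assoc]
  have h_sq : ((Oᵀ * (T + Tᵀ) * O) * (Oᵀ * (T + Tᵀ) * O)).trace =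
      ((T + Tᵀ) * (T + Tᵀ)).trace := by
    have hO' := transpose_mem_orthogonalGroup hO
    have h := trace_conj hO' ((T + Tᵀ) * (T + Tᵀ))
    rwa [← conj_mul_conj hO', Matrix.transpose_transpose] at h
  rw [integral_map (by fun_prop) (Continuous.aestronglyMeasurable (by fun_prop))]
  simp only [h_trace]
  rw [h, h_symm, h_sq]

lemma map_neg (h : HasGOECharFun v ρ) : HasGOECharFun v (ρ.map fun G ↦ -G) := by
  intro T
  have h_trace (G : Matrix ι ι ℝ) : (Tᵀ * -G).trace = ((-T)ᵀ * G).trace := by simp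
  have h_symm : -T + (-T)ᵀ = -(T + Tᵀ) := by
    rw [Matrix.transpose_neg, neg_add]
  rw [integral_map (by fun_prop) (Continuous.aestronglyMeasurable (by fun_prop))]
  simp only [h_trace]
  rw [h, h_symm, neg_mul_neg]

end HasGOECharFun

end GOECharFun

section GOELaw

lemma integral_cexp_gaussianReal (v : ℝ≥0) (t : ℝ) :
    ∫ x, Complex.exp ((t * x : ℝ) * Complex.I) ∂gaussianReal 0 v =
      Complex.exp (-(v * t ^ 2 / 2 : ℝ)) := by
  have h := charFun_gaussianReal (μ := 0) (v := v) t
  rw [charFun_apply_real] at h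
  push_cast
  rw [h]
  congr 1
  push_cast
  ring

lemma integral_cexp_pi_gaussianReal {ι : Type*} [Fintype ι] (v : ℝ≥0) (t : ι → ℝ) :
    ∫ x, Complex.exp ((t ⬝ᵥ x : ℝ) * Complex.I) ∂Measure.pi (fun _ : ι ↦ gaussianReal 0 v) =
      Complex.exp (-(v * (t ⬝ᵥ t) / 2 : ℝ)) := by
  have h_prod (x : ι → ℝ) : Complex.exp ((t ⬝ᵥ x : ℝ) * Complex.I) =
      ∏ i, Complex.exp ((t i * x i : ℝ) * Complex.I) := by
    rw [← Complex.exp_sum, ← Finset.sum_mul, dotProduct, Complex.ofReal_sum]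
  simp_rw [h_prod]
  rw [integral_fintype_prod_eq_prod (f := fun i (x : ℝ) ↦ Complex.exp ((t i * x : ℝ) * Complex.I))]
  simp_rw [integral_cexp_gaussianReal]
  rw [← Complex.exp_sum, Finset.sum_neg_distrib, ← Complex.ofReal_sum]
  simp only [dotProduct, Finset.mul_sum, Finset.sum_div, sq]

/-- The law of the first row of a symmetric matrix with independent centred Gaussian entries, of
variance `2 v` on the diagonal and `v` off it: the corner and the `n` remaining entries. -/
def borderLaw (v : ℝ≥0) (n : ℕ) : Measure (ℝ × (Fin n → ℝ)) :=
  (gaussianReal 0 (2 * v)).prod (Measure.pi fun _ ↦ gaussianReal 0 v)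

instance (v : ℝ≥0) (n : ℕ) : IsProbabilityMeasure (borderLaw v n) :=
  inferInstanceAs (IsProbabilityMeasure (Measure.prod _ _))

lemma integral_cexp_borderLaw (v : ℝ≥0) {n : ℕ} (r : ℝ) (t : Fin n → ℝ) :
    ∫ p, Complex.exp ((r * p.1 + t ⬝ᵥ p.2 : ℝ) * Complex.I) ∂borderLaw v n =
      Complex.exp (-(v * r ^ 2 + v * (t ⬝ᵥ t) / 2 : ℝ)) := by
  simp only [Complex.ofReal_add (r * _), add_mul _ _ Complex.I, Complex.exp_add]
  rw [borderLaw, integral_prod_mul (f := fun g : ℝ ↦ Complex.exp ((r * g : ℝ) * Complex.I))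
      (g := fun b : Fin n → ℝ ↦ Complex.exp ((t ⬝ᵥ b : ℝ) * Complex.I)),
    integral_cexp_gaussianReal, integral_cexp_pi_gaussianReal, ← Complex.exp_add]
  congr 1
  push_cast
  ring

/-- The law of an `n × n` symmetric matrix with independent centred Gaussian entries of variance
`2 v` on the diagonal and `v` off it, built by bordering; `GOE(n)` is the case `v = 1 / n`. -/
def goe (v : ℝ≥0) : (n : ℕ) → Measure (Matrix (Fin n) (Fin n) ℝ)
  | 0 => Measure.dirac 0
  | n + 1 => ((borderLaw v n).prod (goe v n)).map fun p ↦ bordered p.1.1 p.1.2 p.2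

lemma measurable_bordered (n : ℕ) :
    Measurable fun p : (ℝ × (Fin n → ℝ)) × Matrix (Fin n) (Fin n) ℝ ↦
      bordered p.1.1 p.1.2 p.2 := by
  refine Continuous.measurable (continuous_matrix fun i j ↦ ?_)
  refine Fin.cases ?_ (fun i ↦ ?_) i <;> refine Fin.cases ?_ (fun j ↦ ?_) j <;>
    simp only [bordered, Matrix.of_apply, Fin.cons_zero, Fin.cons_succ] <;> fun_prop

instance (v : ℝ≥0) (n : ℕ) : IsProbabilityMeasure (goe v n) := by
  induction n with
  | zero => exact inferInstanceAs (IsProbabilityMeasure (Measure.dirac _))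
  | succ n ih => exact Measure.isProbabilityMeasure_map (measurable_bordered n).aemeasurable

section Succ

variable {n : ℕ} (T : Matrix (Fin (n + 1)) (Fin (n + 1)) ℝ)

lemma trace_transpose_mul_bordered (g : ℝ) (b : Fin n → ℝ) (G : Matrix (Fin n) (Fin n) ℝ) :
    (Tᵀ * bordered g b G).trace = T 0 0 * g + (fun i : Fin n ↦ T 0 i.succ + T i.succ 0) ⬝ᵥ b +
      ((T.submatrix Fin.succ Fin.succ)ᵀ * G).trace := by
  simp only [trace_transpose_mul, bordered, dotProduct, Matrix.of_apply, Matrix.submatrix_apply,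
    Fin.sum_univ_succ, Fin.cons_zero, Fin.cons_succ, Finset.sum_add_distrib, add_mul]
  ring

lemma trace_add_transpose_sq_succ :
    ((T + Tᵀ) * (T + Tᵀ)).trace = 4 * T 0 0 ^ 2 +
      (2 * ((fun i : Fin n ↦ T 0 i.succ + T i.succ 0) ⬝ᵥ fun i ↦ T 0 i.succ + T i.succ 0) +
        ((T.submatrix Fin.succ Fin.succ + (T.submatrix Fin.succ Fin.succ)ᵀ) *
          (T.submatrix Fin.succ Fin.succ + (T.submatrix Fin.succ Fin.succ)ᵀ)).trace) := by
  rw [trace_add_transpose_sq, trace_add_transpose_sq]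
  simp only [dotProduct, Fin.sum_univ_succ, Finset.sum_add_distrib, Matrix.submatrix_apply,
    add_comm (T (Fin.succ _) 0), sq]
  ring

end Succ

lemma hasGOECharFun_goe (v : ℝ≥0) (n : ℕ) : HasGOECharFun v (goe v n) := by
  induction n with
  | zero =>
    intro T
    simp [goe, Matrix.trace]
  | succ n ih =>
    intro T
    rw [trace_add_transpose_sq_succ, goe, integral_map (measurable_bordered n).aemeasurable
      (Continuous.aestronglyMeasurable (by fun_prop))]
    simp only [trace_transpose_mul_bordered, Complex.ofReal_add (_ + _ ⬝ᵥ _),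
      add_mul _ _ Complex.I, Complex.exp_add]
    rw [integral_prod_mul (f := fun p : ℝ × (Fin n → ℝ) ↦ Complex.exp
          ((T 0 0 * p.1 + (fun i : Fin n ↦ T 0 i.succ + T i.succ 0) ⬝ᵥ p.2 : ℝ) * Complex.I))
        (g := fun G : Matrix (Fin n) (Fin n) ℝ ↦
          Complex.exp ((((T.submatrix Fin.succ Fin.succ)ᵀ * G).trace : ℝ) * Complex.I)),
      ih, integral_cexp_borderLaw, ← Complex.exp_add]
    congr 1
    push_cast
    ring

lemma goe_map_conj (v : ℝ≥0) {n : ℕ} {O : Matrix (Fin n) (Fin n) ℝ}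
    (hO : O ∈ Matrix.orthogonalGroup (Fin n) ℝ) :
    (goe v n).map (fun G ↦ O * G * Oᵀ) = goe v n :=
  ((hasGOECharFun_goe v n).map_conj hO).unique (hasGOECharFun_goe v n)

lemma goe_map_neg (v : ℝ≥0) (n : ℕ) : (goe v n).map (fun G ↦ -G) = goe v n :=
  (hasGOECharFun_goe v n).map_neg.unique (hasGOECharFun_goe v n)

section Symmetric

variable {n : ℕ}

lemma sum_filter_not_le_eq_sum_filter_lt (f : Fin n → Fin n → ℝ) :
    ∑ p : Fin n × Fin n with ¬p.1 ≤ p.2, f p.1 p.2 =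
      ∑ p : Fin n × Fin n with p.1 < p.2, f p.2 p.1 :=
  Finset.sum_bij' (fun p _ ↦ p.swap) (fun p _ ↦ p.swap) (by simp) (by simp) (by simp) (by simp)
    (by simp)

lemma sum_sum_eq_sum_upper (f : Fin n → Fin n → ℝ) :
    ∑ i, ∑ j, f i j = ∑ p : {p : Fin n × Fin n // p.1 ≤ p.2},
      if p.1.1 = p.1.2 then f p.1.1 p.1.2 else f p.1.1 p.1.2 + f p.1.2 p.1.1 := by
  have h_lower : ∑ p : Fin n × Fin n with p.1 < p.2, f p.2 p.1 =
      ∑ p : Fin n × Fin n with p.1 ≤ p.2, if p.1 = p.2 then 0 else f p.2 p.1 := by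
    rw [Finset.sum_filter, Finset.sum_filter]
    refine Finset.sum_congr rfl fun p _ ↦ ?_
    by_cases h : p.1 = p.2 <;> simp [h, lt_iff_le_and_ne]
  rw [← Fintype.sum_prod_type' (f := f),
    ← Finset.sum_filter_add_sum_filter_not Finset.univ (fun p : Fin n × Fin n ↦ p.1 ≤ p.2),
    sum_filter_not_le_eq_sum_filter_lt, h_lower, ← Finset.sum_add_distrib,
    Finset.sum_subtype (p := fun p : Fin n × Fin n ↦ p.1 ≤ p.2) (F := inferInstance) _ (by simp)]
  refine Finset.sum_congr rfl fun p _ ↦ ?_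
  split_ifs <;> simp

/-- The coefficient of the entry `p` on or above the diagonal in `A ↦ tr (Tᵀ A)`, `A` symmetric. -/
def upperCoeff (T : Matrix (Fin n) (Fin n) ℝ) (p : {p : Fin n × Fin n // p.1 ≤ p.2}) : ℝ :=
  if p.1.1 = p.1.2 then T p.1.1 p.1.2 else T p.1.1 p.1.2 + T p.1.2 p.1.1

lemma trace_transpose_mul_eq_sum_upperCoeff (T : Matrix (Fin n) (Fin n) ℝ)
    {A : Matrix (Fin n) (Fin n) ℝ} (hA : A.IsSymm) :
    (Tᵀ * A).trace = ∑ p, upperCoeff T p * A p.1.1 p.1.2 := by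
  rw [trace_transpose_mul, sum_sum_eq_sum_upper]
  refine Finset.sum_congr rfl fun p _ ↦ ?_
  rw [upperCoeff, ite_mul, hA.apply p.1.1 p.1.2, add_mul]

lemma trace_add_transpose_sq_eq_sum_upperCoeff (T : Matrix (Fin n) (Fin n) ℝ) :
    ((T + Tᵀ) * (T + Tᵀ)).trace = ∑ p, (if p.1.1 = p.1.2 then 4 else 2) * upperCoeff T p ^ 2 := by
  rw [trace_add_transpose_sq, sum_sum_eq_sum_upper]
  refine Finset.sum_congr rfl fun p _ ↦ ?_
  by_cases h : p.1.1 = p.1.2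
  · simp only [upperCoeff, h, if_true]
    ring
  · simp only [upperCoeff, h, if_false]
    ring

end Symmetric

namespace IsGOE

variable {Ω : Type*} [MeasurableSpace Ω] {μ : Measure Ω} {n : ℕ} {A : Ω → Fin n → Fin n → ℝ}

lemma measurable_of (hA : IsGOE μ n A) : Measurable fun ω ↦ Matrix.of (A ω) :=
  measurable_pi_iff.2 fun i ↦ measurable_pi_iff.2 fun j ↦ hA.1 i j

lemma isSymm (hA : IsGOE μ n A) (ω : Ω) : (Matrix.of (A ω)).IsSymm :=
  Matrix.ext fun i j ↦ hA.2.1 ω j i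

lemma map_upper (hA : IsGOE μ n A) (p : {p : Fin n × Fin n // p.1 ≤ p.2}) :
    μ.map (fun ω ↦ A ω p.1.1 p.1.2) = gaussianReal 0 ((if p.1.1 = p.1.2 then 2 else 1) / n) := by
  obtain ⟨⟨i, j⟩, hij⟩ := p
  replace hij : i ≤ j := hij
  rcases hij.eq_or_lt with rfl | hlt
  · simpa using hA.2.2.2.1 i
  · simpa [hlt.ne] using hA.2.2.2.2 i j hlt

lemma integral_cexp_upper (hA : IsGOE μ n A) (p : {p : Fin n × Fin n // p.1 ≤ p.2}) (c : ℝ) :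
    ∫ ω, Complex.exp ((c * A ω p.1.1 p.1.2 : ℝ) * Complex.I) ∂μ =
      Complex.exp (-((1 / n : ℝ≥0) / 4 * ((if p.1.1 = p.1.2 then 4 else 2) * c ^ 2) : ℝ)) := by
  rw [← integral_map (f := fun x : ℝ ↦ Complex.exp ((c * x : ℝ) * Complex.I))
    (hA.1 _ _).aemeasurable (by fun_prop), hA.map_upper, integral_cexp_gaussianReal]
  congr 3
  split_ifs <;> push_cast <;> ring

lemma map_of_eq_goe [IsProbabilityMeasure μ] (hA : IsGOE μ n A) :
    μ.map (fun ω ↦ Matrix.of (A ω)) = goe (1 / n) n := by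
  have := Measure.isProbabilityMeasure_map (μ := μ) hA.measurable_of.aemeasurable
  refine HasGOECharFun.unique (fun T ↦ ?_) (hasGOECharFun_goe (1 / n) n)
  rw [integral_map hA.measurable_of.aemeasurable (Continuous.aestronglyMeasurable (by fun_prop))]
  have h_prod (ω : Ω) : Complex.exp (((Tᵀ * Matrix.of (A ω)).trace : ℝ) * Complex.I) =
      ∏ p, Complex.exp ((upperCoeff T p * A ω p.1.1 p.1.2 : ℝ) * Complex.I) := by
    rw [← Complex.exp_sum, ← Finset.sum_mul, ← Complex.ofReal_sum,
      trace_transpose_mul_eq_sum_upperCoeff T (hA.isSymm ω)]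
    rfl
  simp_rw [h_prod]
  rw [hA.2.2.1.integral_fun_prod_comp
    (f := fun p (x : ℝ) ↦ Complex.exp ((upperCoeff T p * x : ℝ) * Complex.I))
    (fun p ↦ (hA.1 _ _).aemeasurable) (fun p ↦ by fun_prop)]
  simp_rw [hA.integral_cexp_upper]
  rw [← Complex.exp_sum, Finset.sum_neg_distrib, ← Complex.ofReal_sum, ← Finset.mul_sum,
    trace_add_transpose_sq_eq_sum_upperCoeff]

end IsGOE

end GOELaw

section GaussianTails

lemma integral_exp_mul_sq_sub_gaussianReal (v : ℝ≥0) {l : ℝ} (hl : 2 * (l * v) < 1) :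
    ∫ x, Real.exp (l * (x ^ 2 - v)) ∂gaussianReal 0 v =
      Real.exp (-(l * v)) / √(1 - 2 * (l * v)) := by
  rcases eq_or_ne v 0 with rfl | hv
  · simp
  have h_density (x : ℝ) : gaussianPDFReal 0 v x • Real.exp (l * (x ^ 2 - v)) =
      (√(2 * Real.pi * v))⁻¹ * Real.exp (-(l * v)) *
        Real.exp (-((1 - 2 * (l * v)) / (2 * v)) * x ^ 2) := by
    rw [gaussianPDFReal, smul_eq_mul, mul_assoc, mul_assoc (√_)⁻¹, ← Real.exp_add, ← Real.exp_add]
    congr 2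
    field_simp
    ring
  have h_var : Real.pi / ((1 - 2 * (l * v)) / (2 * v)) =
      2 * Real.pi * v / (1 - 2 * (l * v)) := by
    rw [div_div_eq_mul_div]
    ring
  rw [integral_gaussianReal_eq_integral_smul hv]
  simp_rw [h_density]
  rw [integral_const_mul, integral_gaussian, h_var, Real.sqrt_div (by positivity)]
  have : √(2 * Real.pi * v) ≠ 0 := by positivity
  field_simp

lemma one_le_one_sub_mul_exp {y : ℝ} (hy : y ≤ 1 / 4) : 1 ≤ (1 - y) * Real.exp (y + y ^ 2) := by
  rcases le_total y 0 with h | h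
  · nlinarith [Real.add_one_le_exp (y + y ^ 2), mul_nonneg (neg_nonneg.2 h) (sq_nonneg y)]
  · have h_exp : 1 + y + 3 / 2 * y ^ 2 ≤ Real.exp (y + y ^ 2) := by
      nlinarith [Real.quadratic_le_exp_of_nonneg (x := y + y ^ 2) (by positivity),
        mul_nonneg h (sq_nonneg y), mul_nonneg (sq_nonneg y) (sq_nonneg y)]
    nlinarith [sq_nonneg y]

lemma exp_neg_div_sqrt_le {y : ℝ} (hy : y ≤ 1 / 8) :
    Real.exp (-y) / √(1 - 2 * y) ≤ Real.exp (2 * y ^ 2) := by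
  have h_pos : 0 < 1 - 2 * y := by linarith
  have h_sqrt : 1 ≤ √(1 - 2 * y) * Real.exp (y + 2 * y ^ 2) := by
    rw [← Real.sqrt_sq (Real.exp_pos (y + 2 * y ^ 2)).le, ← Real.sqrt_mul h_pos.le,
      ← Real.exp_nat_mul, Real.one_le_sqrt]
    convert one_le_one_sub_mul_exp (y := 2 * y) (by linarith) using 3
    push_cast
    ring
  rw [div_le_iff₀ (Real.sqrt_pos.2 h_pos), Real.exp_neg, inv_le_iff_one_le_mul₀ (Real.exp_pos y)]
  calc 1 ≤ √(1 - 2 * y) * Real.exp (y + 2 * y ^ 2) := h_sqrt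
    _ = Real.exp (2 * y ^ 2) * √(1 - 2 * y) * Real.exp y := by rw [Real.exp_add]; ring

variable {ι : Type*} [Fintype ι]

lemma integral_exp_mul_dotProduct_self_sub (v : ℝ≥0) {l : ℝ} (hl : 2 * (l * v) < 1) :
    ∫ b, Real.exp (l * (b ⬝ᵥ b - Fintype.card ι * v))
        ∂Measure.pi (fun _ : ι ↦ gaussianReal 0 v) =
      (Real.exp (-(l * v)) / √(1 - 2 * (l * v))) ^ Fintype.card ι := by
  have h_prod (b : ι → ℝ) : Real.exp (l * (b ⬝ᵥ b - Fintype.card ι * v)) =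
      ∏ i, Real.exp (l * (b i ^ 2 - v)) := by
    rw [← Real.exp_sum, ← Finset.mul_sum, Finset.sum_sub_distrib, dotProduct]
    simp [sq]
  simp_rw [h_prod]
  rw [integral_fintype_prod_eq_prod (f := fun _ (x : ℝ) ↦ Real.exp (l * (x ^ 2 - v)))]
  simp only [integral_exp_mul_sq_sub_gaussianReal v hl, Finset.prod_const, Finset.card_univ]

variable {v : ℝ≥0} {c : ℝ}

-- Stated for a threshold of either sign, so that `c = δ` and `c = -δ` give the two tails.
lemma measureReal_sq_le_mul_gaussianReal (hv : v ≠ 0) (c : ℝ) :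
    (gaussianReal 0 (2 * v)).real {g | c ^ 2 ≤ c * g} ≤ Real.exp (-(c ^ 2 / (16 * v))) := by
  have h_int : Integrable (fun g ↦ Real.exp (1 / (8 * v) * (c * g))) (gaussianReal 0 (2 * v)) := by
    simpa only [mul_assoc] using
      integrable_exp_mul_gaussianReal (μ := 0) (v := 2 * v) (1 / (8 * v) * c)
  have h_mgf : mgf (fun g ↦ c * g) (gaussianReal 0 (2 * v)) (1 / (8 * v)) =
      Real.exp (c ^ 2 / (64 * v)) := by
    have h := mgf_gaussianReal (p := gaussianReal 0 (2 * v)) (X := id) Measure.map_id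
      (c * (1 / (8 * v)))
    rw [mgf_const_mul]
    refine h.trans (congrArg Real.exp ?_)
    push_cast
    field_simp
    ring
  refine (measure_ge_le_exp_mul_mgf (c ^ 2) (by positivity) h_int).trans ?_
  rw [h_mgf, ← Real.exp_add, Real.exp_le_exp]
  have h_nonneg : 0 ≤ c ^ 2 / v := by positivity
  calc -(1 / (8 * v)) * c ^ 2 + c ^ 2 / (64 * v) = -(7 / 64) * (c ^ 2 / v) := by ring
    _ ≤ -(1 / 16) * (c ^ 2 / v) := by nlinarith
    _ = -(c ^ 2 / (16 * v)) := by ring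

lemma measureReal_sq_le_mul_dotProduct_self_sub (hv : v ≠ 0) (hι : Fintype.card ι * v ≤ 1)
    (hc : c ≤ 1) :
    (Measure.pi fun _ : ι ↦ gaussianReal 0 v).real
        {b | c ^ 2 ≤ c * (b ⬝ᵥ b - Fintype.card ι * v)} ≤ Real.exp (-(c ^ 2 / (16 * v))) := by
  have hlv : c / (8 * v) * v = c / 8 := by field_simp
  have h_exp := integral_exp_mul_dotProduct_self_sub (ι := ι) v (l := c / (8 * v)) (by linarith)
  rw [hlv] at h_exp
  have h_base : 0 < Real.exp (-(c / 8)) / √(1 - 2 * (c / 8)) :=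
    div_pos (Real.exp_pos _) (Real.sqrt_pos.2 (by linarith))
  have h_rescale (b : ι → ℝ) : 1 / (8 * (v : ℝ)) * (c * (b ⬝ᵥ b - Fintype.card ι * v)) =
      c / (8 * v) * (b ⬝ᵥ b - Fintype.card ι * v) := by ring
  have h_int : Integrable (fun b : ι → ℝ ↦
      Real.exp (1 / (8 * v) * (c * (b ⬝ᵥ b - Fintype.card ι * v))))
      (Measure.pi fun _ ↦ gaussianReal 0 v) := by
    simp_rw [h_rescale]
    exact .of_integral_ne_zero (h_exp ▸ (pow_pos h_base _).ne')
  refine (measure_ge_le_exp_mul_mgf (c ^ 2) (by positivity) h_int).trans ?_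
  simp_rw [mgf, h_rescale]
  rw [h_exp]
  have h_nonneg : 0 ≤ c ^ 2 / v := by positivity
  calc Real.exp (-(1 / (8 * v)) * c ^ 2) *
        (Real.exp (-(c / 8)) / √(1 - 2 * (c / 8))) ^ Fintype.card ι
      ≤ Real.exp (-(1 / (8 * v)) * c ^ 2) * Real.exp (2 * (c / 8) ^ 2) ^ Fintype.card ι := by
        gcongr
        exact exp_neg_div_sqrt_le (by linarith)
    _ = Real.exp (-(1 / 8) * (c ^ 2 / v) + Fintype.card ι * v * (1 / 32 * (c ^ 2 / v))) := by
        rw [← Real.exp_nat_mul, ← Real.exp_add]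
        congr 1
        field_simp
        ring
    _ ≤ Real.exp (-(c ^ 2 / (16 * v))) := by
        rw [Real.exp_le_exp, show c ^ 2 / (16 * v) = 1 / 16 * (c ^ 2 / v) by ring]
        nlinarith

end GaussianTails

section TypicalBorder

variable {v : ℝ≥0} {δ : ℝ} {n : ℕ}

/-- A border `(g, b)` is typical when its corner `g` is within `δ` of `0` and the squared length
of `b` is within `δ` of its mean `n v`. -/
def TypicalBorder (v : ℝ≥0) (δ g : ℝ) (b : Fin n → ℝ) : Prop :=
  |g| < δ ∧ |b ⬝ᵥ b - n * v| < δ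

/-- The bound on the probability that a border is not typical. -/
def borderFailure (δ : ℝ) (v : ℝ≥0) : ℝ≥0∞ :=
  ENNReal.ofReal (4 * Real.exp (-(δ ^ 2 / (16 * v))))

lemma isOpen_setOf_typicalBorder (v : ℝ≥0) (δ : ℝ) :
    IsOpen {p : ℝ × (Fin n → ℝ) | TypicalBorder v δ p.1 p.2} :=
  .and (isOpen_lt (by fun_prop) (by fun_prop)) (isOpen_lt (by fun_prop) (by fun_prop))

lemma measureReal_not_abs_lt_le {Ω : Type*} [MeasurableSpace Ω] {μ : Measure Ω}
    [IsFiniteMeasure μ] {X : Ω → ℝ} {q : ℝ} (hδ : 0 ≤ δ) (h_pos : μ.real {ω | δ ^ 2 ≤ δ * X ω} ≤ q)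
    (h_neg : μ.real {ω | (-δ) ^ 2 ≤ -δ * X ω} ≤ q) : μ.real {ω | ¬|X ω| < δ} ≤ 2 * q := by
  have h_union : {ω | ¬|X ω| < δ} ⊆ {ω | δ ^ 2 ≤ δ * X ω} ∪ {ω | (-δ) ^ 2 ≤ -δ * X ω} := by
    intro ω hω
    rcases le_abs.1 (not_lt.1 hω) with h | h
    · exact .inl (by nlinarith : δ ^ 2 ≤ δ * X ω)
    · exact .inr (by nlinarith : (-δ) ^ 2 ≤ -δ * X ω)
  linarith [measureReal_mono h_union (μ := μ), measureReal_union_le (μ := μ)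
    {ω | δ ^ 2 ≤ δ * X ω} {ω | (-δ) ^ 2 ≤ -δ * X ω}]

lemma borderLaw_not_typicalBorder_le (hv : v ≠ 0) (hn : n * v ≤ 1) (hδ : 0 ≤ δ) (hδ1 : δ ≤ 1) :
    borderLaw v n {p | ¬TypicalBorder v δ p.1 p.2} ≤ borderFailure δ v := by
  have h_corner : (gaussianReal 0 (2 * v)).real {g | ¬|g| < δ} ≤
      2 * Real.exp (-(δ ^ 2 / (16 * v))) :=
    measureReal_not_abs_lt_le hδ (measureReal_sq_le_mul_gaussianReal hv δ)
      (neg_sq δ ▸ measureReal_sq_le_mul_gaussianReal hv (-δ))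
  have h_column : (Measure.pi fun _ : Fin n ↦ gaussianReal 0 v).real
      {b | ¬|b ⬝ᵥ b - n * v| < δ} ≤ 2 * Real.exp (-(δ ^ 2 / (16 * v))) := by
    have h_tail {c : ℝ} (hc : c ≤ 1) :=
      measureReal_sq_le_mul_dotProduct_self_sub (ι := Fin n) hv (by simpa using hn) hc
    simp only [Fintype.card_fin] at h_tail
    exact measureReal_not_abs_lt_le hδ (h_tail hδ1) (neg_sq δ ▸ h_tail (c := -δ) (by linarith))
  have h_union : {p : ℝ × (Fin n → ℝ) | ¬TypicalBorder v δ p.1 p.2} =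
      Prod.fst ⁻¹' {g | ¬|g| < δ} ∪ Prod.snd ⁻¹' {b : Fin n → ℝ | ¬|b ⬝ᵥ b - n * v| < δ} := by
    ext p
    exact not_and_or
  rw [← ofReal_measureReal, borderFailure, h_union]
  refine ENNReal.ofReal_le_ofReal ((measureReal_union_le _ _).trans ?_)
  rw [borderLaw, ← Set.prod_univ, ← Set.univ_prod, measureReal_prod_prod, measureReal_prod_prod,
    probReal_univ, probReal_univ]
  linarith

lemma tendsto_mul_borderFailure (hδ : 0 < δ) :
    Tendsto (fun N : ℕ ↦ N * borderFailure δ (1 / N)) atTop (nhds 0) := by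
  have h := (tendsto_rpow_mul_exp_neg_mul_atTop_nhds_zero 1 (δ ^ 2 / 16) (by positivity)).comp
    tendsto_natCast_atTop_atTop
  have h4 := ENNReal.tendsto_ofReal (h.const_mul 4)
  rw [mul_zero, ENNReal.ofReal_zero] at h4
  refine h4.congr fun N ↦ ?_
  rw [borderFailure, ← ENNReal.ofReal_natCast, ← ENNReal.ofReal_mul (Nat.cast_nonneg N)]
  simp only [Function.comp_apply, Real.rpow_one, NNReal.coe_div, NNReal.coe_one, NNReal.coe_natCast]
  congr 1
  rw [mul_left_comm]
  congr 3
  rw [mul_one_div, div_div_eq_mul_div]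
  ring

lemma prod_le_measure_not_add {α β : Type*} [MeasurableSpace α] [MeasurableSpace β]
    (ρ : Measure α) [IsProbabilityMeasure ρ] (σ : Measure β) [IsProbabilityMeasure σ]
    {S : Set (α × β)} (hS : MeasurableSet S) {P : α → Prop} (hP : MeasurableSet {x | P x})
    {q : ℝ≥0∞} (h : ∀ x, P x → σ {y | (x, y) ∈ S} ≤ q) :
    (ρ.prod σ) S ≤ ρ {x | ¬P x} + q := by
  have h_section (x : α) : σ (Prod.mk x ⁻¹' S) ≤ {x | ¬P x}.indicator 1 x + q := by
    by_cases hx : P x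
    · exact (h x hx).trans le_add_self
    · rw [Set.indicator_of_mem (show x ∈ {x | ¬P x} from hx)]
      exact prob_le_one.trans le_self_add
  calc (ρ.prod σ) S = ∫⁻ x, σ (Prod.mk x ⁻¹' S) ∂ρ := Measure.prod_apply hS
    _ ≤ ∫⁻ x, ({x | ¬P x}.indicator 1 x + q) ∂ρ := lintegral_mono h_section
    _ = ρ {x | ¬P x} + q := by
      have hP' : MeasurableSet {x | ¬P x} := hP.compl
      rw [lintegral_add_right _ measurable_const, lintegral_indicator_one hP', lintegral_const,
        measure_univ, mul_one]

-- Rotating `u` to the first basis vector turns the spike into a shift of the corner.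
lemma goe_succ_add_smul_vecMulVec_le (hv : v ≠ 0) (hn : n * v ≤ 1) (hδ : 0 ≤ δ) (hδ1 : δ ≤ 1)
    {S : Set (Matrix (Fin (n + 1)) (Fin (n + 1)) ℝ)} (hS : MeasurableSet S)
    (hS_conj : ∀ O ∈ Matrix.orthogonalGroup (Fin (n + 1)) ℝ, ∀ B, O * B * Oᵀ ∈ S ↔ B ∈ S)
    {u : Fin (n + 1) → ℝ} (hu : u ⬝ᵥ u = 1) {s : ℝ} {q : ℝ≥0∞}
    (h : ∀ g (b : Fin n → ℝ), TypicalBorder v δ g b →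
      goe v n {G | bordered (g + s) b G ∈ S} ≤ q) :
    goe v (n + 1) {G | G + s • Matrix.vecMulVec u u ∈ S} ≤ borderFailure δ v + q := by
  obtain ⟨O, hO, hOu⟩ := exists_orthogonal_mulVec_eq_single hu 0
  set E : Matrix (Fin (n + 1)) (Fin (n + 1)) ℝ := Matrix.vecMulVec (Pi.single 0 1) (Pi.single 0 1)
  have h_add : Measurable fun H : Matrix (Fin (n + 1)) (Fin (n + 1)) ℝ ↦ H + s • E :=
    Continuous.measurable (by fun_prop)
  have hSE : MeasurableSet {H | H + s • E ∈ S} := h_add hS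
  have h_rotate : {G | G + s • Matrix.vecMulVec u u ∈ S} =
      (fun G ↦ O * G * Oᵀ) ⁻¹' {H | H + s • E ∈ S} := by
    ext G
    have h_conj : O * (G + s • Matrix.vecMulVec u u) * Oᵀ = O * G * Oᵀ + s • E := by
      rw [Matrix.mul_add, Matrix.add_mul, Matrix.mul_smul, Matrix.smul_mul, conj_vecMulVec, hOu]
    exact (hS_conj O hO _).symm.trans (by rw [h_conj]; rfl)
  calc goe v (n + 1) {G | G + s • Matrix.vecMulVec u u ∈ S}
      = goe v (n + 1) {H | H + s • E ∈ S} := by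
        rw [h_rotate, ← Measure.map_apply (by fun_prop) hSE, goe_map_conj v hO]
    _ = ((borderLaw v n).prod (goe v n)) {p | bordered (p.1.1 + s) p.1.2 p.2 ∈ S} := by
        rw [goe, Measure.map_apply (measurable_bordered n) hSE]
        simp only [Set.preimage_ofPred_eq, E, bordered_add_smul_vecMulVec_single]
    _ ≤ borderLaw v n {p | ¬TypicalBorder v δ p.1 p.2} + q :=
        prod_le_measure_not_add _ _
          ((measurable_bordered n).comp (by fun_prop : Measurable fun p : (ℝ × (Fin n → ℝ)) ×
            Matrix (Fin n) (Fin n) ℝ ↦ ((p.1.1 + s, p.1.2), p.2)) hS)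
          (isOpen_setOf_typicalBorder v δ).measurableSet fun p hp ↦ h p.1 p.2 hp
    _ ≤ borderFailure δ v + q := by gcongr; exact borderLaw_not_typicalBorder_le hv hn hδ hδ1

end TypicalBorder

section LargestEigenvalue

variable {v : ℝ≥0} {δ : ℝ} {n : ℕ}

lemma measurableSet_setOf_eigenvaluesAbove (n m : ℕ) (t : ℝ) :
    MeasurableSet {B : Matrix (Fin n) (Fin n) ℝ | EigenvaluesAbove m t B} :=
  (isOpen_setOf_eigenvaluesAbove m t).measurableSet

-- The spike map `s ↦ 1 / (a - s)` with `a = 2 + ε` preserves `s ≤ 1`.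
lemma goe_eigenvaluesAbove_one_le {ε : ℝ} (hv : v ≠ 0) (hδ : 0 ≤ δ) (hδ1 : δ ≤ 1) (hδε : 2 * δ ≤ ε)
    (hn : n * v ≤ 1) {c : ℝ} {w : Fin n → ℝ} (hw : c * (w ⬝ᵥ w) ≤ 1) :
    goe v n {G | EigenvaluesAbove 1 (2 + ε) (G + c • Matrix.vecMulVec w w)} ≤
      n * borderFailure δ v := by
  induction n generalizing c with
  | zero =>
    have h_empty : {G : Matrix (Fin 0) (Fin 0) ℝ |
        EigenvaluesAbove 1 (2 + ε) (G + c • Matrix.vecMulVec w w)} = ∅ := by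
      ext G
      simp [EigenvaluesAbove.one_iff]
    rw [h_empty, measure_empty]
    exact zero_le
  | succ n ih =>
    have hn' : n * v ≤ 1 := le_trans (by gcongr; simp) hn
    obtain ⟨u, hu, hwu⟩ := exists_unit_vecMulVec_self_eq_smul w
    rw [hwu, smul_smul, Nat.cast_succ, add_mul, one_mul, add_comm (_ * _)]
    refine goe_succ_add_smul_vecMulVec_le hv hn' hδ hδ1 (S := {B | EigenvaluesAbove 1 (2 + ε) B})
      (measurableSet_setOf_eigenvaluesAbove _ _ _) (fun O hO B ↦ EigenvaluesAbove.conj_iff hO) hu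
      fun g b hgb ↦ ?_
    have hg := (abs_lt.1 hgb.1).2
    have hb := (abs_lt.1 hgb.2).2
    have hnv : (n * v : ℝ) ≤ 1 := mod_cast hn'
    have hd_pos : 0 < 2 + ε - (g + c * (w ⬝ᵥ w)) := by linarith
    refine (measure_mono fun G hG ↦ EigenvaluesAbove.of_bordered hd_pos hG).trans (ih hn' ?_)
    rw [inv_mul_le_one₀ hd_pos]
    linarith [hnv]

theorem tendsto_goe_eigenvaluesAbove_one {ε : ℝ} (hε : 0 < ε) :
    Tendsto (fun N : ℕ ↦ goe (1 / N) N {G | EigenvaluesAbove 1 (2 + ε) G}) atTop (nhds 0) := by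
  have hδ : 0 < min (ε / 2) 1 := by positivity
  refine tendsto_of_tendsto_of_tendsto_of_le_of_le' tendsto_const_nhds
    (tendsto_mul_borderFailure hδ) (.of_forall fun _ ↦ zero_le) ?_
  filter_upwards [eventually_ne_atTop 0] with N hN
  have h := goe_eigenvaluesAbove_one_le (n := N) (v := 1 / N) (ε := ε) (c := 0) (w := 0)
    (by positivity) hδ.le (min_le_right _ _) (by linarith [min_le_left (ε / 2) 1])
    (by rw [mul_one_div_cancel (by positivity)]) (by simp)
  simpa using h

end LargestEigenvalue

section ManyEigenvalues

/-- A sequence of spike sizes `s 0, …, s k` along which the map `s ↦ 1 / (a - s)` can be followed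
with errors of size `δ`: it starts at a nonpositive value and stays below `a` until its last step
jumps over `a`, from where the map leads back to a value not below the start. -/
structure SpikeOrbit (a δ : ℝ) (k : ℕ) (s : ℕ → ℝ) : Prop where
  zero_nonpos : s 0 ≤ 0
  lt_sub : ∀ j < k, s j < a - δ
  succ_mul_le : ∀ j < k, s (j + 1) * (a + δ - s j) ≤ 1 - 2 * δ
  add_lt_last : a + δ < s k
  le_neg_zero_mul : 1 + δ ≤ -s 0 * (s k - a - δ)

namespace SpikeOrbit

variable {a δ g β : ℝ} {j k : ℕ} {s : ℕ → ℝ}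

lemma sub_pos (h : SpikeOrbit a δ k s) (hj : j < k) (hg : |g| < δ) : 0 < a - (g + s j) := by
  linarith [h.lt_sub j hj, (abs_lt.1 hg).2]

lemma sub_neg (h : SpikeOrbit a δ k s) (hg : |g| < δ) : a - (g + s k) < 0 := by
  linarith [h.add_lt_last, (abs_lt.1 hg).1]

lemma succ_le (h : SpikeOrbit a δ k s) (hj : j < k) (hg : |g| < δ) (hβ : 0 ≤ β)
    (hβ' : 1 - 2 * δ ≤ β) : s (j + 1) ≤ (a - (g + s j))⁻¹ * β := by
  have hd := h.sub_pos hj hg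
  rw [le_inv_mul_iff₀ hd]
  rcases le_total (s (j + 1)) 0 with h_neg | h_pos
  · exact (mul_nonpos_of_nonneg_of_nonpos hd.le h_neg).trans hβ
  · calc (a - (g + s j)) * s (j + 1) ≤ (a + δ - s j) * s (j + 1) := by
          have : a - (g + s j) ≤ a + δ - s j := by linarith [(abs_lt.1 hg).1]
          gcongr
      _ ≤ β := by linarith [h.succ_mul_le j hj]

lemma zero_le (h : SpikeOrbit a δ k s) (hg : |g| < δ) (hβ : β ≤ 1 + δ) :
    s 0 ≤ (a - (g + s k))⁻¹ * β := by
  have hd := h.sub_neg hg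
  rw [inv_mul_eq_div, le_div_iff_of_neg hd]
  nlinarith [h.le_neg_zero_mul, mul_nonneg (neg_nonneg.2 h.zero_nonpos)
    (by linarith [(abs_lt.1 hg).1] : 0 ≤ -(a - (g + s k)) - (s k - a - δ))]

variable {v : ℝ≥0} {n m : ℕ}

lemma goe_not_eigenvaluesAbove_bordered_le (h : SpikeOrbit a δ k s) (hδ1 : 2 * δ ≤ 1)
    (hn : n * v ≤ 1) (hj : j ≤ k) (hm : 1 - δ + v * (m * (k + 1)) ≤ v * ((n + 1 : ℕ) + j))
    {b : Fin n → ℝ} (hgb : TypicalBorder v δ g b) {q : ℝ≥0∞}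
    (ih : ∀ {i l : ℕ} {c : ℝ} {w : Fin n → ℝ}, i ≤ k →
      1 - δ + v * (l * (k + 1)) ≤ v * (n + i) → s i ≤ c * (w ⬝ᵥ w) →
      goe v n {G | ¬EigenvaluesAbove l a (G + c • Matrix.vecMulVec w w)} ≤ q) :
    goe v n {G | ¬EigenvaluesAbove m a (bordered (g + s j) b G)} ≤ q := by
  rcases m with _ | m
  · simp [EigenvaluesAbove.zero]
  push_cast at hm
  have hb := abs_lt.1 hgb.2
  have hnv : (n * v : ℝ) ≤ 1 := mod_cast hn
  rcases hj.lt_or_eq with hjk | rfl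
  · have hnv' : 1 - δ ≤ n * v := by
      have hjk' : (j : ℝ) ≤ k := mod_cast hj
      have hv_mul : (v : ℝ) * j ≤ v * k := by gcongr
      have : 0 ≤ (v : ℝ) * (m * (k + 1)) := by positivity
      linarith
    refine (measure_mono ?_).trans <|
      ih (i := j + 1) (l := m + 1) (c := (a - (g + s j))⁻¹) (w := b) hjk (by push_cast; linarith)
        (h.succ_le hjk hgb.1 (by linarith) (by linarith))
    exact fun G hG hG' ↦ hG (hG'.bordered (h.sub_pos hjk hgb.1).ne')
  · refine (measure_mono ?_).trans <|
      ih (i := 0) (l := m) (c := (a - (g + s j))⁻¹) (w := b) (Nat.zero_le _)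
        (by push_cast; linarith) (h.zero_le hgb.1 (by linarith [hnv]))
    exact fun G hG hG' ↦ hG (hG'.bordered_succ (h.sub_neg hgb.1))

lemma goe_not_eigenvaluesAbove_le (h : SpikeOrbit a δ k s) (hv : v ≠ 0) (hδ : 0 ≤ δ)
    (hδ1 : 2 * δ ≤ 1) (hn : n * v ≤ 1) (hj : j ≤ k)
    (hm : 1 - δ + v * (m * (k + 1)) ≤ v * (n + j)) {c : ℝ} {w : Fin n → ℝ}
    (hw : s j ≤ c * (w ⬝ᵥ w)) :
    goe v n {G | ¬EigenvaluesAbove m a (G + c • Matrix.vecMulVec w w)} ≤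
      n * borderFailure δ v := by
  induction n generalizing j m c with
  | zero =>
    obtain rfl : m = 0 := by
      by_contra hm0
      have hm1 : (1 : ℝ) ≤ m := mod_cast Nat.one_le_iff_ne_zero.2 hm0
      have hjk : (j : ℝ) ≤ k := mod_cast hj
      have hk : (k + 1 : ℝ) ≤ m * (k + 1) := le_mul_of_one_le_left (by positivity) hm1
      have hvk : (v : ℝ) * (j + 1) ≤ v * (m * (k + 1)) := by gcongr; linarith
      have hv' : (0 : ℝ) < v := by positivity
      push_cast at hm
      linarith
    simp [EigenvaluesAbove.zero]
  | succ n ih =>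
    have hn' : n * v ≤ 1 := le_trans (by gcongr; simp) hn
    obtain ⟨u, hu, hwu⟩ := exists_unit_vecMulVec_self_eq_smul w
    rw [hwu, smul_smul, Nat.cast_succ, add_mul, one_mul, add_comm (_ * _)]
    have h_mono : {G | ¬EigenvaluesAbove m a (G + (c * (w ⬝ᵥ w)) • Matrix.vecMulVec u u)} ⊆
        {G | ¬EigenvaluesAbove m a (G + s j • Matrix.vecMulVec u u)} :=
      fun G hG hG' ↦ hG (hG'.add_smul_vecMulVec_mono hw u)
    refine (measure_mono h_mono).trans <| goe_succ_add_smul_vecMulVec_le hv hn' hδ (by linarith)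
      (S := {B | ¬EigenvaluesAbove m a B}) (measurableSet_setOf_eigenvaluesAbove _ _ _).compl
      (fun O hO B ↦ (EigenvaluesAbove.conj_iff hO).not) hu fun g b hgb ↦ ?_
    exact h.goe_not_eigenvaluesAbove_bordered_le hδ1 hn' hj hm hgb fun hi hl ↦ ih hn' hi hl

lemma exists_tendsto_goe_not_eigenvaluesAbove (h : SpikeOrbit a δ k s) (hδ : 0 < δ)
    (hδ1 : 2 * δ ≤ 1) :
    ∃ c : ℝ, 0 < c ∧ Tendsto (fun N : ℕ ↦
      goe (1 / N) N {G | ¬∃ m : ℕ, c * N ≤ m ∧ EigenvaluesAbove m a G}) atTop (nhds 0) := by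
  refine ⟨δ / (2 * (k + 1)), by positivity, ?_⟩
  refine tendsto_of_tendsto_of_tendsto_of_le_of_le' tendsto_const_nhds
    (tendsto_mul_borderFailure hδ) (.of_forall fun _ ↦ _root_.zero_le) ?_
  have h_large : ∀ᶠ N : ℕ in atTop, 2 ≤ δ / (k + 1) * N :=
    (tendsto_natCast_atTop_atTop.const_mul_atTop (by positivity)).eventually_ge_atTop _
  filter_upwards [h_large, eventually_ne_atTop 0] with N hN hN0
  set m := ⌊δ / (k + 1) * N⌋₊
  have hm_le : m ≤ δ / (k + 1) * N := Nat.floor_le (by positivity)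
  have hm_ge : δ / (2 * (k + 1)) * N ≤ m := by
    have h_half : δ / (2 * (k + 1)) * N = δ / (k + 1) * N / 2 := by field_simp
    linarith [Nat.lt_floor_add_one (δ / (k + 1) * N)]
  have h_bound := h.goe_not_eigenvaluesAbove_le (n := N) (v := 1 / N) (m := m) (j := 0) (c := 0)
    (w := 0) (by positivity) hδ.le hδ1 (by rw [mul_one_div_cancel (by positivity)]) (by simp)
    (by
      push_cast
      rw [add_zero, one_div_mul_cancel (by positivity), one_div_mul_eq_div]
      have : (m * (k + 1) : ℝ) / N ≤ δ := by
        rw [div_le_iff₀ (by positivity), ← le_div_iff₀ (by positivity), ← div_mul_eq_mul_div]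
        exact hm_le
      linarith)
    (by simpa using h.zero_nonpos)
  refine (measure_mono ?_).trans h_bound
  exact fun G hG hG' ↦ hG ⟨m, hm_ge, by simpa using hG'⟩

end SpikeOrbit

-- By AM-GM the map `s ↦ 1 / (a - s)` exceeds the identity by a definite amount when `a < 2`.
lemma add_mul_sub_le {ε x : ℝ} (hε : 0 < ε) (hε1 : ε ≤ 1) (hx : -2 ≤ x) :
    (x + ε / 8) * (2 - ε + ε / 100 - x) ≤ 1 - 2 * (ε / 100) := by
  nlinarith [sq_nonneg ((2 - ε + ε / 100) / 2 - x)]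

lemma exists_spikeOrbit {ε : ℝ} (hε : 0 < ε) (hε1 : ε ≤ 1) :
    ∃ k s, SpikeOrbit (2 - ε) (ε / 100) k s := by
  set K := ⌊(4 - ε - 1 / 8) / (ε / 8)⌋₊
  have hK_le : K * (ε / 8) ≤ 4 - ε - 1 / 8 :=
    (le_div_iff₀ (by positivity)).1 (Nat.floor_le (div_nonneg (by linarith) (by positivity)))
  have hK_lt : 4 - ε - 1 / 8 < (K + 1) * (ε / 8) :=
    (div_lt_iff₀ (by positivity)).1 (Nat.lt_floor_add_one _)
  let s (j : ℕ) : ℝ := if j ≤ K then -2 + j * (ε / 8) else 3 - ε + ε / 100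
  have hs_le {j : ℕ} (hj : j ≤ K) : s j = -2 + j * (ε / 8) := if_pos hj
  have hs_last : s (K + 1) = 3 - ε + ε / 100 := if_neg (by simp)
  have hs_zero : s 0 = -2 := by simp [s]
  refine ⟨K + 1, s, ?_, fun j hj ↦ ?_, fun j hj ↦ ?_, ?_, ?_⟩
  · rw [hs_zero]
    norm_num
  · have hjK : (j : ℝ) * (ε / 8) ≤ K * (ε / 8) := by gcongr; lia
    rw [hs_le (by lia)]
    linarith
  · rcases (Nat.lt_succ_iff.1 hj).lt_or_eq with hjK | rfl
    · rw [hs_le hjK, hs_le hjK.le, Nat.cast_succ, add_one_mul, ← add_assoc]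
      have h_step : 0 ≤ j * (ε / 8) := by positivity
      exact add_mul_sub_le hε hε1 (by linarith)
    · rw [hs_last, hs_le le_rfl]
      nlinarith
  · rw [hs_last]
    linarith
  · rw [hs_zero, hs_last]
    linarith

theorem exists_tendsto_goe_not_eigenvaluesAbove {ε : ℝ} (hε : 0 < ε) (hε1 : ε ≤ 1) :
    ∃ c : ℝ, 0 < c ∧ Tendsto (fun N : ℕ ↦
      goe (1 / N) N {G | ¬∃ m : ℕ, c * N ≤ m ∧ EigenvaluesAbove m (2 - ε) G}) atTop (nhds 0) :=
  let ⟨_, _, h⟩ := exists_spikeOrbit hε hε1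
  h.exists_tendsto_goe_not_eigenvaluesAbove (by positivity) (by linarith)

end ManyEigenvalues

section TraceInequalities

variable {ι κ : Type*} [Fintype κ] {A B P Q : Matrix ι ι ℝ}

lemma transpose_eq_of_nonneg {P : Matrix ι ι ℝ} (hP : 0 ≤ P) : Pᵀ = P :=
  (Matrix.nonneg_iff_posSemidef.1 hP).isHermitian.eq

lemma transpose_mul_self_nonneg [Finite ι] (V : Matrix κ ι ℝ) : 0 ≤ Vᵀ * V :=
  Matrix.nonneg_iff_posSemidef.2 (Matrix.posSemidef_conjTranspose_mul_self V)

variable [Fintype ι]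

lemma trace_nonneg_of_nonneg (hP : 0 ≤ P) : 0 ≤ P.trace :=
  (Matrix.nonneg_iff_posSemidef.1 hP).trace_nonneg

lemma exists_transpose_mul_self_eq (hP : 0 ≤ P) : ∃ V : Matrix ι ι ℝ, Vᵀ * V = P := by
  classical
  obtain ⟨V, rfl⟩ := CStarAlgebra.nonneg_iff_eq_star_mul_self.1 hP
  exact ⟨V, rfl⟩

lemma trace_mul_nonneg (hP : 0 ≤ P) (hQ : 0 ≤ Q) : 0 ≤ (P * Q).trace := by
  obtain ⟨V, rfl⟩ := exists_transpose_mul_self_eq hQ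
  rw [← Matrix.mul_assoc, Matrix.trace_mul_comm, ← Matrix.mul_assoc]
  exact ((Matrix.nonneg_iff_posSemidef.1 hP).mul_mul_conjTranspose_same V).trace_nonneg

lemma trace_mul_le_trace_mul (hAB : A ≤ B) (hP : 0 ≤ P) : (A * P).trace ≤ (B * P).trace := by
  rw [← sub_nonneg, ← Matrix.trace_sub, ← Matrix.sub_mul]
  exact trace_mul_nonneg (sub_nonneg.2 hAB) hP

lemma dotProduct_mulVec_le (hAB : A ≤ B) (x : ι → ℝ) : x ⬝ᵥ A *ᵥ x ≤ x ⬝ᵥ B *ᵥ x := by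
  have h := (Matrix.le_iff.1 hAB).dotProduct_mulVec_nonneg x
  rwa [star_trivial, Matrix.sub_mulVec, dotProduct_sub, sub_nonneg] at h

lemma trace_smul_one_mul [DecidableEq ι] (c : ℝ) (P : Matrix ι ι ℝ) :
    (c • (1 : Matrix ι ι ℝ) * P).trace = c * P.trace := by
  rw [Matrix.smul_mul, Matrix.one_mul, Matrix.trace_smul, smul_eq_mul]

/-- The squared Frobenius norm of a matrix, as the trace of its Gram matrix; none of the global
instances puts this norm on matrices. -/
def frobSq (M : Matrix κ ι ℝ) : ℝ := (Mᵀ * M).trace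

lemma frobSq_eq_sum (M : Matrix κ ι ℝ) : frobSq M = ∑ i, ∑ j, M i j ^ 2 := by
  simp only [frobSq, trace_transpose_mul, sq]

lemma frobSq_nonneg (M : Matrix κ ι ℝ) : 0 ≤ frobSq M :=
  trace_nonneg_of_nonneg (transpose_mul_self_nonneg M)

lemma sq_apply_le_frobSq (M : Matrix κ ι ℝ) (i : κ) (j : ι) : M i j ^ 2 ≤ frobSq M := by
  rw [frobSq_eq_sum, ← Fintype.sum_prod_type']
  exact Finset.single_le_sum (f := fun p : κ × ι ↦ M p.1 p.2 ^ 2) (fun _ _ ↦ sq_nonneg _)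
    (Finset.mem_univ (i, j))

lemma continuous_frobSq : Continuous (frobSq : Matrix κ ι ℝ → ℝ) := by
  unfold frobSq
  fun_prop

lemma frobSq_conj [DecidableEq ι] {O : Matrix ι ι ℝ} (hO : O ∈ Matrix.orthogonalGroup ι ℝ)
    (M : Matrix ι ι ℝ) : frobSq (O * M * Oᵀ) = frobSq M := by
  have h : (O * M * Oᵀ)ᵀ = O * Mᵀ * Oᵀ := by
    rw [Matrix.transpose_mul, Matrix.transpose_mul, Matrix.transpose_transpose, Matrix.mul_assoc]
  rw [frobSq, h, conj_mul_conj hO, trace_conj hO, frobSq]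

lemma sq_trace_le_card_mul_frobSq (M : Matrix ι ι ℝ) :
    M.trace ^ 2 ≤ Fintype.card ι * frobSq M := by
  calc M.trace ^ 2 ≤ Fintype.card ι * ∑ i, M i i ^ 2 := sq_sum_le_card_mul_sum_sq
    _ ≤ Fintype.card ι * frobSq M := by
      rw [frobSq_eq_sum]
      gcongr with i
      exact Finset.single_le_sum (fun j _ ↦ sq_nonneg (M i j)) (Finset.mem_univ i)

/-- The squared deviation of the diagonal of a matrix from its mean. -/
def diagDev (M : Matrix ι ι ℝ) : ℝ := ∑ i, (M i i - M.trace / Fintype.card ι) ^ 2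

lemma diagDev_nonneg (M : Matrix ι ι ℝ) : 0 ≤ diagDev M :=
  Finset.sum_nonneg fun _ _ ↦ sq_nonneg _

lemma diagDev_smul (c : ℝ) (M : Matrix ι ι ℝ) : diagDev (c • M) = c ^ 2 * diagDev M := by
  simp only [diagDev, Matrix.smul_apply, Matrix.trace_smul, smul_eq_mul, Finset.mul_sum]
  exact Finset.sum_congr rfl fun i _ ↦ by ring

lemma continuous_diagDev : Continuous (diagDev : Matrix ι ι ℝ → ℝ) := by
  unfold diagDev
  fun_prop

lemma two_mul_card_mul_diagDev (M : Matrix ι ι ℝ) :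
    2 * Fintype.card ι * diagDev M = ∑ i, ∑ j, (M i i - M j j) ^ 2 := by
  rcases isEmpty_or_nonempty ι with h | h
  · simp
  have hcard : (Fintype.card ι : ℝ) ≠ 0 := by positivity
  simp only [diagDev, sub_sq, Matrix.trace, Matrix.diag_apply, Finset.sum_add_distrib,
    Finset.sum_sub_distrib, ← Finset.mul_sum, ← Finset.sum_mul, Finset.sum_const,
    Finset.card_univ, nsmul_eq_mul]
  field_simp
  ring

end TraceInequalities

section PositivePart

variable {ι : Type*} [DecidableEq ι]

lemma isSelfAdjoint_sub_smul_one {A : Matrix ι ι ℝ} (hA : A.IsSymm) (a : ℝ) :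
    IsSelfAdjoint (A - a • (1 : Matrix ι ι ℝ)) := by
  rw [isSelfAdjoint_iff, Matrix.star_eq_conjTranspose, Matrix.conjTranspose_eq_transpose_of_trivial,
    Matrix.transpose_sub, Matrix.transpose_smul, Matrix.transpose_one, hA.eq]

lemma isSelfAdjoint_symmetrize_sub (a : ℝ) (G : Matrix ι ι ℝ) :
    IsSelfAdjoint ((2 : ℝ)⁻¹ • (G + Gᵀ) - a • (1 : Matrix ι ι ℝ)) :=
  isSelfAdjoint_sub_smul_one ((Matrix.isSymm_add_transpose_self G).smul _) a

variable [Fintype ι] {B B' : Matrix ι ι ℝ}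

lemma trace_mul_posPart (hB : IsSelfAdjoint B) : (B * B⁺).trace = frobSq B⁺ := by
  have h : B⁻ * B⁺ = 0 := CFC.negPart_mul_posPart B
  rw [frobSq, transpose_eq_of_nonneg (CFC.posPart_nonneg B)]
  nth_rw 1 [← CFC.posPart_sub_negPart B]
  rw [Matrix.sub_mul, h, sub_zero]

lemma self_le_posPart_of_isSelfAdjoint (hB : IsSelfAdjoint B) : B ≤ B⁺ := by
  have h := CFC.posPart_sub_negPart B
  rw [← sub_nonneg, show B⁺ - B = B⁻ by rw [sub_eq_iff_eq_add, ← sub_eq_iff_eq_add', h]]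
  exact CFC.negPart_nonneg B

lemma frobSq_posPart_le (hB : IsSelfAdjoint B) {r : ℝ} (hBr : B ≤ r • 1) :
    frobSq B⁺ ≤ r ^ 2 * Fintype.card ι := by
  have hle : frobSq B⁺ ≤ r * B⁺.trace := by
    rw [← trace_mul_posPart hB, ← trace_smul_one_mul]
    exact trace_mul_le_trace_mul hBr (CFC.posPart_nonneg B)
  have hsq : frobSq B⁺ * frobSq B⁺ ≤ r ^ 2 * Fintype.card ι * frobSq B⁺ := by
    calc frobSq B⁺ * frobSq B⁺ ≤ (r * B⁺.trace) * (r * B⁺.trace) :=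
          mul_self_le_mul_self (frobSq_nonneg _) hle
      _ = r ^ 2 * B⁺.trace ^ 2 := by ring
      _ ≤ r ^ 2 * (Fintype.card ι * frobSq B⁺) := by
          gcongr
          exact sq_trace_le_card_mul_frobSq _
      _ = _ := by ring
  rcases (frobSq_nonneg B⁺).eq_or_lt with h0 | hpos
  · rw [← h0]
    positivity
  · exact le_of_mul_le_mul_right hsq hpos

-- Expand `B - B' = X - Y` with `X`, `Y` the differences of positive and negative parts; then
-- `tr (X * Y) = -tr (B⁺ * B'⁻) - tr (B'⁺ * B⁻) ≤ 0`.
lemma frobSq_posPart_sub_posPart_le (hB : IsSelfAdjoint B) (hB' : IsSelfAdjoint B') :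
    frobSq (B⁺ - B'⁺) ≤ frobSq (B - B') := by
  set X := B⁺ - B'⁺ with hX
  set Y := B⁻ - B'⁻ with hY
  have hXt : Xᵀ = X := by
    rw [hX, Matrix.transpose_sub, transpose_eq_of_nonneg (CFC.posPart_nonneg B),
      transpose_eq_of_nonneg (CFC.posPart_nonneg B')]
  have hYt : Yᵀ = Y := by
    rw [hY, Matrix.transpose_sub, transpose_eq_of_nonneg (CFC.negPart_nonneg B),
      transpose_eq_of_nonneg (CFC.negPart_nonneg B')]
  have hXY : (X * Y).trace ≤ 0 := by
    have h₁ := trace_mul_nonneg (CFC.posPart_nonneg B) (CFC.negPart_nonneg B')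
    have h₂ := trace_mul_nonneg (CFC.posPart_nonneg B') (CFC.negPart_nonneg B)
    rw [hX, hY, Matrix.sub_mul, Matrix.mul_sub, Matrix.mul_sub, CFC.posPart_mul_negPart,
      CFC.posPart_mul_negPart]
    simp only [Matrix.trace_sub, Matrix.trace_zero]
    linarith
  have hBX : B - B' = X - Y := by
    rw [hX, hY, sub_sub_sub_comm, CFC.posPart_sub_negPart B, CFC.posPart_sub_negPart B']
  calc frobSq X ≤ frobSq X - 2 * (X * Y).trace + frobSq Y := by linarith [frobSq_nonneg Y]
    _ = frobSq (B - B') := by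
      rw [hBX]
      simp only [frobSq, Matrix.transpose_sub, hXt, hYt, Matrix.sub_mul, Matrix.mul_sub,
        Matrix.trace_sub, Matrix.trace_mul_comm Y X]
      ring

lemma posPart_conj (hB : IsSelfAdjoint B) {O : Matrix ι ι ℝ}
    (hO : O ∈ Matrix.orthogonalGroup ι ℝ) : (O * B * Oᵀ)⁺ = O * B⁺ * Oᵀ := by
  refine (CFC.posPart_negPart_unique (c := O * B⁻ * Oᵀ) ?_ ?_ ?_ ?_).1
  · rw [← Matrix.sub_mul, ← Matrix.mul_sub, CFC.posPart_sub_negPart B]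
  · rw [conj_mul_conj hO, CFC.posPart_mul_negPart, Matrix.mul_zero, Matrix.zero_mul]
  · exact star_right_conjugate_nonneg (CFC.posPart_nonneg B) O
  · exact star_right_conjugate_nonneg (CFC.negPart_nonneg B) O

lemma continuous_posPart_comp {X : Type*} [TopologicalSpace X] {f : X → Matrix ι ι ℝ}
    (hf : Continuous f) (hsa : ∀ x, IsSelfAdjoint (f x)) : Continuous fun x ↦ (f x)⁺ := by
  refine continuous_iff_continuousAt.2 fun x ↦
    tendsto_pi_nhds.2 fun i ↦ tendsto_pi_nhds.2 fun j ↦ ?_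
  have hlim : Tendsto (fun y ↦ √(frobSq (f y - f x))) (nhds x) (nhds 0) := by
    have h : Continuous fun y ↦ √(frobSq (f y - f x)) :=
      (continuous_frobSq.comp (hf.sub continuous_const)).sqrt
    simpa [frobSq] using h.tendsto x
  rw [tendsto_iff_norm_sub_tendsto_zero]
  refine squeeze_zero (fun _ ↦ norm_nonneg _) (fun y ↦ Real.le_sqrt_of_sq_le ?_) hlim
  rw [Real.norm_eq_abs, sq_abs]
  exact (sq_apply_le_frobSq ((f y)⁺ - (f x)⁺) i j).trans
    (frobSq_posPart_sub_posPart_le (hsa y) (hsa x))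

/-- The part of a matrix above the level `a`: the positive part of `G - a` for symmetric `G`.
Symmetrising first keeps the functional calculus away from its junk values, and so makes the map
continuous on all of matrix space. -/
def excess (a : ℝ) (G : Matrix ι ι ℝ) : Matrix ι ι ℝ := ((2 : ℝ)⁻¹ • (G + Gᵀ) - a • 1)⁺

lemma excess_eq_posPart {G : Matrix ι ι ℝ} (hG : G.IsSymm) (a : ℝ) :
    excess a G = (G - a • (1 : Matrix ι ι ℝ))⁺ := by
  rw [excess, hG.eq, ← two_smul ℝ G, inv_smul_smul₀ two_ne_zero]

lemma mul_trace_excess_le {A : Matrix ι ι ℝ} (hA : A.IsSymm) (a : ℝ) :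
    a * (excess a A).trace ≤ (A * excess a A).trace := by
  have h := trace_mul_posPart (isSelfAdjoint_sub_smul_one hA a)
  rw [← excess_eq_posPart hA, Matrix.sub_mul, Matrix.trace_sub, trace_smul_one_mul] at h
  linarith [frobSq_nonneg (excess a A)]

lemma continuous_excess (a : ℝ) : Continuous (excess a : Matrix ι ι ℝ → Matrix ι ι ℝ) :=
  continuous_posPart_comp (by fun_prop) (isSelfAdjoint_symmetrize_sub a)

lemma excess_conj (a : ℝ) {O : Matrix ι ι ℝ} (hO : O ∈ Matrix.orthogonalGroup ι ℝ)
    (G : Matrix ι ι ℝ) : excess a (O * G * Oᵀ) = O * excess a G * Oᵀ := by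
  rw [excess, excess, ← posPart_conj (isSelfAdjoint_symmetrize_sub a G) hO]
  congr 1
  rw [Matrix.mul_sub, Matrix.sub_mul, Matrix.mul_smul O a, Matrix.smul_mul, Matrix.mul_one,
    (Matrix.mem_orthogonalGroup_iff ι ℝ).1 hO]
  simp only [Matrix.transpose_mul, Matrix.transpose_transpose, Matrix.mul_smul, Matrix.smul_mul,
    Matrix.mul_add, Matrix.add_mul, Matrix.mul_assoc]

end PositivePart

section ConjInvariant

variable {ι : Type*} [Fintype ι] [DecidableEq ι] {ρ : Measure (Matrix ι ι ℝ)}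

/-- A law of random matrices that is invariant under conjugation by orthogonal matrices. -/
def ConjInvariant (ρ : Measure (Matrix ι ι ℝ)) : Prop :=
  ∀ O ∈ Matrix.orthogonalGroup ι ℝ, ρ.map (fun M ↦ O * M * Oᵀ) = ρ

-- The two rows are `(e_i + e_j) / √2` and `(e_i - e_j) / √2`: a rotation by 45 degrees.
lemma exists_orthogonal_conj_apply_add {i j : ι} (hij : i ≠ j) :
    ∃ O ∈ Matrix.orthogonalGroup ι ℝ, ∀ M : Matrix ι ι ℝ,
      (O * M * Oᵀ) i j + (O * M * Oᵀ) j i = M i i - M j j := by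
  let p : ι → ℝ := (√2)⁻¹ • (Pi.single i 1 + Pi.single j 1)
  let q : ι → ℝ := (√2)⁻¹ • (Pi.single i 1 - Pi.single j 1)
  have hsqrt : (√2 : ℝ)⁻¹ * (√2)⁻¹ = 1 / 2 := by
    rw [← mul_inv, Real.mul_self_sqrt zero_le_two, one_div]
  have hp (x : ι → ℝ) : p ⬝ᵥ x = (√2)⁻¹ * (x i + x j) := by simp [p, add_dotProduct, mul_add]
  have hq (x : ι → ℝ) : q ⬝ᵥ x = (√2)⁻¹ * (x i - x j) := by simp [q, sub_dotProduct, mul_sub]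
  obtain ⟨O, hO, hrow⟩ := exists_orthogonal_row_eq {i, j} (fun k ↦ if k = i then p else q) (by
    rintro k (rfl | rfl) l (rfl | rfl)
    · simp [p, hij, hij.symm]
      linarith
    · simp [hp, q, hij, hij.symm]
    · simp [hq, p, hij, hij.symm]
    · simp [hq, q, hij, hij.symm]
      linarith)
  have hi : O i = p := by simpa using hrow i (by simp)
  have hj : O j = q := by simpa [hij.symm] using hrow j (by simp)
  have happly (M : Matrix ι ι ℝ) (k l : ι) : (O * M * Oᵀ) k l = O k ⬝ᵥ M *ᵥ O l := by
    rw [Matrix.mul_apply', Matrix.dotProduct_mulVec]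
    rfl
  refine ⟨O, hO, fun M ↦ ?_⟩
  have hMp (k : ι) : (M *ᵥ p) k = (√2)⁻¹ * (M k i + M k j) := by
    rw [Matrix.mulVec, dotProduct_comm, hp]
  have hMq (k : ι) : (M *ᵥ q) k = (√2)⁻¹ * (M k i - M k j) := by
    rw [Matrix.mulVec, dotProduct_comm, hq]
  rw [happly, happly, hi, hj, hp, hq, hMp, hMp, hMq, hMq]
  linear_combination 2 * (M i i - M j j) * hsqrt

namespace ConjInvariant

lemma map (hρ : ConjInvariant ρ) {F : Matrix ι ι ℝ → Matrix ι ι ℝ} (hF : Measurable F)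
    (hFconj : ∀ O ∈ Matrix.orthogonalGroup ι ℝ, ∀ M, F (O * M * Oᵀ) = O * F M * Oᵀ) :
    ConjInvariant (ρ.map F) := by
  intro O hO
  have hconj : Measurable fun M : Matrix ι ι ℝ ↦ O * M * Oᵀ := Continuous.measurable (by fun_prop)
  nth_rw 2 [← hρ O hO]
  rw [Measure.map_map hconj hF, Measure.map_map hF hconj]
  exact congrArg ρ.map (funext fun M ↦ (hFconj O hO M).symm)

lemma restrict (hρ : ConjInvariant ρ) {s : Set (Matrix ι ι ℝ)} (hs : MeasurableSet s)
    (hsconj : ∀ O ∈ Matrix.orthogonalGroup ι ℝ, ∀ M, O * M * Oᵀ ∈ s ↔ M ∈ s) :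
    ConjInvariant (ρ.restrict s) := by
  intro O hO
  have hpre : (fun M : Matrix ι ι ℝ ↦ O * M * Oᵀ) ⁻¹' s = s := Set.ext (hsconj O hO)
  have h := Measure.restrict_map (μ := ρ) (f := fun M : Matrix ι ι ℝ ↦ O * M * Oᵀ)
    (Continuous.measurable (by fun_prop)) hs
  rw [hpre, hρ O hO] at h
  exact h.symm

lemma lintegral_sq_diag_sub_le (hρ : ConjInvariant ρ) (i j : ι) :
    ∫⁻ M, .ofReal ((M i i - M j j) ^ 2) ∂ρ ≤
      ∫⁻ M, .ofReal (2 * (M i j ^ 2 + M j i ^ 2)) ∂ρ := by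
  rcases eq_or_ne i j with rfl | hij
  · simp
  obtain ⟨O, hO, hOM⟩ := exists_orthogonal_conj_apply_add hij
  nth_rw 2 [← hρ O hO]
  rw [lintegral_map (by fun_prop) (Continuous.measurable (by fun_prop))]
  refine lintegral_mono fun M ↦ ENNReal.ofReal_le_ofReal ?_
  rw [← hOM M]
  exact add_sq_le

lemma lintegral_diagDev_le (hρ : ConjInvariant ρ) :
    ∫⁻ M, .ofReal (2 * Fintype.card ι * diagDev M) ∂ρ ≤ ∫⁻ M, .ofReal (4 * frobSq M) ∂ρ := by
  have hsum (f : ι → ι → Matrix ι ι ℝ → ℝ) (hf : ∀ i j, Continuous (f i j))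
      (hf0 : ∀ i j M, 0 ≤ f i j M) :
      ∫⁻ M, .ofReal (∑ i, ∑ j, f i j M) ∂ρ = ∑ i, ∑ j, ∫⁻ M, .ofReal (f i j M) ∂ρ := by
    have hmeas (i j) : Measurable fun M ↦ ENNReal.ofReal (f i j M) := by fun_prop
    simp_rw [ENNReal.ofReal_sum_of_nonneg fun i _ ↦ Finset.sum_nonneg fun j _ ↦ hf0 i j _,
      ENNReal.ofReal_sum_of_nonneg fun j _ ↦ hf0 _ j _]
    rw [lintegral_finsetSum _ fun i _ ↦ Finset.measurable_fun_sum _ fun j _ ↦ hmeas i j]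
    exact Finset.sum_congr rfl fun i _ ↦ lintegral_finsetSum _ fun j _ ↦ hmeas i j
  have hfrob (M : Matrix ι ι ℝ) : 4 * frobSq M = ∑ i, ∑ j, 2 * (M i j ^ 2 + M j i ^ 2) := by
    simp only [mul_add, Finset.sum_add_distrib, ← Finset.mul_sum]
    rw [Finset.sum_comm (f := fun i j ↦ M j i ^ 2), ← frobSq_eq_sum]
    ring
  simp_rw [two_mul_card_mul_diagDev, hfrob]
  rw [hsum _ (fun i j ↦ by fun_prop) fun i j M ↦ by positivity,
    hsum _ (fun i j ↦ by fun_prop) fun i j M ↦ by positivity]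
  exact Finset.sum_le_sum fun i _ ↦ Finset.sum_le_sum fun j _ ↦ hρ.lintegral_sq_diag_sub_le i j

lemma measure_diagDev_gt_le [IsProbabilityMeasure ρ] [Nonempty ι] (hρ : ConjInvariant ρ)
    (K : ℝ) {δ : ℝ} (hδ : 0 < δ) :
    ρ {M | frobSq M ≤ K ∧ δ < diagDev M} ≤ .ofReal (2 * K / (Fintype.card ι * δ)) := by
  set s : Set (Matrix ι ι ℝ) := {M | frobSq M ≤ K}
  have hs : MeasurableSet s := measurableSet_le continuous_frobSq.measurable measurable_const
  have hinv : ConjInvariant (ρ.restrict s) := hρ.restrict hs fun O hO M ↦ by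
    simp only [s, Set.mem_ofPred_eq, frobSq_conj hO]
  have hpos : 0 < 2 * Fintype.card ι * δ := by positivity
  calc ρ {M | frobSq M ≤ K ∧ δ < diagDev M}
      ≤ ρ.restrict s
          {M | ENNReal.ofReal (2 * Fintype.card ι * δ) ≤
            ENNReal.ofReal (2 * Fintype.card ι * diagDev M)} := by
        rw [Measure.restrict_apply' hs]
        refine measure_mono fun M hM ↦ ⟨ENNReal.ofReal_le_ofReal ?_, hM.1⟩
        gcongr
        exact hM.2.le
    _ ≤ (∫⁻ M in s, .ofReal (2 * Fintype.card ι * diagDev M) ∂ρ) /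
          .ofReal (2 * Fintype.card ι * δ) :=
        meas_ge_le_lintegral_div
          (continuous_const.mul continuous_diagDev).measurable.ennreal_ofReal.aemeasurable
          (ENNReal.ofReal_pos.2 hpos).ne' ENNReal.ofReal_ne_top
    _ ≤ (∫⁻ _ in s, .ofReal (4 * K) ∂ρ) / .ofReal (2 * Fintype.card ι * δ) := by
        refine ENNReal.div_le_div_right (hinv.lintegral_diagDev_le.trans
          (setLIntegral_mono measurable_const fun M hM ↦ ?_)) _
        exact ENNReal.ofReal_le_ofReal (by linarith [show frobSq M ≤ K from hM])
    _ ≤ .ofReal (4 * K) / .ofReal (2 * Fintype.card ι * δ) := by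
        gcongr
        rw [setLIntegral_const]
        exact mul_le_of_le_one_right' prob_le_one
    _ = .ofReal (2 * K / (Fintype.card ι * δ)) := by
        rw [← ENNReal.ofReal_div_of_pos hpos]
        congr 1
        field_simp
        ring

end ConjInvariant

lemma conjInvariant_goe (v : ℝ≥0) (n : ℕ) : ConjInvariant (goe v n) :=
  fun _ hO ↦ goe_map_conj v hO

lemma tendsto_goe_diagDev_excess (a K : ℝ) {δ : ℝ} (hδ : 0 < δ) :
    Tendsto (fun N : ℕ ↦ goe (1 / N) N
      {G | frobSq (excess a G) ≤ K * N ∧ δ * N < diagDev (excess a G)}) atTop (nhds 0) := by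
  have hlim : Tendsto (fun N : ℕ ↦ ENNReal.ofReal (2 * K / δ / N)) atTop (nhds 0) := by
    simpa using ENNReal.tendsto_ofReal (tendsto_const_div_atTop_nhds_zero_nat (2 * K / δ))
  refine tendsto_of_tendsto_of_tendsto_of_le_of_le' tendsto_const_nhds hlim
    (.of_forall fun _ ↦ zero_le) ?_
  filter_upwards [eventually_ge_atTop 1] with N hN
  have : NeZero N := ⟨by lia⟩
  have hmeas : Measurable (excess a : Matrix (Fin N) (Fin N) ℝ → _) :=
    (continuous_excess a).measurable
  have : IsProbabilityMeasure ((goe (1 / N) N).map (excess a)) :=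
    Measure.isProbabilityMeasure_map hmeas.aemeasurable
  have hinv := (conjInvariant_goe (1 / N) N).map hmeas fun O hO ↦ excess_conj a hO
  calc goe (1 / N) N {G | frobSq (excess a G) ≤ K * N ∧ δ * N < diagDev (excess a G)}
      ≤ (goe (1 / N) N).map (excess a) {M | frobSq M ≤ K * N ∧ δ * N < diagDev M} :=
        Measure.le_map_apply hmeas.aemeasurable _
    _ ≤ .ofReal (2 * (K * N) / (Fintype.card (Fin N) * (δ * N))) :=
        hinv.measure_diagDev_gt_le (K * N) (by positivity)
    _ = .ofReal (2 * K / δ / N) := by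
        rw [Fintype.card_fin]
        congr 1
        field_simp

end ConjInvariant

section EigenvaluesAboveOrder

variable {ι : Type*} [Fintype ι] {m : ℕ} {t : ℝ} {A B P : Matrix ι ι ℝ}

lemma le_smul_one_of_not_eigenvaluesAbove [DecidableEq ι] (hA : A.IsSymm)
    (h : ¬EigenvaluesAbove 1 t A) : A ≤ t • 1 := by
  rw [EigenvaluesAbove.one_iff] at h
  push Not at h
  rw [Matrix.le_iff]
  refine .of_dotProduct_mulVec_nonneg ?_ fun x ↦ ?_
  · rw [Matrix.IsHermitian, Matrix.conjTranspose_eq_transpose_of_trivial, Matrix.transpose_sub,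
      Matrix.transpose_smul, Matrix.transpose_one, hA.eq]
  · rw [star_trivial, Matrix.sub_mulVec, dotProduct_sub, Matrix.smul_mulVec, Matrix.one_mulVec,
      dotProduct_smul, smul_eq_mul]
    linarith [h x]

lemma frobSq_excess_le [DecidableEq ι] {a : ℝ} (hA : A.IsSymm) (h : ¬EigenvaluesAbove 1 t A) :
    frobSq (excess a A) ≤ (t - a) ^ 2 * Fintype.card ι := by
  rw [excess_eq_posPart hA]
  refine frobSq_posPart_le (isSelfAdjoint_sub_smul_one hA a) ?_
  rw [sub_smul]
  exact sub_le_sub_right (le_smul_one_of_not_eigenvaluesAbove hA h) _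

lemma sum_dotProduct_mulVec_le_trace {κ : Type*} [Fintype κ] [DecidableEq κ] (hP : 0 ≤ P)
    {Q : Matrix κ ι ℝ} (hQ : Q * Qᵀ = 1) : ∑ j, Q j ⬝ᵥ P *ᵥ Q j ≤ P.trace := by
  classical
  have hproj : (1 - Qᵀ * Q)ᵀ * (1 - Qᵀ * Q) = 1 - Qᵀ * Q := by
    have h : Qᵀ * Q * (Qᵀ * Q) = Qᵀ * Q := by
      rw [Matrix.mul_assoc, ← Matrix.mul_assoc Q, hQ, Matrix.one_mul]
    simp [Matrix.sub_mul, Matrix.mul_sub, h]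
  have hsum : ∑ j, Q j ⬝ᵥ P *ᵥ Q j = (P * (Qᵀ * Q)).trace := by
    rw [← Matrix.mul_assoc, Matrix.trace_mul_comm, ← Matrix.mul_assoc]
    refine Finset.sum_congr rfl fun j _ ↦ ?_
    rw [Matrix.diag_apply, Matrix.mul_apply', Matrix.dotProduct_mulVec]
    rfl
  have h := trace_mul_nonneg hP (hproj ▸ transpose_mul_self_nonneg (1 - Qᵀ * Q))
  rwa [Matrix.mul_sub, Matrix.mul_one, Matrix.trace_sub, sub_nonneg, ← hsum] at h

namespace EigenvaluesAbove

lemma sub_smul_one [DecidableEq ι] {a ε : ℝ} (h : EigenvaluesAbove m (a + ε) A) :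
    EigenvaluesAbove m ε (A - a • (1 : Matrix ι ι ℝ)) := by
  obtain ⟨L, hL⟩ := h
  refine ⟨L, fun y hy ↦ ?_⟩
  rw [Matrix.sub_mulVec, dotProduct_sub, Matrix.smul_mulVec, Matrix.one_mulVec, dotProduct_smul,
    smul_eq_mul]
  linarith [hL y hy]

lemma exists_orthonormal_rows (h : EigenvaluesAbove m t B) :
    ∃ Q : Matrix (Fin m) ι ℝ, Q * Qᵀ = 1 ∧ ∀ j, t < Q j ⬝ᵥ B *ᵥ Q j := by
  obtain ⟨L, hL⟩ := h
  have hinj : Function.Injective L := by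
    rw [← LinearMap.ker_eq_bot, LinearMap.ker_eq_bot']
    intro y hy
    by_contra hne
    simpa [hy] using hL y hne
  let toE : (ι → ℝ) ≃ₗ[ℝ] EuclideanSpace ℝ ι := (WithLp.linearEquiv 2 ℝ (ι → ℝ)).symm
  let S := LinearMap.range (toE.toLinearMap ∘ₗ L)
  have hdim : Module.finrank ℝ S = m := by
    have hinjE : Function.Injective (toE.toLinearMap ∘ₗ L) := fun x y hxy ↦
      hinj (toE.injective hxy)
    rw [LinearMap.finrank_range_of_inj hinjE, Module.finrank_fin_fun]
  let b := (stdOrthonormalBasis ℝ S).reindex (finCongr hdim)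
  have hb : Orthonormal ℝ fun j ↦ (b j : EuclideanSpace ℝ ι) :=
    b.orthonormal.comp_linearIsometry S.subtypeₗᵢ
  let Q : Matrix (Fin m) ι ℝ := Matrix.of fun j ↦ (b j : EuclideanSpace ℝ ι).ofLp
  have hQ : Q * Qᵀ = 1 := by
    ext j k
    rw [Matrix.one_apply, ← orthonormal_iff_ite.1 hb j k, Matrix.mul_apply]
    simp [Q, PiLp.inner_apply, mul_comm]
  refine ⟨Q, hQ, fun j ↦ ?_⟩
  obtain ⟨y, hy⟩ : ∃ y, L y = Q j := by
    obtain ⟨y, hy⟩ := (b j).2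
    exact ⟨y, congrArg WithLp.ofLp hy⟩
  have hunit : Q j ⬝ᵥ Q j = 1 := by
    simpa [Matrix.mul_apply'] using congrFun₂ hQ j j
  have hy0 : y ≠ 0 := by
    rintro rfl
    simp [← hy] at hunit
  simpa [hy, hunit] using hL y hy0

lemma mul_le_trace (h : EigenvaluesAbove m t P) (hP : 0 ≤ P) : t * m ≤ P.trace := by
  obtain ⟨Q, hQ, hlt⟩ := h.exists_orthonormal_rows
  calc t * m = ∑ _j : Fin m, t := by simp [mul_comm]
    _ ≤ ∑ j, Q j ⬝ᵥ P *ᵥ Q j := Finset.sum_le_sum fun j _ ↦ (hlt j).le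
    _ ≤ P.trace := sum_dotProduct_mulVec_le_trace hP hQ

lemma mul_le_trace_excess [DecidableEq ι] {a ε : ℝ} (hA : A.IsSymm)
    (h : EigenvaluesAbove m (a + ε) A) : ε * m ≤ (excess a A).trace := by
  have hsa : IsSelfAdjoint (A - a • (1 : Matrix ι ι ℝ)) := isSelfAdjoint_sub_smul_one hA a
  rw [excess_eq_posPart hA]
  refine (h.sub_smul_one.mono fun x ↦ ?_).mul_le_trace (CFC.posPart_nonneg _)
  exact dotProduct_mulVec_le (self_le_posPart_of_isSelfAdjoint hsa) x

end EigenvaluesAbove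

end EigenvaluesAboveOrder

section Elliptope

lemma exists_unit_dotProduct_sub_self_le {κ : Type*} [Fintype κ] [Nonempty κ] (v : κ → ℝ) :
    ∃ w : κ → ℝ, w ⬝ᵥ w = 1 ∧ (w - v) ⬝ᵥ (w - v) ≤ (v ⬝ᵥ v - 1) ^ 2 := by
  obtain ⟨w, hw, hwv⟩ := exists_unit_smul v
  refine ⟨w, hw, ?_⟩
  set s := √(v ⬝ᵥ v)
  have hs : 0 ≤ s := Real.sqrt_nonneg _
  have hvv : v ⬝ᵥ v = s ^ 2 := (Real.sq_sqrt (dotProduct_self_nonneg v)).symm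
  have hsub : (w - v) ⬝ᵥ (w - v) = (1 - s) ^ 2 := by
    rw [← hwv]
    simp only [sub_dotProduct, dotProduct_sub, smul_dotProduct, dotProduct_smul, hw, smul_eq_mul]
    ring
  calc (w - v) ⬝ᵥ (w - v) = (1 - s) ^ 2 * 1 := by rw [hsub, mul_one]
    _ ≤ (1 - s) ^ 2 * (1 + s) ^ 2 := by
      gcongr
      exact one_le_pow₀ (by linarith)
    _ = (v ⬝ᵥ v - 1) ^ 2 := by
      rw [hvv]
      ring

lemma exists_unit_columns {ι κ : Type*} [Fintype ι] [Fintype κ] [Nonempty κ] (V : Matrix κ ι ℝ) :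
    ∃ W : Matrix κ ι ℝ, (∀ i, (Wᵀ * W) i i = 1) ∧
      frobSq (W - V) ≤ ∑ i, ((Vᵀ * V) i i - 1) ^ 2 := by
  choose w hw hwV using fun i ↦ exists_unit_dotProduct_sub_self_le (Vᵀ i)
  refine ⟨(Matrix.of w)ᵀ, hw, ?_⟩
  exact Finset.sum_le_sum fun i _ ↦ hwV i

lemma transpose_mul_self_add_le {ι κ : Type*} [Finite ι] [Fintype κ] (V Z : Matrix κ ι ℝ) {η : ℝ}
    (hη : 0 < η) :
    (V + Z)ᵀ * (V + Z) ≤ (1 + η) • (Vᵀ * V) + (1 + η⁻¹) • (Zᵀ * Z) := by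
  have := Fintype.ofFinite ι
  classical
  have h : 0 ≤ η⁻¹ • ((η • V - Z)ᵀ * (η • V - Z)) :=
    smul_nonneg (inv_nonneg.2 hη.le) (transpose_mul_self_nonneg _)
  rw [← sub_nonneg]
  convert h using 1
  simp only [Matrix.transpose_add, Matrix.transpose_sub, Matrix.transpose_smul, Matrix.add_mul,
    Matrix.mul_add, Matrix.sub_mul, Matrix.mul_sub, Matrix.smul_mul, Matrix.mul_smul]
  match_scalars <;> field_simp <;> ring

variable {n : ℕ} {A C : Matrix (Fin n) (Fin n) ℝ}

lemma trace_eq_of_mem_elliptope (hC : C ∈ elliptope n) : C.trace = n := by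
  simp [Matrix.trace, hC.2]

lemma trace_mul_le_of_mem_elliptope_s8 {c : ℝ} (hA : A ≤ c • 1) (hC : C ∈ elliptope n) :
    (A * C).trace ≤ c * n := by
  rw [← trace_eq_of_mem_elliptope hC, ← trace_smul_one_mul]
  exact trace_mul_le_trace_mul hA (Matrix.nonneg_iff_posSemidef.2 hC.1)

lemma trace_mul_transpose_mul_self_le {ι κ : Type*} [Fintype ι] [Fintype κ] [DecidableEq ι]
    {B : Matrix ι ι ℝ} {r η : ℝ} (hB : 0 ≤ B) (hBr : B ≤ r • 1) (hη : 0 < η)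
    (V W : Matrix κ ι ℝ) :
    (B * (Wᵀ * W)).trace ≤
      (1 + η) * (B * (Vᵀ * V)).trace + (1 + η⁻¹) * (r * frobSq (W - V)) := by
  have hYoung := transpose_mul_self_add_le V (W - V) hη
  have hmono := trace_mul_le_trace_mul hYoung hB
  have herror : (B * ((W - V)ᵀ * (W - V))).trace ≤ r * frobSq (W - V) :=
    (trace_mul_le_trace_mul hBr (transpose_mul_self_nonneg _)).trans_eq (trace_smul_one_mul _ _)
  rw [add_sub_cancel, Matrix.trace_mul_comm _ B, Matrix.trace_mul_comm _ B, Matrix.mul_add,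
    Matrix.mul_smul, Matrix.mul_smul, Matrix.trace_add, Matrix.trace_smul, Matrix.trace_smul,
    smul_eq_mul, smul_eq_mul] at hmono
  exact hmono.trans (by gcongr)

-- The witness normalises the columns of a square root of `P`; the loss is controlled by applying
-- Young's inequality to the positive semidefinite matrix `r - A`.
lemma exists_mem_elliptope_le_trace_mul [NeZero n] {P : Matrix (Fin n) (Fin n) ℝ} {r η : ℝ}
    (hr : 0 ≤ r) (hAr : A ≤ r • 1) (hrA : -A ≤ r • 1) (hP : 0 ≤ P) (hPn : P.trace = n)
    (hη : 0 < η) :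
    ∃ C ∈ elliptope n,
      (1 + η) * (A * P).trace - η * r * n - (1 + η⁻¹) * (2 * r * diagDev P) ≤ (A * C).trace := by
  obtain ⟨V, rfl⟩ := exists_transpose_mul_self_eq hP
  obtain ⟨W, hW, hWV⟩ := exists_unit_columns V
  have hWn : Wᵀ * W ∈ elliptope n := ⟨Matrix.posSemidef_conjTranspose_mul_self W, hW⟩
  refine ⟨Wᵀ * W, hWn, ?_⟩
  have hdev : frobSq (W - V) ≤ diagDev (Vᵀ * V) := by
    rwa [diagDev, hPn, Fintype.card_fin, div_self (NeZero.ne (n : ℝ))]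
  have hBr : r • 1 - A ≤ (2 * r) • 1 := by
    rw [sub_eq_add_neg, two_mul, add_smul]
    gcongr
  have hYoung := trace_mul_transpose_mul_self_le (sub_nonneg.2 hAr) hBr hη V W
  rw [Matrix.sub_mul, Matrix.sub_mul, Matrix.trace_sub, Matrix.trace_sub, trace_smul_one_mul,
    trace_smul_one_mul, hPn, trace_eq_of_mem_elliptope hWn] at hYoung
  have hloss : (1 + η⁻¹) * (2 * r * frobSq (W - V)) ≤
      (1 + η⁻¹) * (2 * r * diagDev (Vᵀ * V)) := by
    gcongr
  linarith

end Elliptope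

section SdpValue

/-- The value `SDP_n(A) = (1 / (2 n)) max_{C ∈ ℰ_n} ⟨A, C⟩` of the semidefinite relaxation. -/
def sdpValue {n : ℕ} (A : Matrix (Fin n) (Fin n) ℝ) : ℝ :=
  (1 / (2 * (n : ℝ))) * sSup ((fun C => Matrix.trace (A * C)) '' elliptope n)

variable {n : ℕ} {A C : Matrix (Fin n) (Fin n) ℝ} {c : ℝ}

lemma le_sdpValue (hA : A ≤ c • 1) (hC : C ∈ elliptope n) :
    (A * C).trace / (2 * n) ≤ sdpValue A := by
  have hbdd : BddAbove ((fun C => Matrix.trace (A * C)) '' elliptope n) :=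
    ⟨c * n, Set.forall_mem_image.2 fun _ hC ↦ trace_mul_le_of_mem_elliptope_s8 hA hC⟩
  rw [sdpValue, one_div_mul_eq_div]
  gcongr
  exact le_csSup hbdd (Set.mem_image_of_mem _ hC)

variable [NeZero n]

lemma sdpValue_le (hA : A ≤ c • 1) : sdpValue A ≤ c / 2 := by
  have hone : (1 : Matrix (Fin n) (Fin n) ℝ) ∈ elliptope n := ⟨.one, fun _ ↦ Matrix.one_apply_eq _⟩
  have hsup : sSup ((fun C => Matrix.trace (A * C)) '' elliptope n) ≤ c * n :=
    csSup_le (Set.Nonempty.image _ ⟨1, hone⟩)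
      (Set.forall_mem_image.2 fun _ hC ↦ trace_mul_le_of_mem_elliptope_s8 hA hC)
  have hn : (n : ℝ) ≠ 0 := NeZero.ne _
  calc sdpValue A ≤ 1 / (2 * (n : ℝ)) * (c * n) := by
        rw [sdpValue]
        gcongr
    _ = c / 2 := by field_simp

lemma le_sdpValue_of_excess {a r η τ δ : ℝ} (hA : A.IsSymm) (hr : 0 ≤ r) (hAr : A ≤ r • 1)
    (hrA : -A ≤ r • 1) (hη : 0 < η) (hτ : 0 < τ) (htrace : τ * n ≤ (excess a A).trace)
    (hdev : diagDev (excess a A) ≤ δ * n) :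
    (1 + η) * (a / 2) - η * (r / 2) - (1 + η⁻¹) * (r * (δ / τ ^ 2)) ≤ sdpValue A := by
  have hn : (0 : ℝ) < n := Nat.cast_pos.2 (NeZero.pos n)
  set M := excess a A
  set s := M.trace / n
  have hτs : τ ≤ s := (le_div_iff₀ hn).2 htrace
  have hs : 0 < s := hτ.trans_le hτs
  have hM : M.trace = s * n := (div_mul_cancel₀ _ hn.ne').symm
  have hMpos : 0 ≤ s⁻¹ • M := smul_nonneg (inv_nonneg.2 hs.le) (CFC.posPart_nonneg _)
  have hMn : (s⁻¹ • M).trace = n := by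
    rw [Matrix.trace_smul, hM, smul_eq_mul, inv_mul_cancel_left₀ hs.ne']
  have hvalue : a * n ≤ (A * s⁻¹ • M).trace := by
    rw [Matrix.mul_smul, Matrix.trace_smul, smul_eq_mul, le_inv_mul_iff₀ hs]
    calc s * (a * n) = a * M.trace := by rw [hM, mul_left_comm]
      _ ≤ (A * M).trace := mul_trace_excess_le hA a
  have hdevM : diagDev (s⁻¹ • M) ≤ δ / τ ^ 2 * n := by
    have hδ : 0 ≤ δ * n := (diagDev_nonneg M).trans hdev
    calc diagDev (s⁻¹ • M) = diagDev M / s ^ 2 := by rw [diagDev_smul, inv_pow, inv_mul_eq_div]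
      _ ≤ δ * n / τ ^ 2 := by gcongr
      _ = δ / τ ^ 2 * n := by ring
  obtain ⟨C, hC, hAC⟩ := exists_mem_elliptope_le_trace_mul hr hAr hrA hMpos hMn hη
  refine le_trans ?_ (le_sdpValue hAr hC)
  rw [le_div_iff₀ (by positivity)]
  calc ((1 + η) * (a / 2) - η * (r / 2) - (1 + η⁻¹) * (r * (δ / τ ^ 2))) * (2 * n)
      = (1 + η) * (a * n) - η * r * n - (1 + η⁻¹) * (2 * r * (δ / τ ^ 2 * n)) := by ring
    _ ≤ (1 + η) * (A * s⁻¹ • M).trace - η * r * n - (1 + η⁻¹) * (2 * r * diagDev (s⁻¹ • M)) := by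
      gcongr
    _ ≤ (A * C).trace := hAC

lemma abs_sdpValue_sub_one_le {ε τ δ : ℝ} (hA : A.IsSymm) (hε : 0 < ε) (hε1 : ε ≤ 1)
    (habove : ¬EigenvaluesAbove 1 (2 + ε) A) (hbelow : ¬EigenvaluesAbove 1 (2 + ε) (-A))
    (hτ : 0 < τ) (htrace : τ * n ≤ (excess (2 - ε) A).trace)
    (hdev : diagDev (excess (2 - ε) A) ≤ δ * n)
    (hδ : (1 + (ε / 8)⁻¹) * (3 * (δ / τ ^ 2)) ≤ ε / 4) : |sdpValue A - 1| ≤ ε := by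
  have hA2 := le_smul_one_of_not_eigenvaluesAbove hA habove
  have hone : (2 + ε) • (1 : Matrix (Fin n) (Fin n) ℝ) ≤ (3 : ℝ) • 1 :=
    smul_le_smul_of_nonneg_right (by linarith) zero_le_one
  have hupper := sdpValue_le hA2
  have hlower := le_sdpValue_of_excess hA (by norm_num) (hA2.trans hone)
    ((le_smul_one_of_not_eigenvaluesAbove hA.neg hbelow).trans hone)
    (by positivity : 0 < ε / 8) hτ htrace hdev
  rw [abs_le]
  constructor <;> nlinarith

end SdpValue

section Convergence

lemma tendsto_goe_eigenvaluesAbove_one_neg {ε : ℝ} (hε : 0 < ε) :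
    Tendsto (fun N : ℕ ↦ goe (1 / N) N {G | EigenvaluesAbove 1 (2 + ε) (-G)}) atTop (nhds 0) := by
  refine (tendsto_goe_eigenvaluesAbove_one hε).congr fun N ↦ ?_
  conv_lhs => rw [← goe_map_neg]
  exact Measure.map_apply measurable_neg (measurableSet_setOf_eigenvaluesAbove N 1 _)

lemma tendsto_goe_sdpValue {ε : ℝ} (hε : 0 < ε) (hε1 : ε ≤ 1) :
    Tendsto (fun N : ℕ ↦ goe (1 / N) N {G | G.IsSymm ∧ ε < |sdpValue G - 1|}) atTop
      (nhds 0) := by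
  obtain ⟨c, hc, hmany⟩ :=
    exists_tendsto_goe_not_eigenvaluesAbove (half_pos hε) (by linarith : ε / 2 ≤ 1)
  set τ := ε / 2 * c with hτ_def
  have hτ : 0 < τ := by positivity
  set δ := ε / 4 * τ ^ 2 / (3 * (1 + (ε / 8)⁻¹)) with hδ_def
  have hδ : (1 + (ε / 8)⁻¹) * (3 * (δ / τ ^ 2)) = ε / 4 := by
    rw [hδ_def]
    field_simp
  have hdiag := tendsto_goe_diagDev_excess (2 - ε) ((2 * ε) ^ 2) (by positivity : 0 < δ)
  have hsum := ((tendsto_goe_eigenvaluesAbove_one hε).add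
    (tendsto_goe_eigenvaluesAbove_one_neg hε)).add (hmany.add hdiag)
  rw [add_zero, add_zero] at hsum
  refine tendsto_of_tendsto_of_tendsto_of_le_of_le' tendsto_const_nhds hsum
    (.of_forall fun _ ↦ zero_le) ((eventually_ge_atTop 1).mono fun N hN ↦ ?_)
  have : NeZero N := ⟨by lia⟩
  refine le_trans (measure_mono ?_) ((measure_union_le _ _).trans
    (add_le_add (measure_union_le _ _) (measure_union_le _ _)))
  rintro G ⟨hG, hdist⟩
  by_contra hgood
  simp only [Set.mem_union, Set.mem_ofPred_eq, not_or, not_and, not_not, not_lt] at hgood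
  obtain ⟨⟨habove, hbelow⟩, ⟨m, hm, hlarge⟩, hdev⟩ := hgood
  have htrace : τ * N ≤ (excess (2 - ε) G).trace :=
    calc τ * N = ε / 2 * (c * N) := by rw [hτ_def, mul_assoc]
      _ ≤ ε / 2 * m := by gcongr
      _ ≤ (excess (2 - ε) G).trace := by
        refine EigenvaluesAbove.mul_le_trace_excess hG ?_
        rwa [show 2 - ε + ε / 2 = 2 - ε / 2 by ring]
  have hfrob : frobSq (excess (2 - ε) G) ≤ (2 * ε) ^ 2 * N := by
    have h := frobSq_excess_le (a := 2 - ε) hG habove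
    rwa [Fintype.card_fin, show 2 + ε - (2 - ε) = 2 * ε by ring] at h
  exact hdist.not_ge
    (abs_sdpValue_sub_one_le hG hε hε1 habove hbelow hτ htrace (hdev hfrob) hδ.le)

end Convergence

/-- **The SDP value of the SK model** (Montanari–Sen): for `A_n ~ GOE(n)`,
`SDP_n(A_n) = (1/(2n)) max_{C ∈ ℰ_n} ⟨A_n, C⟩ → 1` in probability. -/
theorem sdp_value_goe {Ω : Type*} [MeasurableSpace Ω] (μ : Measure Ω)
    [IsProbabilityMeasure μ]
    (A : (n : ℕ) → Ω → Fin n → Fin n → ℝ)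
    (hGOE : ∀ n, 1 ≤ n → IsGOE μ n (A n)) :
    ∀ ε : ℝ, 0 < ε →
      Tendsto (fun n : ℕ => μ {ω | ε <
          |(1 / (2 * (n : ℝ))) *
              sSup ((fun C => Matrix.trace (Matrix.of (A n ω) * C)) '' elliptope n) - 1|})
        atTop (nhds 0) := by
  intro ε hε
  have hgoe := tendsto_goe_sdpValue (lt_min hε one_pos) (min_le_right ε 1)
  refine tendsto_of_tendsto_of_tendsto_of_le_of_le' tendsto_const_nhds hgoe
    (.of_forall fun _ ↦ zero_le) ((eventually_ge_atTop 1).mono fun n hn ↦ ?_)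
  have hA := hGOE n hn
  rw [← hA.map_of_eq_goe]
  calc μ {ω | ε < |sdpValue (Matrix.of (A n ω)) - 1|}
      ≤ μ ((fun ω ↦ Matrix.of (A n ω)) ⁻¹' {G | G.IsSymm ∧ min ε 1 < |sdpValue G - 1|}) :=
        measure_mono fun ω hω ↦ ⟨hA.isSymm ω, (min_le_left ε 1).trans_lt hω⟩
    _ ≤ μ.map (fun ω ↦ Matrix.of (A n ω)) {G | G.IsSymm ∧ min ε 1 < |sdpValue G - 1|} :=
        Measure.le_map_apply hA.measurable_of.aemeasurable _

end
end
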